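/- arXiv:1306.3637 — 2 statements merged into one kernel-verified Lean document; each statement's English description precedes it below -/
import Mathlib

section
/- Let L > 0. There exists a constant C > 0 such that for every z₀ ∈ H³(0,L) with z₀(0) = z₀(L) = z₀′(L) = 0, every T > 0, and every classical solution z of the linearized KdV system on [0,T] with z(0,·) = z₀, one has ‖z(t,·)‖_{H₀¹(0,L)} ≤ C ‖z₀‖_{H₀¹(0,L)} for all t ∈ [0,T]. -/
open Set Real MeasureTheory

/-- The `L²(0,L)` norm of a function on `(0,L)`. -/
noncomputable def L2norm (L : ℝ) (f : ℝ → ℝ) : ℝ :=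
  Real.sqrt (∫ x in (0:ℝ)..L, (f x) ^ 2)

/-- The `H¹(0,L)` (hence `H₀¹(0,L)`) norm of a function on `(0,L)`, the derivative
being taken within `[0,L]`. -/
noncomputable def H1norm (L : ℝ) (f : ℝ → ℝ) : ℝ :=
  Real.sqrt (∫ x in (0:ℝ)..L, ((f x) ^ 2 + (derivWithin f (Icc (0:ℝ) L) x) ^ 2))

/-- A classical solution of the linearized KdV system
`z_t + z_x + z_xxx = 0`, `z(t,0) = z(t,L) = z_x(t,L) = 0`, on `[0,T] × [0,L]`. -/
def IsLinearKdVSol (L T : ℝ) (z : ℝ → ℝ → ℝ) : Prop :=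
  (∀ t ∈ Icc (0:ℝ) T, ContDiffOn ℝ 3 (z t) (Icc (0:ℝ) L)) ∧
  (∀ x ∈ Icc (0:ℝ) L, ContDiffOn ℝ 1 (fun s => z s x) (Icc (0:ℝ) T)) ∧
  ContinuousOn (fun p : ℝ × ℝ => z p.1 p.2) (Icc (0:ℝ) T ×ˢ Icc (0:ℝ) L) ∧
  (∀ t ∈ Ioo (0:ℝ) T, ∀ x ∈ Ioo (0:ℝ) L,
    derivWithin (fun s => z s x) (Icc (0:ℝ) T) t
      + derivWithin (z t) (Icc (0:ℝ) L) x
      + iteratedDerivWithin 3 (z t) (Icc (0:ℝ) L) x = 0) ∧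
  (∀ t ∈ Icc (0:ℝ) T,
    z t 0 = 0 ∧ z t L = 0 ∧ derivWithin (z t) (Icc (0:ℝ) L) L = 0)

open Filter Topology

namespace KdV

/-- continuous bounded functions on the open interval are integrable -/
lemma ib {L C : ℝ} {F : ℝ → ℝ} (hc : ContinuousOn F (Ioo 0 L))
    (hb : ∀ x ∈ Ioo 0 L, |F x| ≤ C) : IntegrableOn F (Ioo 0 L) := by
  apply IntegrableOn.of_bound (C := C) measure_Ioo_lt_top
    (hc.aestronglyMeasurable measurableSet_Ioo)
  exact (ae_restrict_iff' measurableSet_Ioo).2 (Eventually.of_forall hb)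

lemma ic {L : ℝ} {F : ℝ → ℝ} (hc : ContinuousOn F (Icc 0 L)) : IntegrableOn F (Ioo 0 L) :=
  (hc.integrableOn_Icc).mono_set Ioo_subset_Icc_self

lemma ftc_le {L : ℝ} (hL : 0 < L) {P P' φ : ℝ → ℝ} {P0 P1 : ℝ}
    (hd : ∀ x ∈ Ioo 0 L, HasDerivAt P (P' x) x)
    (h0 : Tendsto P (𝓝[>] 0) (𝓝 P0)) (h1 : Tendsto P (𝓝[<] L) (𝓝 P1))
    (hφ : IntegrableOn φ (Ioo 0 L)) (hle : ∀ x ∈ Ioo 0 L, P' x ≤ φ x) :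
    P1 - P0 ≤ ∫ x in Ioo 0 L, φ x := by
  have hPc : ContinuousOn P (Ioo 0 L) := fun x hx => (hd x hx).continuousAt.continuousWithinAt
  have hE : ∀ x ∈ Ioo 0 L, extendFrom (Ioo 0 L) P x = P x := fun x hx =>
    extendFrom_eq (subset_closure hx) (hPc x hx)
  have := intervalIntegral.sub_le_integral_of_hasDeriv_right_of_le (g := extendFrom (Ioo 0 L) P)
    (g' := P') (φ := φ) hL.le (continuousOn_Icc_extendFrom_Ioo hPc h0 h1)
    (fun x hx => ((hd x hx).congr_of_eventuallyEq (by
      filter_upwards [Ioo_mem_nhds hx.1 hx.2] with y hy using hE y hy)).hasDerivWithinAt)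
    ((integrableOn_Icc_iff_integrableOn_Ioo).2 hφ) hle
  rw [eq_lim_at_right_extendFrom_Ioo hL h1, eq_lim_at_left_extendFrom_Ioo hL h0,
    intervalIntegral.integral_of_le hL.le, integral_Ioc_eq_integral_Ioo] at this
  exact this

lemma ftc_eq {L : ℝ} (hL : 0 < L) {P P' : ℝ → ℝ} 
    (hc : ContinuousOn P (Icc 0 L))
    (hd : ∀ x ∈ Ioo 0 L, HasDerivAt P (P' x) x)
    (hφ : IntegrableOn P' (Ioo 0 L)) :
    ∫ x in Ioo 0 L, P' x = P L - P 0 := by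
  rw [← integral_Ioc_eq_integral_Ioo, ← intervalIntegral.integral_of_le hL.le]
  apply intervalIntegral.integral_eq_sub_of_hasDerivAt_of_le hL.le hc hd
  rw [intervalIntegrable_iff_integrableOn_Ioo_of_le hL.le]
  exact hφ

lemma int_mono {L : ℝ} {F G : ℝ → ℝ} (hF : IntegrableOn F (Ioo 0 L))
    (hG : IntegrableOn G (Ioo 0 L)) (h : ∀ x ∈ Ioo 0 L, F x ≤ G x) :
    ∫ x in Ioo 0 L, F x ≤ ∫ x in Ioo 0 L, G x :=
  setIntegral_mono_on hF hG measurableSet_Ioo h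

lemma int_congr {L : ℝ} {F G : ℝ → ℝ} (h : ∀ x ∈ Ioo 0 L, F x = G x) :
    ∫ x in Ioo 0 L, F x = ∫ x in Ioo 0 L, G x :=
  setIntegral_congr_fun measurableSet_Ioo h

lemma int_nonneg {L : ℝ} {F : ℝ → ℝ} (h : ∀ x ∈ Ioo 0 L, 0 ≤ F x) :
    0 ≤ ∫ x in Ioo 0 L, F x :=
  setIntegral_nonneg measurableSet_Ioo h

lemma fatou {L K : ℝ} {φ : ℕ → ℝ → ℝ} {ψ : ℝ → ℝ} 
    (hi : ∀ n, IntegrableOn (φ n) (Ioo 0 L)) (hψ : IntegrableOn ψ (Ioo 0 L))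
    (hn : ∀ n, ∀ x ∈ Ioo 0 L, 0 ≤ φ n x)
    (ht : ∀ x ∈ Ioo 0 L, Tendsto (fun n => φ n x) atTop (𝓝 (ψ x)))
    (hK : ∀ n, ∫ x in Ioo 0 L, φ n x ≤ K) : ∫ x in Ioo 0 L, ψ x ≤ K := by
  have hψ0 : ∀ x ∈ Ioo 0 L, 0 ≤ ψ x := fun x hx =>
    ge_of_tendsto' (ht x hx) (fun n => hn n x hx)
  have hK0 : 0 ≤ K := (int_nonneg (hn 0)).trans (hK 0)
  have key : ∫⁻ x in Ioo 0 L, ENNReal.ofReal (ψ x) ≤ ENNReal.ofReal K := by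
    have e : ∫⁻ x in Ioo 0 L, ENNReal.ofReal (ψ x)
        = ∫⁻ x in Ioo 0 L, liminf (fun n => ENNReal.ofReal (φ n x)) atTop := by
      apply setLIntegral_congr_fun measurableSet_Ioo
      intro x hx
      exact ((ENNReal.continuous_ofReal.tendsto _).comp (ht x hx)).liminf_eq.symm
    rw [e]
    refine (lintegral_liminf_le' (fun n => (hi n).aemeasurable.ennreal_ofReal)).trans ?_
    refine liminf_le_of_frequently_le' (Frequently.of_forall fun n => ?_)
    rw [← ofReal_integral_eq_lintegral_ofReal (hi n)
      ((ae_restrict_iff' measurableSet_Ioo).2 (Eventually.of_forall (hn n)))]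
    exact ENNReal.ofReal_le_ofReal (hK n)
  rw [← ofReal_integral_eq_lintegral_ofReal hψ
      ((ae_restrict_iff' measurableSet_Ioo).2 (Eventually.of_forall hψ0))] at key
  exact (ENNReal.ofReal_le_ofReal_iff hK0).1 key

/-- weak convergence from pointwise convergence plus an `L²` bound -/
lemma weak_freq {L M r C : ℝ} {g v : ℝ → ℝ} {w : ℕ → ℝ → ℝ}
    (hg : ContinuousOn g (Ioo 0 L)) (hgb : ∀ x ∈ Ioo 0 L, |g x| ≤ C)
    (hw : ∀ n, ContinuousOn (w n) (Icc 0 L)) (hv : ContinuousOn v (Icc 0 L))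
    (ht : ∀ x ∈ Ioo 0 L, Tendsto (fun n => w n x) atTop (𝓝 (v x)))
    (hM : ∀ n, ∫ x in Ioo 0 L, (w n x) ^ 2 ≤ M)
    (hr : ∫ x in Ioo 0 L, g x * v x < r) :
    ∃ n, ∫ x in Ioo 0 L, g x * w n x < r := by
  by_contra! hcon
  have hM0 : 0 ≤ M := (int_nonneg (fun x _ => sq_nonneg _)).trans (hM 0)
  have igg : IntegrableOn (fun x => g x ^ 2) (Ioo 0 L) := by
    apply ib (C := C ^ 2) (hg.pow 2)
    intro x hx
    show |g x ^ 2| ≤ _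
    rw [abs_pow]
    exact pow_le_pow_left₀ (abs_nonneg _) (hgb x hx) 2
  have ig : IntegrableOn g (Ioo 0 L) := ib hg hgb
  have igw : ∀ f : ℝ → ℝ, ContinuousOn f (Icc 0 L) →
      IntegrableOn (fun x => g x * f x) (Ioo 0 L) := by
    intro f hf
    obtain ⟨D, hD⟩ := isCompact_Icc.exists_bound_of_continuousOn hf
    apply ib (C := C * D) (hg.mul (hf.mono Ioo_subset_Icc_self))
    intro x hx
    show |g x * f x| ≤ _
    rw [abs_mul]
    exact mul_le_mul (hgb x hx) (hD x (Ioo_subset_Icc_self hx)) (abs_nonneg _)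
      ((abs_nonneg _).trans (hgb x hx))
  set G := ∫ x in Ioo 0 L, g x ^ 2
  have main : ∀ ε > 0, r ≤ (∫ x in Ioo 0 L, g x * v x) + ε * M := by
    intro ε hε
    have exp : ∀ f : ℝ → ℝ, ContinuousOn f (Icc 0 L) →
        IntegrableOn (fun x => ε * f x ^ 2 - g x * f x + (1 / (4 * ε)) * g x ^ 2) (Ioo 0 L) ∧
        ∫ x in Ioo 0 L, (ε * f x ^ 2 - g x * f x + (1 / (4 * ε)) * g x ^ 2) =
        ε * (∫ x in Ioo 0 L, f x ^ 2) - (∫ x in Ioo 0 L, g x * f x) + (1 / (4 * ε)) * G := by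
      intro f hf
      have i1 : IntegrableOn (fun x => ε * f x ^ 2) (Ioo 0 L) := ic (by fun_prop)
      have i2 := igw f hf
      have i3 : IntegrableOn (fun x => (1 / (4 * ε)) * g x ^ 2) (Ioo 0 L) := igg.const_mul _
      refine ⟨(i1.sub i2).add i3, ?_⟩
      have i12 : IntegrableOn (fun x => ε * f x ^ 2 - g x * f x) (Ioo 0 L) := i1.sub i2
      rw [integral_add i12 i3, integral_sub i1 i2, integral_const_mul, integral_const_mul]
    have hF := fatou (K := ε * M - r + (1 / (4 * ε)) * G)
      (φ := fun n x => ε * w n x ^ 2 - g x * w n x + (1 / (4 * ε)) * g x ^ 2)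
      (ψ := fun x => ε * v x ^ 2 - g x * v x + (1 / (4 * ε)) * g x ^ 2)
      (fun n => (exp _ (hw n)).1) (exp _ hv).1
      (fun n x _ => by
        have : ε * w n x ^ 2 - g x * w n x + (1 / (4 * ε)) * g x ^ 2
          = ε * (w n x - g x / (2 * ε)) ^ 2 := by field_simp; ring
        rw [this]; positivity)
      (fun x hx => by
        have := ht x hx
        exact (((this.pow 2).const_mul ε).sub (this.const_mul (g x))).add tendsto_const_nhds)
      (fun n => by
        rw [(exp _ (hw n)).2]
        have := hcon n
        have := mul_le_mul_of_nonneg_left (hM n) hε.le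
        linarith)
    rw [(exp _ hv).2] at hF
    have : 0 ≤ ε * ∫ x in Ioo 0 L, v x ^ 2 :=
      mul_nonneg hε.le (int_nonneg (fun x _ => sq_nonneg _))
    linarith
  have h := main ((r - ∫ x in Ioo 0 L, g x * v x) / (2 * (M + 1))) (by
    apply div_pos <;> linarith)
  have : (r - ∫ x in Ioo 0 L, g x * v x) / (2 * (M + 1)) * M ≤
      (r - ∫ x in Ioo 0 L, g x * v x) / 2 := by
    rw [div_mul_eq_mul_div, div_le_div_iff₀ (by positivity) (by norm_num)]
    nlinarith
  linarith

/-- backward Dini comparison -/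
lemma dini {s t : ℝ} (hst : s ≤ t) {ψ ρ Λ Λ' : ℝ → ℝ} (hψ : ContinuousOn ψ (Icc s t))
    (hΛ : ∀ τ, HasDerivAt Λ (Λ' τ) τ) (h1 : Λ t ≤ ψ t)
    (hρ : ∀ τ ∈ Ioc s t, ∀ r, ρ τ < r → ∃ᶠ σ in 𝓝[<] τ, (ψ τ - ψ σ) / (τ - σ) < r)
    (hb : ∀ τ ∈ Ioc s t, ψ τ = Λ τ → ρ τ < Λ' τ) : Λ s ≤ ψ s := by
  have := image_le_of_liminf_slope_right_lt_deriv_boundary' (f := fun x => - ψ (-x))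
    (f' := fun x => ρ (-x)) (a := -t) (b := -s) (B := fun x => - Λ (-x)) (B' := fun x => Λ' (-x))
    (by
      apply ContinuousOn.neg
      apply hψ.comp continuousOn_neg
      intro x hx
      exact ⟨by linarith [hx.2], by linarith [hx.1]⟩)
    (by
      intro x hx r hr
      have hx' : -x ∈ Ioc s t := ⟨by linarith [hx.2], by linarith [hx.1]⟩
      have hf := hρ (-x) hx' r hr
      have ht : Tendsto (fun y : ℝ => -y) (𝓝[<] (-x)) (𝓝[>] x) := by
        simpa using tendsto_neg_nhdsLT (a := -x)
      refine ht.frequently (hf.mono ?_)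
      intro σ hσ
      rw [slope_def_field]
      convert hσ using 1
      simp only [neg_neg]
      congr 1 <;> ring)
    (by simpa using h1)
    (by
      have : Continuous Λ := continuous_iff_continuousAt.2 fun τ => (hΛ τ).continuousAt
      exact (this.comp continuous_neg).neg.continuousOn)
    (by
      intro x hx
      have := ((hΛ (-x)).comp x (hasDerivAt_neg x)).neg
      simpa [Function.comp_def] using! this.hasDerivWithinAt)
    (by
      intro x hx he
      exact hb (-x) ⟨by linarith [hx.2], by linarith [hx.1]⟩ (neg_injective he))
    (x := -s) ⟨by linarith, le_rfl⟩
  simpa using this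

end KdV
namespace KdV

/-- continuous and bounded on the open interval -/
def CB (L : ℝ) (F : ℝ → ℝ) : Prop :=
  ContinuousOn F (Ioo 0 L) ∧ ∃ C, ∀ x ∈ Ioo 0 L, |F x| ≤ C

lemma CB.int {L : ℝ} {F : ℝ → ℝ} (h : CB L F) : IntegrableOn F (Ioo 0 L) := by
  obtain ⟨C, hC⟩ := h.2
  exact ib h.1 hC

lemma CB.icc {L : ℝ} {F : ℝ → ℝ} (h : ContinuousOn F (Icc 0 L)) : CB L F :=
  ⟨h.mono Ioo_subset_Icc_self, by
    obtain ⟨D, hD⟩ := isCompact_Icc.exists_bound_of_continuousOn h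
    exact ⟨D, fun x hx => hD x (Ioo_subset_Icc_self hx)⟩⟩

lemma CB.add {L : ℝ} {F G : ℝ → ℝ} (h : CB L F) (k : CB L G) : CB L (fun x => F x + G x) := by
  obtain ⟨C, hC⟩ := h.2
  obtain ⟨D, hD⟩ := k.2
  exact ⟨h.1.add k.1, C + D, fun x hx => (abs_add_le _ _).trans (add_le_add (hC x hx) (hD x hx))⟩

lemma CB.mul {L : ℝ} {F G : ℝ → ℝ} (h : CB L F) (k : CB L G) : CB L (fun x => F x * G x) := by
  obtain ⟨C, hC⟩ := h.2
  obtain ⟨D, hD⟩ := k.2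
  refine ⟨h.1.mul k.1, C * D, fun x hx => ?_⟩
  rw [abs_mul]
  exact mul_le_mul (hC x hx) (hD x hx) (abs_nonneg _) ((abs_nonneg _).trans (hC x hx))

lemma CB.neg {L : ℝ} {F : ℝ → ℝ} (h : CB L F) : CB L (fun x => - F x) := by
  obtain ⟨C, hC⟩ := h.2
  exact ⟨h.1.neg, C, fun x hx => by rw [abs_neg]; exact hC x hx⟩

lemma CB.sub {L : ℝ} {F G : ℝ → ℝ} (h : CB L F) (k : CB L G) : CB L (fun x => F x - G x) := by
  simpa [sub_eq_add_neg] using h.add k.neg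

lemma CB.cmul {L : ℝ} {F : ℝ → ℝ} (r : ℝ) (h : CB L F) : CB L (fun x => r * F x) :=
  (CB.icc (F := fun _ => r) continuousOn_const).mul h

lemma CB.sq {L : ℝ} {F : ℝ → ℝ} (h : CB L F) : CB L (fun x => F x ^ 2) := by
  simpa [pow_two] using h.mul h

/-- a spatial profile with its first three derivatives and the boundary conditions -/
structure D3 (L : ℝ) (u a b c : ℝ → ℝ) : Prop where
  cu : ContinuousOn u (Icc 0 L)
  ca : ContinuousOn a (Icc 0 L)
  cb : ContinuousOn b (Icc 0 L)
  cc : ContinuousOn c (Icc 0 L)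
  du : ∀ x ∈ Ioo 0 L, HasDerivAt u (a x) x
  da : ∀ x ∈ Ioo 0 L, HasDerivAt a (b x) x
  db : ∀ x ∈ Ioo 0 L, HasDerivAt b (c x) x
  u0 : u 0 = 0
  uL : u L = 0
  aL : a L = 0

lemma D3.sub {L : ℝ} {u a b c u' a' b' c' : ℝ → ℝ} (h : D3 L u a b c) (k : D3 L u' a' b' c') :
    D3 L (fun x => u x - u' x) (fun x => a x - a' x) (fun x => b x - b' x)
      (fun x => c x - c' x) where
  cu := h.cu.sub k.cu
  ca := h.ca.sub k.ca
  cb := h.cb.sub k.cb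
  cc := h.cc.sub k.cc
  du := fun x hx => (h.du x hx).sub (k.du x hx)
  da := fun x hx => (h.da x hx).sub (k.da x hx)
  db := fun x hx => (h.db x hx).sub (k.db x hx)
  u0 := by simp [h.u0, k.u0]
  uL := by simp [h.uL, k.uL]
  aL := by simp [h.aL, k.aL]

lemma D3.diss {L : ℝ} (hL : 0 < L) {u a b c : ℝ → ℝ} (h : D3 L u a b c) :
    0 ≤ ∫ x in Ioo 0 L, u x * (a x + c x) := by
  have := h.cu; have := h.ca; have := h.cb; have := h.cc
  rw [ftc_eq hL (P := fun x => u x ^ 2 / 2 + u x * b x - a x ^ 2 / 2) (by fun_prop)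
    (fun x hx => by
      have := ((((h.du x hx).pow 2).div_const 2).add ((h.du x hx).mul (h.db x hx))).sub
        (((h.da x hx).pow 2).div_const 2)
      refine this.congr_deriv ?_
      push_cast
      ring) (ic (by fun_prop))]
  simp only [h.u0, h.uL, h.aL]
  nlinarith [sq_nonneg (a 0)]

lemma ivl {L y x : ℝ} (hy : 0 ≤ y) (hx : x ≤ L) (hyx : y ≤ x) {F f : ℝ → ℝ}
    (hF : ContinuousOn F (Icc 0 L)) (hf : ContinuousOn f (Icc 0 L))
    (hd : ∀ x ∈ Ioo 0 L, HasDerivAt F (f x) x) :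
    |F x - F y| ≤ ∫ x in Ioo 0 L, |f x| := by
  have hsub : Icc y x ⊆ Icc 0 L := Icc_subset_Icc hy hx
  rw [← intervalIntegral.integral_eq_sub_of_hasDerivAt_of_le hyx (hF.mono hsub)
    (fun w hw => hd w ⟨hy.trans_lt hw.1, hw.2.trans_le hx⟩)
    ((hf.mono hsub).intervalIntegrable_of_Icc hyx)]
  refine (intervalIntegral.abs_integral_le_integral_abs hyx).trans ?_
  rw [intervalIntegral.integral_of_le hyx, integral_Ioc_eq_integral_Ioo]
  exact setIntegral_mono_set (ic hf.abs)
    (Eventually.of_forall fun _ => abs_nonneg _) (Ioo_subset_Ioo hy hx).eventuallyLE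

lemma D3.bbound {L : ℝ} (hL : 0 < L) {u a b c : ℝ → ℝ} (h : D3 L u a b c) {U N : ℝ}
    (hU : ∀ x ∈ Icc 0 L, |u x| ≤ U) (hN : ∫ x in Ioo 0 L, (a x + c x) ^ 2 ≤ N) :
    ∀ x ∈ Icc 0 L, |b x| ≤ L + N + 2 * U := by
  have := h.cu; have := h.ca; have := h.cb; have := h.cc
  obtain ⟨ξ, hξ, eξ⟩ := exists_hasDerivAt_eq_zero hL h.cu (by rw [h.u0, h.uL]) h.du
  obtain ⟨η, hη, eη⟩ := exists_hasDerivAt_eq_zero hξ.2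
    (h.ca.mono (Icc_subset_Icc hξ.1.le le_rfl)) (by rw [eξ, h.aL])
    (fun x hx => h.da x ⟨hξ.1.trans hx.1, hx.2⟩)
  have hη' : η ∈ Icc 0 L := ⟨(hξ.1.trans hη.1).le, hη.2.le⟩
  have hN0 : 0 ≤ ∫ x in Ioo 0 L, (a x + c x) ^ 2 := int_nonneg (fun x _ => sq_nonneg _)
  have hI : ∫ x in Ioo 0 L, |a x + c x| ≤ L + N := by
    have h1 : ∫ x in Ioo 0 L, |a x + c x| ≤ ∫ x in Ioo 0 L, (1 + (a x + c x) ^ 2) := by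
      apply int_mono (ic (by fun_prop)) (ic (by fun_prop))
      intro x hx
      nlinarith [sq_abs (a x + c x), sq_nonneg (|a x + c x| - 1), sq_nonneg (a x + c x)]
    rw [integral_add (ic (by fun_prop)) (ic (by fun_prop))] at h1
    have : ∫ x in Ioo 0 L, (1:ℝ) = L := by simp [hL.le]
    linarith
  have hd : ∀ x ∈ Ioo 0 L, HasDerivAt (fun x => b x + u x) (a x + c x) x := fun x hx => by
    rw [add_comm (a x)]
    exact (h.db x hx).add (h.du x hx)
  have key : ∀ x ∈ Icc 0 L, |(b x + u x) - (b η + u η)| ≤ L + N := by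
    intro x hx
    rcases le_total η x with hle | hle
    · exact (ivl hη'.1 hx.2 hle (F := fun x => b x + u x) (by fun_prop) (by fun_prop) hd).trans hI
    · rw [abs_sub_comm]
      exact (ivl hx.1 hη'.2 hle (F := fun x => b x + u x) (by fun_prop) (by fun_prop) hd).trans hI
  intro x hx
  have k1 := abs_le.1 (key x hx)
  have k2 := abs_le.1 (hU x hx)
  have k3 := abs_le.1 (hU η hη')
  rw [eη] at k1
  rw [abs_le]
  constructor <;> linarith [k1.1, k1.2, k2.1, k2.2, k3.1, k3.2]

lemma D3.dec {L B : ℝ} {u a b c : ℝ → ℝ} (h : D3 L u a b c)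
    (hB : ∀ x ∈ Icc 0 L, |b x| ≤ B) : ∀ x ∈ Ioo 0 L,
    |a x| ≤ B * (L - x) ∧ |u x| ≤ B * (L - x) ^ 2 := by
  have ha : ∀ x ∈ Ioo 0 L, |a x| ≤ B * (L - x) := by
    intro x hx
    obtain ⟨ξ, hξ, e⟩ := exists_hasDerivAt_eq_slope a b hx.2
      (h.ca.mono (Icc_subset_Icc hx.1.le le_rfl)) (fun y hy => h.da y ⟨hx.1.trans hy.1, hy.2⟩)
    have hs : 0 < L - x := sub_pos.2 hx.2
    have : a x = - (b ξ * (L - x)) := by rw [e, h.aL]; field_simp; ring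
    rw [this, abs_neg, abs_mul, abs_of_pos hs]
    exact mul_le_mul_of_nonneg_right (hB ξ ⟨(hx.1.trans hξ.1).le, hξ.2.le⟩) hs.le
  intro x hx
  refine ⟨ha x hx, ?_⟩
  obtain ⟨ξ, hξ, e⟩ := exists_hasDerivAt_eq_slope u a hx.2
    (h.cu.mono (Icc_subset_Icc hx.1.le le_rfl)) (fun y hy => h.du y ⟨hx.1.trans hy.1, hy.2⟩)
  have hs : 0 < L - x := sub_pos.2 hx.2
  have : u x = - (a ξ * (L - x)) := by rw [e, h.uL]; field_simp; ring
  have hB0 : 0 ≤ B := (abs_nonneg _).trans (hB x (Ioo_subset_Icc_self hx))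
  rw [this, abs_neg, abs_mul, abs_of_pos hs, pow_two, ← mul_assoc]
  refine mul_le_mul_of_nonneg_right ((ha ξ ⟨hx.1.trans hξ.1, hξ.2⟩).trans ?_) hs.le
  exact mul_le_mul_of_nonneg_left (by linarith [hξ.1]) hB0

lemma D3.cbv {L : ℝ} {u a b c : ℝ → ℝ} (h : D3 L u a b c) :
    CB L (fun x => u x / (L - x) ^ 2) := by
  obtain ⟨B, hB⟩ := isCompact_Icc.exists_bound_of_continuousOn h.cb
  constructor
  · apply (h.cu.mono Ioo_subset_Icc_self).div (by fun_prop)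
    intro x hx
    exact pow_ne_zero _ (sub_pos.2 hx.2).ne'
  · refine ⟨B, fun x hx => ?_⟩
    have hs : 0 < L - x := sub_pos.2 hx.2
    rw [abs_div, abs_of_pos (pow_pos hs 2), div_le_iff₀ (pow_pos hs 2)]
    exact (h.dec hB x hx).2

lemma D3.cbw {L : ℝ} {u a b c : ℝ → ℝ} (h : D3 L u a b c) :
    CB L (fun x => u x / (L - x)) := by
  have k := h.cbv.mul (CB.icc (F := fun x => L - x) (by fun_prop))
  refine ⟨k.1.congr ?_, ?_⟩
  · intro x hx
    have hs : 0 < L - x := sub_pos.2 hx.2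
    show u x / (L - x) = u x / (L - x) ^ 2 * (L - x)
    field_simp
  · obtain ⟨C, hC⟩ := k.2
    refine ⟨C, fun x hx => ?_⟩
    have hs : 0 < L - x := sub_pos.2 hx.2
    convert hC x hx using 2
    field_simp

lemma D3.lim_left {L : ℝ} (hL : 0 < L) {u : ℝ → ℝ} (h : ContinuousOn u (Icc 0 L)) :
    Tendsto u (𝓝[<] L) (𝓝 (u L)) :=
  ((h L ⟨hL.le, le_rfl⟩).mono Ioo_subset_Icc_self).tendsto.mono_left
    (nhdsWithin_Ioo_eq_nhdsLT hL).ge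

lemma D3.lim_right {L : ℝ} (hL : 0 < L) {u : ℝ → ℝ} (h : ContinuousOn u (Icc 0 L)) :
    Tendsto u (𝓝[>] 0) (𝓝 (u 0)) :=
  ((h 0 ⟨le_rfl, hL.le⟩).mono Ioo_subset_Icc_self).tendsto.mono_left
    (nhdsWithin_Ioo_eq_nhdsGT hL).ge

lemma D3.lima {L : ℝ} (hL : 0 < L) {u a b c : ℝ → ℝ} (h : D3 L u a b c) :
    Tendsto (fun x => a x / (L - x)) (𝓝[<] L) (𝓝 (- b L)) := by
  apply HasDerivAt.lhopital_zero_left_on_Ioo hL h.da (g' := fun _ => -1)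
  · intro x _
    simpa using (hasDerivAt_id x).const_sub L
  · simp
  · simpa [h.aL] using D3.lim_left hL h.ca
  · have : ContinuousOn (fun x => L - x) (Icc 0 L) := by fun_prop
    simpa using D3.lim_left hL this
  · simpa [div_neg] using (D3.lim_left hL h.cb).neg

lemma D3.limu {L : ℝ} (hL : 0 < L) {u a b c : ℝ → ℝ} (h : D3 L u a b c) :
    Tendsto (fun x => u x / (L - x) ^ 2) (𝓝[<] L) (𝓝 (b L / 2)) := by
  apply HasDerivAt.lhopital_zero_left_on_Ioo hL h.du (g' := fun x => -(2 * (L - x)))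
  · intro x _
    have := ((hasDerivAt_id x).const_sub L).pow 2
    refine this.congr_deriv ?_
    simp
  · intro x hx
    have hs : 0 < L - x := sub_pos.2 hx.2
    simp [hs.ne']
  · simpa [h.uL] using D3.lim_left hL h.cu
  · have : ContinuousOn (fun x => (L - x) ^ 2) (Icc 0 L) := by fun_prop
    simpa using D3.lim_left hL this
  · have := (h.lima hL).mul_const (-(1/2:ℝ))
    convert this using 2
    · rw [div_neg, mul_comm, ← div_div]; ring
    · ring

lemma D3.hardy {L : ℝ} (hL : 0 < L) {u a b c : ℝ → ℝ} (h : D3 L u a b c) :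
    ∫ x in Ioo 0 L, (u x / (L - x)) ^ 2 ≤ 4 * ∫ x in Ioo 0 L, a x ^ 2 := by
  have := h.cu; have := h.ca
  have i1 : IntegrableOn (fun x => 2 * a x ^ 2) (Ioo 0 L) := ic (by fun_prop)
  have i2 : IntegrableOn (fun x => 1 / 2 * (u x / (L - x)) ^ 2) (Ioo 0 L) := (h.cbw.sq.cmul _).int
  have l0 : Tendsto (fun x => - (u x ^ 2 / (L - x))) (𝓝[>] 0) (𝓝 0) := by
    have h1 : Tendsto (fun x : ℝ => L - x) (𝓝[>] 0) (𝓝 (L - 0)) := by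
      have : ContinuousOn (fun x => L - x) (Icc 0 L) := by fun_prop
      exact D3.lim_right hL this
    have := (((D3.lim_right hL h.cu).pow 2).div h1 (by simpa using hL.ne')).neg
    simpa [h.u0] using this
  have l1 : Tendsto (fun x => - (u x ^ 2 / (L - x))) (𝓝[<] L) (𝓝 0) := by
    have h1 : Tendsto (fun x : ℝ => (L - x) ^ 3) (𝓝[<] L) (𝓝 0) := by
      have : ContinuousOn (fun x => (L - x) ^ 3) (Icc 0 L) := by fun_prop
      simpa using D3.lim_left hL this
    have := (((h.limu hL).pow 2).mul h1).neg
    simp only [mul_zero, neg_zero] at this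
    refine this.congr' ?_
    filter_upwards [self_mem_nhdsWithin] with x hx
    have hs : 0 < L - x := sub_pos.2 hx
    field_simp
  have := ftc_le hL (P' := fun x => - ((2 * u x * a x) / (L - x) + u x ^ 2 / (L - x) ^ 2))
    (φ := fun x => 2 * a x ^ 2 - 1 / 2 * (u x / (L - x)) ^ 2) (fun x hx => by
      have hs : 0 < L - x := sub_pos.2 hx.2
      have := (((h.du x hx).pow 2).div ((hasDerivAt_id x).const_sub L) hs.ne').neg
      refine this.congr_deriv ?_
      simp
      field_simp
      ring) l0 l1 (i1.sub i2) (fun x hx => by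
      have hs : 0 < L - x := sub_pos.2 hx.2
      have e : 2 * u x * a x / (L - x) = 2 * (u x / (L - x)) * a x := by ring
      rw [e, ← div_pow]
      nlinarith [sq_nonneg (u x / (L - x) + 2 * a x)])
  rw [integral_sub i1 i2, integral_const_mul, integral_const_mul] at this
  linarith

end KdV
namespace KdV

lemma D3.stat1 {L : ℝ} (hL : 0 < L) {u a b c : ℝ → ℝ} (h : D3 L u a b c) :
    ∫ x in Ioo 0 L, b x * (a x + c x) ≤ b L ^ 2 / 2 := by
  have := h.ca; have := h.cb; have := h.cc
  rw [ftc_eq hL (P := fun x => b x ^ 2 / 2 + a x ^ 2 / 2) (by fun_prop)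
    (fun x hx => by
      have := (((h.db x hx).pow 2).div_const 2).add (((h.da x hx).pow 2).div_const 2)
      refine this.congr_deriv ?_
      push_cast
      ring) (ic (by fun_prop))]
  simp only [h.aL]
  nlinarith [sq_nonneg (a 0), sq_nonneg (b 0)]

lemma D3.stat3 {L : ℝ} (hL : 0 < L) {u a b c : ℝ → ℝ} (h : D3 L u a b c) :
    ∫ x in Ioo 0 L, x * u x * (a x + c x) =
      3 / 2 * (∫ x in Ioo 0 L, a x ^ 2) - 1 / 2 * ∫ x in Ioo 0 L, u x ^ 2 := by
  have := h.cu; have := h.ca; have := h.cb; have := h.cc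
  have e := ftc_eq hL (P := fun x => x * (u x * b x) - x * (a x ^ 2 / 2) - u x * a x
      + x * (u x ^ 2 / 2)) (P' := fun x => x * u x * (a x + c x) - (3 / 2 * a x ^ 2
      - 1 / 2 * u x ^ 2)) (by fun_prop)
    (fun x hx => by
      have := ((((hasDerivAt_id x).mul ((h.du x hx).mul (h.db x hx))).sub
        ((hasDerivAt_id x).mul (((h.da x hx).pow 2).div_const 2))).sub
        ((h.du x hx).mul (h.da x hx))).add
        ((hasDerivAt_id x).mul (((h.du x hx).pow 2).div_const 2))
      refine this.congr_deriv ?_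
      simp
      ring) (ic (by fun_prop))
  have i1 : IntegrableOn (fun x => x * u x * (a x + c x)) (Ioo 0 L) := ic (by fun_prop)
  have i2 : IntegrableOn (fun x => 3 / 2 * a x ^ 2 - 1 / 2 * u x ^ 2) (Ioo 0 L) :=
    ic (by fun_prop)
  have i3 : IntegrableOn (fun x => 3 / 2 * a x ^ 2) (Ioo 0 L) := ic (by fun_prop)
  have i4 : IntegrableOn (fun x => 1 / 2 * u x ^ 2) (Ioo 0 L) := ic (by fun_prop)
  rw [integral_sub i1 i2, integral_sub i3 i4, integral_const_mul, integral_const_mul] at e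
  simp only [h.u0, h.uL, h.aL] at e
  linarith

lemma alg_ineq {L s u a c : ℝ} (hs : 0 < s) (hsL : s ≤ L) :
    u * (a + c) / s ^ 2 - 3 * (a + 2 * (u / s)) ^ 2 / s ^ 3 + u * (a + 2 * (u / s)) / s ^ 2
      + u * a / 8 ≤ u / s ^ 2 * (a + c) + L ^ 3 * u ^ 2 := by
  obtain ⟨r, hr⟩ : ∃ r, r = a + 2 * (u / s) := ⟨_, rfl⟩
  have ha : u * a / 8 = u * r / 8 - u ^ 2 / (4 * s) := by rw [hr]; field_simp; ring
  rw [← hr, ha]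
  have h1 : u * r / s ^ 2 = r ^ 2 / s ^ 3 + u ^ 2 / (4 * s) - s * (r / s ^ 2 - u / (2 * s)) ^ 2 := by
    field_simp; ring
  have h2 : u * r / 8 = r ^ 2 / s ^ 3 + s ^ 3 * u ^ 2 / 256 - s ^ 3 * (r / s ^ 3 - u / 16) ^ 2 := by
    field_simp; ring
  have p1 : 0 ≤ s * (r / s ^ 2 - u / (2 * s)) ^ 2 := by positivity
  have p2 : 0 ≤ s ^ 3 * (r / s ^ 3 - u / 16) ^ 2 := by positivity
  have p3 : 0 ≤ r ^ 2 / s ^ 3 := by positivity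
  have p4 : s ^ 3 ≤ L ^ 3 := pow_le_pow_left₀ hs.le hsL 3
  have p5 : s ^ 3 * u ^ 2 ≤ L ^ 3 * u ^ 2 := mul_le_mul_of_nonneg_right p4 (sq_nonneg _)
  have p6 : 0 ≤ s ^ 3 * u ^ 2 := by positivity
  have e1 : u * (a + c) / s ^ 2 = u / s ^ 2 * (a + c) := by ring
  have e2 : 3 * r ^ 2 / s ^ 3 = 3 * (r ^ 2 / s ^ 3) := by ring
  linarith

lemma D3.stat2 {L : ℝ} (hL : 0 < L) {u a b c : ℝ → ℝ} (h : D3 L u a b c) :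
    b L ^ 2 / 4 - L ^ 3 * (∫ x in Ioo 0 L, u x ^ 2) ≤
      ∫ x in Ioo 0 L, u x / (L - x) ^ 2 * (a x + c x) := by
  have := h.cu; have := h.ca; have := h.cb; have := h.cc
  have i1 : IntegrableOn (fun x => u x / (L - x) ^ 2 * (a x + c x)) (Ioo 0 L) :=
    (h.cbv.mul (CB.icc (F := fun x => a x + c x) (by fun_prop))).int
  have i2 : IntegrableOn (fun x => L ^ 3 * u x ^ 2) (Ioo 0 L) := ic (by fun_prop)
  have hs0 : Tendsto (fun x : ℝ => L - x) (𝓝[>] 0) (𝓝 L) := by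
    have : ContinuousOn (fun x => L - x) (Icc 0 L) := by fun_prop
    simpa using D3.lim_right hL this
  have hs1 : Tendsto (fun x : ℝ => L - x) (𝓝[<] L) (𝓝 0) := by
    have : ContinuousOn (fun x => L - x) (Icc 0 L) := by fun_prop
    simpa using D3.lim_left hL this
  have hv0 : Tendsto (fun x : ℝ => u x / (L - x)) (𝓝[>] 0) (𝓝 0) := by
    simpa [h.u0] using! (D3.lim_right hL h.cu).div hs0 hL.ne'
  have hw0 : Tendsto (fun x : ℝ => a x / (L - x)) (𝓝[>] 0) (𝓝 (a 0 / L)) :=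
    (D3.lim_right hL h.ca).div hs0 hL.ne'
  have hv20 : Tendsto (fun x : ℝ => u x / (L - x) ^ 2) (𝓝[>] 0) (𝓝 0) := by
    simpa [h.u0] using! (D3.lim_right hL h.cu).div (hs0.pow 2) (pow_ne_zero 2 hL.ne')
  have hu0 : Tendsto u (𝓝[>] 0) (𝓝 0) := by simpa [h.u0] using D3.lim_right hL h.cu
  have hu1 : Tendsto u (𝓝[<] L) (𝓝 0) := by simpa [h.uL] using D3.lim_left hL h.cu
  have hv1 : Tendsto (fun x : ℝ => u x / (L - x)) (𝓝[<] L) (𝓝 0) := by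
    have := (h.limu hL).mul hs1
    rw [mul_zero] at this
    refine this.congr' ?_
    filter_upwards [self_mem_nhdsWithin] with x hx
    have hs : 0 < L - x := sub_pos.2 hx
    field_simp
  set P : ℝ → ℝ := fun x => u x / (L - x) ^ 2 * b x - (a x / (L - x)) ^ 2 / 2
    - 2 * (u x / (L - x) ^ 2 * (a x / (L - x))) - 3 * (u x / (L - x) ^ 2) ^ 2
    + (u x / (L - x)) ^ 2 + u x ^ 2 / 16 with hP
  have l0 : Tendsto P (𝓝[>] 0) (𝓝 (- (a 0 / L) ^ 2 / 2)) := by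
    have := (((((hv20.mul (D3.lim_right hL h.cb)).sub ((hw0.pow 2).div_const 2)).sub
      ((hv20.mul hw0).const_mul 2)).sub ((hv20.pow 2).const_mul 3)).add (hv0.pow 2)).add
      ((hu0.pow 2).div_const 16)
    convert this using 2
    ring
  have l1 : Tendsto P (𝓝[<] L) (𝓝 (b L ^ 2 / 4)) := by
    have hv2 := h.limu hL
    have hw := h.lima hL
    have := (((((hv2.mul (D3.lim_left hL h.cb)).sub ((hw.pow 2).div_const 2)).sub
      ((hv2.mul hw).const_mul 2)).sub ((hv2.pow 2).const_mul 3)).add (hv1.pow 2)).add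
      ((hu1.pow 2).div_const 16)
    convert this using 2
    ring
  have := ftc_le hL (P' := fun x => u x * (a x + c x) / (L - x) ^ 2
      - 3 * (a x + 2 * (u x / (L - x))) ^ 2 / (L - x) ^ 3
      + u x * (a x + 2 * (u x / (L - x))) / (L - x) ^ 2 + u x * a x / 8)
    (φ := fun x => u x / (L - x) ^ 2 * (a x + c x) + L ^ 3 * u x ^ 2) (fun x hx => by
      have hs : 0 < L - x := sub_pos.2 hx.2
      have d1 : HasDerivAt (fun x => L - x) (-1) x := by
        simpa using (hasDerivAt_id x).const_sub L
      have dv := (h.du x hx).div d1 hs.ne'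
      have dv2 := (h.du x hx).div (d1.pow 2) (pow_ne_zero 2 hs.ne')
      have dw := (h.da x hx).div d1 hs.ne'
      have := (((((dv2.mul (h.db x hx)).sub ((dw.pow 2).div_const 2)).sub
        ((dv2.mul dw).const_mul 2)).sub ((dv2.pow 2).const_mul 3)).add (dv.pow 2)).add
        (((h.du x hx).pow 2).div_const 16)
      refine this.congr_deriv ?_
      simp
      field_simp
      ring) l0 l1 (i1.add i2) (fun x hx => alg_ineq (sub_pos.2 hx.2) (by linarith [hx.1]))
  rw [integral_add i1 i2, integral_const_mul] at this
  nlinarith [sq_nonneg (a 0 / L)]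

/-- gradient of the Lyapunov functional -/
noncomputable def gf (L : ℝ) (u b : ℝ → ℝ) (x : ℝ) : ℝ :=
  - b x + 2 * (u x / (L - x) ^ 2) + 6 * (x * u x)

/-- the Lyapunov functional -/
noncomputable def Q (L : ℝ) (u a : ℝ → ℝ) : ℝ :=
  ∫ x in Ioo 0 L, (a x ^ 2 + 2 * (u x / (L - x)) ^ 2 + 6 * (x * u x ^ 2))

lemma D3.cbg {L : ℝ} {u a b c : ℝ → ℝ} (h : D3 L u a b c) : CB L (gf L u b) := by
  have := h.cu; have := h.cb
  exact ((CB.icc h.cb).neg.add (h.cbv.cmul 2)).add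
    (CB.icc (F := fun x => 6 * (x * u x)) (by fun_prop))

lemma D3.Q_eq {L : ℝ} {u a b c : ℝ → ℝ} (h : D3 L u a b c) :
    Q L u a = (∫ x in Ioo 0 L, a x ^ 2) + 2 * (∫ x in Ioo 0 L, (u x / (L - x)) ^ 2)
      + 6 * ∫ x in Ioo 0 L, x * u x ^ 2 := by
  have := h.cu; have := h.ca
  have i1 : IntegrableOn (fun x => a x ^ 2) (Ioo 0 L) := ic (by fun_prop)
  have i2 : IntegrableOn (fun x => 2 * (u x / (L - x)) ^ 2) (Ioo 0 L) := (h.cbw.sq.cmul _).int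
  have i3 : IntegrableOn (fun x => 6 * (x * u x ^ 2)) (Ioo 0 L) := ic (by fun_prop)
  have i12 : IntegrableOn (fun x => a x ^ 2 + 2 * (u x / (L - x)) ^ 2) (Ioo 0 L) := i1.add i2
  rw [Q, integral_add i12 i3, integral_add i1 i2, integral_const_mul, integral_const_mul]

lemma D3.Q_le {L : ℝ} (hL : 0 < L) {u a b c : ℝ → ℝ} (h : D3 L u a b c) :
    Q L u a ≤ 9 * (∫ x in Ioo 0 L, a x ^ 2) + 6 * L * ∫ x in Ioo 0 L, u x ^ 2 := by
  have := h.cu; have := h.ca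
  rw [h.Q_eq]
  have h1 := h.hardy hL
  have h2 : ∫ x in Ioo 0 L, x * u x ^ 2 ≤ ∫ x in Ioo 0 L, L * u x ^ 2 := by
    apply int_mono (ic (by fun_prop)) (ic (by fun_prop))
    intro x hx
    exact mul_le_mul_of_nonneg_right hx.2.le (sq_nonneg _)
  rw [integral_const_mul] at h2
  linarith

lemma D3.Q_ge {L : ℝ} {u a b c : ℝ → ℝ} (h : D3 L u a b c) :
    ∫ x in Ioo 0 L, a x ^ 2 ≤ Q L u a := by
  rw [h.Q_eq]
  have h1 : 0 ≤ ∫ x in Ioo 0 L, (u x / (L - x)) ^ 2 := int_nonneg (fun x _ => sq_nonneg _)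
  have h2 : 0 ≤ ∫ x in Ioo 0 L, x * u x ^ 2 :=
    int_nonneg (fun x hx => mul_nonneg hx.1.le (sq_nonneg _))
  linarith

lemma D3.static {L : ℝ} (hL : 0 < L) {u a b c : ℝ → ℝ} (h : D3 L u a b c) :
    ∫ x in Ioo 0 L, gf L u b x * (- (a x + c x)) ≤
      - Q L u a + (3 + 2 * L ^ 3 + 6 * L) * ∫ x in Ioo 0 L, u x ^ 2 := by
  have := h.cu; have := h.ca; have := h.cb; have := h.cc
  have i1 : IntegrableOn (fun x => b x * (a x + c x)) (Ioo 0 L) := ic (by fun_prop)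
  have i2 : IntegrableOn (fun x => 2 * (u x / (L - x) ^ 2 * (a x + c x))) (Ioo 0 L) :=
    ((h.cbv.mul (CB.icc (F := fun x => a x + c x) (by fun_prop))).cmul 2).int
  have i3 : IntegrableOn (fun x => 6 * (x * u x * (a x + c x))) (Ioo 0 L) := ic (by fun_prop)
  have i12 : IntegrableOn (fun x => b x * (a x + c x)
    - 2 * (u x / (L - x) ^ 2 * (a x + c x))) (Ioo 0 L) := i1.sub i2
  have e : ∫ x in Ioo 0 L, gf L u b x * (- (a x + c x)) =
      ∫ x in Ioo 0 L, (b x * (a x + c x) - 2 * (u x / (L - x) ^ 2 * (a x + c x))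
        - 6 * (x * u x * (a x + c x))) := by
    apply int_congr
    intro x _
    simp only [gf]
    ring
  rw [e, integral_sub i12 i3, integral_sub i1 i2, integral_const_mul, integral_const_mul]
  have h1 := h.stat1 hL
  have h2 := h.stat2 hL
  have h3 := h.stat3 hL
  have h4 := h.Q_le hL
  nlinarith

end KdV
namespace KdV

lemma cs {L : ℝ} {w e : ℝ → ℝ} (hw : ContinuousOn w (Icc 0 L)) (he : ContinuousOn e (Icc 0 L)) :
    ∫ x in Ioo 0 L, w x * e x ≤
      √(∫ x in Ioo 0 L, e x ^ 2) * √(∫ x in Ioo 0 L, w x ^ 2) := by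
  have key : ∀ r : ℝ, 0 ≤ (∫ x in Ioo 0 L, e x ^ 2) * (r * r)
      + (2 * ∫ x in Ioo 0 L, w x * e x) * r + ∫ x in Ioo 0 L, w x ^ 2 := by
    intro r
    have i1 : IntegrableOn (fun x => r ^ 2 * e x ^ 2) (Ioo 0 L) := ic (by fun_prop)
    have i2 : IntegrableOn (fun x => 2 * r * (w x * e x)) (Ioo 0 L) := ic (by fun_prop)
    have i3 : IntegrableOn (fun x => w x ^ 2) (Ioo 0 L) := ic (by fun_prop)
    have i12 : IntegrableOn (fun x => r ^ 2 * e x ^ 2 + 2 * r * (w x * e x)) (Ioo 0 L) :=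
      i1.add i2
    have h0 : 0 ≤ ∫ x in Ioo 0 L, (r ^ 2 * e x ^ 2 + 2 * r * (w x * e x) + w x ^ 2) :=
      int_nonneg (fun x _ => by nlinarith [sq_nonneg (r * e x + w x)])
    rw [integral_add i12 i3, integral_add i1 i2, integral_const_mul, integral_const_mul] at h0
    nlinarith
  have hd := discrim_le_zero key
  rw [discrim] at hd
  have hE : 0 ≤ ∫ x in Ioo 0 L, e x ^ 2 := int_nonneg (fun x _ => sq_nonneg _)
  rw [← Real.sqrt_mul hE]
  apply Real.le_sqrt_of_sq_le
  nlinarith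

lemma contint {L s t : ℝ} {F : ℝ → ℝ → ℝ}
    (h : ContinuousOn (fun p : ℝ × ℝ => F p.1 p.2) (Icc s t ×ˢ Icc 0 L)) :
    ContinuousOn (fun τ => ∫ x in Ioo 0 L, F τ x) (Icc s t) := by
  obtain ⟨C, hC⟩ := (isCompact_Icc.prod isCompact_Icc).exists_bound_of_continuousOn h
  have hslice : ∀ τ ∈ Icc s t, ContinuousOn (F τ) (Icc 0 L) := fun τ hτ =>
    h.comp (f := fun x => (τ, x)) (by fun_prop) (fun x hx => ⟨hτ, hx⟩)
  apply continuousOn_of_dominated (bound := fun _ => C)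
  · intro τ hτ
    exact (ic (hslice τ hτ)).aestronglyMeasurable
  · intro τ hτ
    refine (ae_restrict_iff' measurableSet_Ioo).2 (Eventually.of_forall fun x hx => ?_)
    exact hC (τ, x) ⟨hτ, Ioo_subset_Icc_self hx⟩
  · exact ic continuousOn_const
  · refine (ae_restrict_iff' measurableSet_Ioo).2 (Eventually.of_forall fun x hx => ?_)
    exact h.comp (f := fun τ => (τ, x)) (by fun_prop) (fun τ hτ => ⟨hτ, Ioo_subset_Icc_self hx⟩)

/-- convergence of Riemann sums of a derivative -/
lemma riem {s t : ℝ} (hst : s < t) {F f : ℝ → ℝ} (hf : ContinuousOn f (Icc s t))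
    (hd : ∀ τ ∈ Icc s t, HasDerivAt F (f τ) τ) :
    Tendsto (fun n : ℕ => (t - s) / (n + 1) *
      ∑ i ∈ Finset.range (n + 1), f (s + i * ((t - s) / (n + 1)))) atTop (𝓝 (F t - F s)) := by
  rw [Metric.tendsto_atTop]
  intro ε hε
  have hts : 0 < t - s := sub_pos.2 hst
  obtain ⟨δ, hδ, hu⟩ := Metric.uniformContinuousOn_iff.1
    (isCompact_Icc.uniformContinuousOn_of_continuous hf) (ε / (2 * (t - s))) (by positivity)
  obtain ⟨n0, hn0⟩ := exists_nat_gt ((t - s) / δ)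
  refine ⟨n0, fun n hn => ?_⟩
  have hn1 : (0:ℝ) < n + 1 := by positivity
  set h := (t - s) / (n + 1 : ℝ) with hh
  have hpos : 0 < h := by positivity
  have hhn : (n + 1) * h = t - s := by rw [hh]; field_simp
  have hhδ : h < δ := by
    have : (n0 : ℝ) ≤ n := by exact_mod_cast hn
    rw [hh, div_lt_iff₀ hn1]
    rw [div_lt_iff₀ hδ] at hn0
    nlinarith
  have tel : F t - F s = ∑ i ∈ Finset.range (n + 1),
      (F (s + ((i + 1 : ℕ) : ℝ) * h) - F (s + (i : ℝ) * h)) := by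
    rw [Finset.sum_range_sub (fun i : ℕ => F (s + (i : ℝ) * h))]
    push_cast
    rw [hhn]
    simp
  rw [tel, Finset.mul_sum, dist_eq_norm, ← Finset.sum_sub_distrib]
  refine (norm_sum_le _ _).trans_lt ?_
  have each : ∀ i ∈ Finset.range (n + 1),
      ‖h * f (s + i * h) - (F (s + ((i + 1 : ℕ) : ℝ) * h) - F (s + (i : ℝ) * h))‖
        ≤ h * (ε / (2 * (t - s))) := by
    intro i hi
    have hi' : (i : ℝ) + 1 ≤ n + 1 := by
      have := Finset.mem_range.1 hi
      exact_mod_cast this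
    have hi0 : (0 : ℝ) ≤ i := by positivity
    have q0 : s ≤ s + i * h := by nlinarith
    have q1 : s + ((i + 1 : ℕ) : ℝ) * h ≤ t := by push_cast; nlinarith
    have q2 : s + i * h < s + ((i + 1 : ℕ) : ℝ) * h := by push_cast; nlinarith
    have hsub : ∀ y ∈ Icc (s + i * h) (s + ((i + 1 : ℕ) : ℝ) * h), y ∈ Icc s t := fun y hy =>
      ⟨q0.trans hy.1, hy.2.trans q1⟩
    obtain ⟨ξ, hξ, e⟩ := exists_hasDerivAt_eq_slope F f q2
      (fun y hy => (hd y (hsub y hy)).continuousAt.continuousWithinAt)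
      (fun y hy => hd y (hsub y (Ioo_subset_Icc_self hy)))
    have e2 : F (s + ((i + 1 : ℕ) : ℝ) * h) - F (s + (i : ℝ) * h) = h * f ξ := by
      rw [e]
      have : s + ((i + 1 : ℕ) : ℝ) * h - (s + (i : ℝ) * h) = h := by push_cast; ring
      rw [this]
      field_simp
    rw [e2, ← mul_sub, norm_mul, Real.norm_of_nonneg hpos.le]
    refine mul_le_mul_of_nonneg_left ?_ hpos.le
    rw [← dist_eq_norm]
    refine (hu _ (hsub _ ⟨le_rfl, q2.le⟩) _ (hsub _ (Ioo_subset_Icc_self hξ)) ?_).le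
    rw [Real.dist_eq, abs_lt]
    have := hξ.1
    have := hξ.2
    push_cast at this
    constructor <;> nlinarith
  refine (Finset.sum_le_sum each).trans_lt ?_
  rw [Finset.sum_const, Finset.card_range, nsmul_eq_mul]
  push_cast
  rw [← mul_assoc, hhn]
  have : (t - s) * (ε / (2 * (t - s))) = ε / 2 := by field_simp
  rw [this]
  linarith

/-- Dini derivate estimate -/
lemma rate {L τ M : ℝ} {ψ : ℝ → ℝ} {u : ℝ → ℝ → ℝ} {g v : ℝ → ℝ} (hg : CB L g)
    (hv : ContinuousOn v (Icc 0 L))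
    (h1 : ∀ᶠ σ in 𝓝[<] τ, ψ τ - ψ σ ≤ 2 * ∫ x in Ioo 0 L, g x * (u τ x - u σ x))
    (h2 : ∀ᶠ σ in 𝓝[<] τ, ContinuousOn (u σ) (Icc 0 L)) (h2' : ContinuousOn (u τ) (Icc 0 L))
    (hd : ∀ x ∈ Ioo 0 L, HasDerivAt (fun σ => u σ x) (v x) τ)
    (hM : ∀ᶠ σ in 𝓝[<] τ, ∫ x in Ioo 0 L, (u τ x - u σ x) ^ 2 ≤ M * (τ - σ) ^ 2)
    {r : ℝ} (hr : 2 * ∫ x in Ioo 0 L, g x * v x < r) :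
    ∃ᶠ σ in 𝓝[<] τ, (ψ τ - ψ σ) / (τ - σ) < r := by
  by_contra hcon
  rw [not_frequently] at hcon
  have hlt : ∀ᶠ σ in 𝓝[<] τ, σ < τ := self_mem_nhdsWithin
  obtain ⟨σ, hσ, hall⟩ := exists_seq_forall_of_frequently
    ((h1.and (h2.and (hM.and (hcon.and hlt)))).frequently)
  obtain ⟨C, hC⟩ := hg.2
  obtain ⟨n, hn⟩ := weak_freq (w := fun n x => (u τ x - u (σ n) x) / (τ - σ n)) (M := M)
    (r := r / 2) hg.1 hC
    (fun n => (h2'.sub (hall n).2.1).div_const _) hv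
    (fun x hx => by
      have := (hasDerivAt_iff_tendsto_slope.1 (hd x hx)).mono_left
        (nhdsWithin_mono τ (fun y (hy : y < τ) => hy.ne) : 𝓝[<] τ ≤ 𝓝[≠] τ)
      refine (this.comp hσ).congr fun n => ?_
      rw [Function.comp, slope_comm, slope_def_field])
    (fun n => by
      have h0 : 0 < τ - σ n := sub_pos.2 (hall n).2.2.2.2
      have e : ∫ x in Ioo 0 L, ((u τ x - u (σ n) x) / (τ - σ n)) ^ 2
          = (∫ x in Ioo 0 L, (u τ x - u (σ n) x) ^ 2) / (τ - σ n) ^ 2 := by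
        simp_rw [div_pow]
        rw [integral_div]
      rw [e, div_le_iff₀ (by positivity)]
      exact (hall n).2.2.1)
    (by linarith)
  have h0 : 0 < τ - σ n := sub_pos.2 (hall n).2.2.2.2
  have e : ∫ x in Ioo 0 L, g x * ((u τ x - u (σ n) x) / (τ - σ n))
      = (∫ x in Ioo 0 L, g x * (u τ x - u (σ n) x)) / (τ - σ n) := by
    rw [← integral_div]
    apply int_congr
    intro x _
    ring
  rw [e, div_lt_iff₀ h0] at hn
  have k1 := (hall n).1
  have k2 := not_lt.1 (hall n).2.2.2.1
  rw [le_div_iff₀ h0] at k2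
  linarith

/-- abstract energy estimate -/
lemma energy {L s t κ : ℝ} (hst : s ≤ t) (hκ : 0 ≤ κ) {u v : ℝ → ℝ → ℝ}
    (hc : ContinuousOn (fun p : ℝ × ℝ => u p.1 p.2) (Icc s t ×ˢ Icc 0 L))
    (hv : ∀ τ ∈ Ioc s t, ContinuousOn (v τ) (Icc 0 L))
    (hd : ∀ τ ∈ Ioc s t, ∀ x ∈ Ioo 0 L, HasDerivAt (fun σ => u σ x) (v τ x) τ)
    (hM : ∀ τ ∈ Ioc s t, ∃ M, ∀ᶠ σ in 𝓝[<] τ,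
      ∫ x in Ioo 0 L, (u τ x - u σ x) ^ 2 ≤ M * (τ - σ) ^ 2)
    (hb : ∀ τ ∈ Ioc s t, ∫ x in Ioo 0 L, u τ x * v τ x ≤ κ * √(∫ x in Ioo 0 L, u τ x ^ 2)) :
    √(∫ x in Ioo 0 L, u t x ^ 2) ≤ √(∫ x in Ioo 0 L, u s x ^ 2) + κ * (t - s) := by
  have hslice : ∀ τ ∈ Icc s t, ContinuousOn (u τ) (Icc 0 L) := fun τ hτ =>
    hc.comp (f := fun x => (τ, x)) (by fun_prop) (fun x hx => ⟨hτ, hx⟩)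
  set ψ : ℝ → ℝ := fun τ => ∫ x in Ioo 0 L, u τ x ^ 2 with hψ
  have ψ0 : ∀ τ, 0 ≤ ψ τ := fun τ => int_nonneg (fun x _ => sq_nonneg _)
  by_contra! hcon
  change √(ψ s) + κ * (t - s) < √(ψ t) at hcon
  set R := √(ψ t) with hR
  obtain ⟨k, hk, hk2⟩ : ∃ k, κ < k ∧ √(ψ s) + k * (t - s) < R := by
    have h1 : 0 < t - s + 1 := by linarith
    refine ⟨κ + (R - √(ψ s) - κ * (t - s)) / (2 * (t - s + 1)), ?_, ?_⟩
    · have : 0 < (R - √(ψ s) - κ * (t - s)) / (2 * (t - s + 1)) := by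
        apply div_pos <;> linarith
      linarith
    · have : (R - √(ψ s) - κ * (t - s)) / (2 * (t - s + 1)) * (t - s) ≤
          (R - √(ψ s) - κ * (t - s)) / 2 := by
        rw [div_mul_eq_mul_div, div_le_div_iff₀ (by positivity) (by norm_num)]
        nlinarith
      nlinarith
  have hs0 := Real.sqrt_nonneg (ψ s)
  have hk0 : 0 ≤ k := by linarith
  have res := dini hst (ψ := ψ) (ρ := fun τ => 2 * ∫ x in Ioo 0 L, u τ x * v τ x)
    (Λ := fun τ => (R - k * (t - τ)) ^ 2) (Λ' := fun τ => 2 * k * (R - k * (t - τ)))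
    (contint (hc.pow 2))
    (fun τ => by
      have := ((((hasDerivAt_id τ).const_sub t).const_mul k).const_sub R).pow 2
      refine this.congr_deriv ?_
      simp
      ring)
    (by simp [hR, Real.sq_sqrt (ψ0 t)])
    (fun τ hτ r hr => by
      obtain ⟨M, hM'⟩ := hM τ hτ
      have hev : ∀ᶠ σ in 𝓝[<] τ, σ ∈ Icc s t := by
        filter_upwards [Ioo_mem_nhdsLT hτ.1] with σ hσ
        exact ⟨hσ.1.le, hσ.2.le.trans hτ.2⟩
      have cτ := hslice τ (Ioc_subset_Icc_self hτ)
      refine rate (g := u τ) (CB.icc cτ) (hv τ hτ) ?_ (hev.mono hslice) cτ (hd τ hτ) hM' hr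
      filter_upwards [hev] with σ hσ
      have cσ := hslice σ hσ
      rw [hψ]
      simp only
      rw [← integral_sub (ic (by fun_prop)) (ic (by fun_prop)), ← integral_const_mul]
      apply int_mono (ic (by fun_prop)) (ic (by fun_prop))
      intro x _
      nlinarith [sq_nonneg (u τ x - u σ x)])
    (fun τ hτ he => by
      have hm : 0 < R - k * (t - τ) := by nlinarith [hτ.1, hτ.2]
      have hsq : √(ψ τ) = R - k * (t - τ) := by
        rw [he]; exact Real.sqrt_sq hm.le
      have := hb τ hτ
      change _ ≤ κ * √(ψ τ) at this
      rw [hsq] at this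
      nlinarith)
  have hm : 0 ≤ R - k * (t - s) := by linarith
  have : R - k * (t - s) ≤ √(ψ s) := Real.le_sqrt_of_sq_le res
  linarith

end KdV
namespace KdV

/-- the smooth consequences of being a classical solution -/
structure Sol (L T : ℝ) (u a b c : ℝ → ℝ → ℝ) : Prop where
  d3 : ∀ t ∈ Icc 0 T, D3 L (u t) (a t) (b t) (c t)
  cont : ContinuousOn (fun p : ℝ × ℝ => u p.1 p.2) (Icc 0 T ×ˢ Icc 0 L)
  dt : ∀ t ∈ Ioo 0 T, ∀ x ∈ Ioo 0 L, HasDerivAt (fun s => u s x) (-(a t x + c t x)) t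
  ct : ∀ x ∈ Ioo 0 L, ContinuousOn (fun t => a t x + c t x) (Ioo 0 T)

/-- squared norm of the time derivative -/
noncomputable def NN (L : ℝ) (a c : ℝ → ℝ → ℝ) (t : ℝ) : ℝ :=
  ∫ x in Ioo 0 L, (a t x + c t x) ^ 2

/-- local boundedness of `NN` -/
def LB (L : ℝ) (a c : ℝ → ℝ → ℝ) (t : ℝ) : Prop := ∃ M, ∀ᶠ σ in 𝓝 t, NN L a c σ ≤ M

lemma NN_nonneg {L : ℝ} {a c : ℝ → ℝ → ℝ} (t : ℝ) : 0 ≤ NN L a c t :=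
  int_nonneg (fun _ _ => sq_nonneg _)

variable {L T : ℝ} {u a b c : ℝ → ℝ → ℝ}

lemma Sol.cac (S : Sol L T u a b c) {t : ℝ} (ht : t ∈ Icc 0 T) :
    ContinuousOn (fun x => a t x + c t x) (Icc 0 L) :=
  (S.d3 t ht).ca.add (S.d3 t ht).cc

lemma Sol.lip (S : Sol L T u a b c) {s t M : ℝ} (hst : s ≤ t) (h0 : 0 < s) (hT : t < T)
    (hN : ∀ τ ∈ Icc s t, NN L a c τ ≤ M) :
    ∫ x in Ioo 0 L, (u t x - u s x) ^ 2 ≤ M * (t - s) ^ 2 := by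
  rcases hst.eq_or_lt with rfl | hlt
  · simp
  have hin : ∀ τ ∈ Icc s t, τ ∈ Ioo 0 T := fun τ hτ => ⟨h0.trans_le hτ.1, hτ.2.trans_lt hT⟩
  have hin' : ∀ τ ∈ Icc s t, τ ∈ Icc 0 T := fun τ hτ => Ioo_subset_Icc_self (hin τ hτ)
  have hp : ∀ n : ℕ, ∀ i ∈ Finset.range (n + 1),
      s + i * ((t - s) / (n + 1 : ℝ)) ∈ Icc s t := by
    intro n i hi
    have hts : 0 < t - s := sub_pos.2 hlt
    have hi' : (i : ℝ) ≤ n + 1 := by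
      have := (Finset.mem_range.1 hi).le
      exact_mod_cast this
    constructor
    · have : 0 ≤ (i : ℝ) * ((t - s) / (n + 1 : ℝ)) := by positivity
      linarith
    · have : (i : ℝ) * ((t - s) / (n + 1 : ℝ)) ≤ (n + 1) * ((t - s) / (n + 1 : ℝ)) :=
        mul_le_mul_of_nonneg_right hi' (by positivity)
      have e : ((n : ℝ) + 1) * ((t - s) / (n + 1 : ℝ)) = t - s := by field_simp
      linarith
  set f : ℝ → ℝ → ℝ := fun τ x => - (a τ x + c τ x) with hf
  have cf : ∀ τ ∈ Icc s t, ContinuousOn (f τ) (Icc 0 L) := fun τ hτ => (S.cac (hin' τ hτ)).neg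
  have cS : ∀ n : ℕ, ContinuousOn (fun x => (t - s) / (n + 1) *
      ∑ i ∈ Finset.range (n + 1), f (s + i * ((t - s) / (n + 1))) x) (Icc 0 L) := by
    intro n
    apply ContinuousOn.mul continuousOn_const
    apply continuousOn_finsetSum
    intro i hi
    exact cf _ (hp n i hi)
  have cut := (S.d3 t (hin' t ⟨hst, le_rfl⟩)).cu
  have cus := (S.d3 s (hin' s ⟨le_rfl, hst⟩)).cu
  refine fatou (φ := fun n x => ((t - s) / (n + 1) *
      ∑ i ∈ Finset.range (n + 1), f (s + i * ((t - s) / (n + 1))) x) ^ 2)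
    (fun n => ic ((cS n).pow 2)) (ic (by fun_prop)) (fun n x _ => sq_nonneg _) ?_ ?_
  · intro x hx
    have := riem hlt (F := fun τ => u τ x) (f := fun τ => f τ x)
      (((S.ct x hx).mono (fun τ hτ => hin τ hτ)).neg) (fun τ hτ => S.dt τ (hin τ hτ) x hx)
    exact this.pow 2
  · intro n
    have hn1 : (0:ℝ) < n + 1 := by positivity
    have ii : ∀ i ∈ Finset.range (n + 1),
        IntegrableOn (fun x => f (s + i * ((t - s) / (n + 1))) x ^ 2) (Ioo 0 L) :=
      fun i hi => ic ((cf _ (hp n i hi)).pow 2)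
    have i2 : IntegrableOn (fun x => ((t - s) / (n + 1)) ^ 2 * (n + 1) *
        ∑ i ∈ Finset.range (n + 1), f (s + i * ((t - s) / (n + 1))) x ^ 2) (Ioo 0 L) :=
      (integrable_finsetSum _ ii).const_mul _
    have step : ∫ x in Ioo 0 L, ((t - s) / (n + 1) *
        ∑ i ∈ Finset.range (n + 1), f (s + i * ((t - s) / (n + 1))) x) ^ 2 ≤
        ∫ x in Ioo 0 L, ((t - s) / (n + 1)) ^ 2 * (n + 1) *
        ∑ i ∈ Finset.range (n + 1), f (s + i * ((t - s) / (n + 1))) x ^ 2 := by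
      apply int_mono (ic ((cS n).pow 2)) i2
      intro x _
      simp only [Pi.pow_apply]
      rw [mul_pow, mul_assoc]
      refine mul_le_mul_of_nonneg_left ?_ (sq_nonneg _)
      have := sq_sum_le_card_mul_sum_sq (s := Finset.range (n + 1))
        (f := fun i : ℕ => f (s + i * ((t - s) / (n + 1))) x)
      simpa using this
    refine step.trans ?_
    rw [integral_const_mul, integral_finsetSum _ ii]
    have sb : ∑ i ∈ Finset.range (n + 1),
        ∫ x in Ioo 0 L, f (s + i * ((t - s) / (n + 1))) x ^ 2 ≤ (n + 1) * M := by
      have : ∑ i ∈ Finset.range (n + 1),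
        ∫ x in Ioo 0 L, f (s + i * ((t - s) / (n + 1))) x ^ 2 ≤
        ∑ i ∈ Finset.range (n + 1), M := by
        apply Finset.sum_le_sum
        intro i hi
        have := hN _ (hp n i hi)
        simp only [hf, neg_sq]
        exact this
      simpa using this
    have e : M * (t - s) ^ 2 = ((t - s) / (n + 1)) ^ 2 * (n + 1) * ((n + 1) * M) := by
      field_simp
    rw [e]
    exact mul_le_mul_of_nonneg_left sb (by positivity)

lemma Sol.liploc (S : Sol L T u a b c) {τ : ℝ} (hτ : τ ∈ Ioo 0 T) (hb : LB L a c τ) :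
    ∃ M, ∀ᶠ σ in 𝓝 τ, ∫ x in Ioo 0 L, (u τ x - u σ x) ^ 2 ≤ M * (τ - σ) ^ 2 := by
  obtain ⟨M, hM⟩ := hb
  refine ⟨M, ?_⟩
  obtain ⟨ε, hε, h⟩ := Metric.eventually_nhds_iff_ball.1
    (hM.and (Ioo_mem_nhds hτ.1 hτ.2))
  rw [Real.ball_eq_Ioo] at h
  filter_upwards [Ioo_mem_nhds (a := τ - ε) (b := τ + ε) (by linarith) (by linarith)] with σ hσ
  rcases le_total σ τ with hle | hle
  · refine S.lip hle (h σ hσ).2.1 hτ.2 fun y hy => (h y ⟨?_, ?_⟩).1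
    · linarith [hσ.1, hy.1]
    · linarith [hy.2]
  · have := S.lip hle hτ.1 (h σ hσ).2.2 (M := M) fun y hy => (h y ⟨by linarith [hy.1],
      by linarith [hσ.2, hy.2]⟩).1
    calc ∫ x in Ioo 0 L, (u τ x - u σ x) ^ 2 = ∫ x in Ioo 0 L, (u σ x - u τ x) ^ 2 := by
          apply int_congr
          intro x _
          ring
      _ ≤ M * (σ - τ) ^ 2 := this
      _ = M * (τ - σ) ^ 2 := by ring

lemma LB_nhds {t : ℝ} (h : LB L a c t) : ∀ᶠ σ in 𝓝 t, LB L a c σ := by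
  obtain ⟨M, hM⟩ := h
  filter_upwards [eventually_eventually_nhds.2 hM] with σ hσ
  exact ⟨M, hσ⟩

lemma Sol.lsc (S : Sol L T u a b c) {t K : ℝ} {σ : ℕ → ℝ} (ht : t ∈ Ioo 0 T)
    (hσ : ∀ n, σ n ∈ Ioo 0 T) (hlim : Tendsto σ atTop (𝓝 t))
    (hK : ∀ n, NN L a c (σ n) ≤ K) : NN L a c t ≤ K := by
  refine fatou (φ := fun n x => (a (σ n) x + c (σ n) x) ^ 2)
    (fun n => ic ((S.cac (Ioo_subset_Icc_self (hσ n))).pow 2))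
    (ic ((S.cac (Ioo_subset_Icc_self ht)).pow 2)) (fun n x _ => sq_nonneg _) ?_ hK
  intro x hx
  have := (S.ct x hx).continuousAt (Ioo_mem_nhds ht.1 ht.2)
  exact (this.tendsto.comp hlim).pow 2

/-- first-step estimate -/
lemma Sol.step (S : Sol L T u a b c) (hL : 0 < L) {s t : ℝ} (hs : 0 ≤ s) (hst : s ≤ t)
    (htT : t < T) (hLB : ∀ τ ∈ Ioc s t, LB L a c τ) :
    √(∫ x in Ioo 0 L, (u t x - u s x) ^ 2) ≤ √(NN L a c s) * (t - s) := by
  have hs' : s ∈ Icc 0 T := ⟨hs, hst.trans htT.le⟩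
  have hin : ∀ τ ∈ Ioc s t, τ ∈ Ioo 0 T := fun τ hτ => ⟨hs.trans_lt hτ.1, hτ.2.trans_lt htT⟩
  have hin' : ∀ τ ∈ Ioc s t, τ ∈ Icc 0 T := fun τ hτ => Ioo_subset_Icc_self (hin τ hτ)
  have cs' := (S.d3 s hs').cu
  have := energy hst (Real.sqrt_nonneg (NN L a c s)) (L := L) (u := fun τ x => u τ x - u s x)
    (v := fun τ x => - (a τ x + c τ x))
    (by
      refine (S.cont.mono (prod_mono (Icc_subset_Icc hs htT.le) le_rfl)).sub ?_
      exact cs'.comp continuousOn_snd (fun p hp => hp.2))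
    (fun τ hτ => (S.cac (hin' τ hτ)).neg)
    (fun τ hτ x hx => (S.dt τ (hin τ hτ) x hx).sub_const _)
    (fun τ hτ => by
      obtain ⟨M, hM⟩ := S.liploc (hin τ hτ) (hLB τ hτ)
      refine ⟨M, ?_⟩
      filter_upwards [hM.filter_mono nhdsWithin_le_nhds] with σ hσ
      simpa using hσ)
    (fun τ hτ => by
      have D := (S.d3 τ (hin' τ hτ)).sub (S.d3 s hs')
      have d := D.diss hL
      have k1 := S.cac (hin' τ hτ)
      have k2 := S.cac hs'
      have ku := D.cu
      have hcs := cs ku k2.neg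
      have e : ∫ x in Ioo 0 L, (u τ x - u s x) * - (a τ x + c τ x) =
          (∫ x in Ioo 0 L, (u τ x - u s x) * -(a s x + c s x)) -
          ∫ x in Ioo 0 L, (u τ x - u s x) * ((a τ x - a s x) + (c τ x - c s x)) := by
        have j1 : IntegrableOn (fun x => (u τ x - u s x) * -(a s x + c s x)) (Ioo 0 L) :=
          ic (ku.mul k2.neg)
        have j2 : IntegrableOn (fun x => (u τ x - u s x) *
            ((a τ x - a s x) + (c τ x - c s x))) (Ioo 0 L) := ic (ku.mul (D.ca.add D.cc))
        rw [← integral_sub j1 j2]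
        apply int_congr
        intro x _
        ring
      rw [e]
      have e2 : ∫ x in Ioo 0 L, ((-fun x => a s x + c s x) x) ^ 2 = NN L a c s := by
        apply int_congr
        intro x _
        simp only [Pi.neg_apply, neg_sq]
      rw [e2] at hcs
      refine le_trans ?_ hcs
      simp only [Pi.neg_apply]
      linarith)
  simpa using this

/-- the time derivative does not grow -/
lemma Sol.mono (S : Sol L T u a b c) (hL : 0 < L) {s t : ℝ} (hs : 0 ≤ s) (hst : s < t)
    (htT : t < T) (hLB : ∀ τ ∈ Ioc s t, LB L a c τ) : NN L a c t ≤ NN L a c s := by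
  obtain ⟨k0, hk0, hk⟩ : ∃ k0 > 0, t + k0 < T ∧ ∀ τ ∈ Ioo s (t + k0), LB L a c τ := by
    obtain ⟨ε, hε, h⟩ := Metric.eventually_nhds_iff_ball.1 (LB_nhds (hLB t ⟨hst, le_rfl⟩))
    rw [Real.ball_eq_Ioo] at h
    refine ⟨min (ε / 2) ((T - t) / 2), by apply lt_min <;> linarith, ?_, ?_⟩
    · have := min_le_right (ε / 2) ((T - t) / 2)
      linarith
    · intro τ hτ
      rcases le_or_gt τ t with hle | hlt
      · exact hLB τ ⟨hτ.1, hle⟩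
      · have := min_le_left (ε / 2) ((T - t) / 2)
        exact h τ ⟨by linarith, by linarith [hτ.2]⟩
  have main : ∀ k, 0 < k → k < k0 →
      ∫ x in Ioo 0 L, (u (t + k) x - u t x) ^ 2 ≤ NN L a c s * k ^ 2 := by
    intro k hkp hkk
    have hin : ∀ τ ∈ Ioc s t, τ ∈ Ioo 0 T := fun τ hτ => ⟨hs.trans_lt hτ.1, hτ.2.trans_lt htT⟩
    have hin' : ∀ τ ∈ Ioc s t, τ ∈ Icc 0 T := fun τ hτ => Ioo_subset_Icc_self (hin τ hτ)
    have kin : ∀ τ ∈ Ioc s t, τ + k ∈ Ioo 0 T := fun τ hτ =>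
      ⟨by linarith [hτ.1], by linarith [hτ.2, hk.1]⟩
    have kin' : ∀ τ ∈ Ioc s t, τ + k ∈ Icc 0 T := fun τ hτ => Ioo_subset_Icc_self (kin τ hτ)
    have h1 := S.step hL hs (t := s + k) (by linarith) (by linarith [hk.1])
      (fun τ hτ => hk.2 τ ⟨hτ.1, by linarith [hτ.2]⟩)
    have h2 := energy hst.le le_rfl (L := L) (u := fun τ x => u (τ + k) x - u τ x)
      (v := fun τ x => - (a (τ + k) x + c (τ + k) x) - (- (a τ x + c τ x)))
      (by
        refine ContinuousOn.sub ?_ (S.cont.mono (prod_mono (Icc_subset_Icc hs htT.le) le_rfl))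
        exact S.cont.comp (f := fun p : ℝ × ℝ => (p.1 + k, p.2)) (by fun_prop)
          (fun p hp => ⟨⟨by linarith [hp.1.1], by linarith [hp.1.2, hk.1]⟩, hp.2⟩))
      (fun τ hτ => (S.cac (kin' τ hτ)).neg.sub (S.cac (hin' τ hτ)).neg)
      (fun τ hτ x hx => by
        have d1 := S.dt (τ + k) (kin τ hτ) x hx
        exact (d1.comp_add_const τ k).sub (S.dt τ (hin τ hτ) x hx))
      (fun τ hτ => by
        obtain ⟨M, hM⟩ := S.liploc (hin τ hτ) (hLB τ hτ)
        obtain ⟨M', hM'⟩ := S.liploc (kin τ hτ)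
          (hk.2 _ ⟨by linarith [hτ.1], by linarith [hτ.2]⟩)
        have hlim : Tendsto (fun σ : ℝ => σ + k) (𝓝 τ) (𝓝 (τ + k)) :=
          (continuous_id.add continuous_const).tendsto τ
        refine ⟨2 * M' + 2 * M, ?_⟩
        filter_upwards [hM.filter_mono nhdsWithin_le_nhds,
          (hlim.eventually hM').filter_mono nhdsWithin_le_nhds, Ioo_mem_nhdsLT hτ.1]
          with σ e1 e2 e3
        have hσ : σ ∈ Ioc s t := ⟨e3.1, e3.2.le.trans hτ.2⟩
        have c1 := (S.d3 _ (hin' τ hτ)).cu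
        have c2 := (S.d3 _ (kin' τ hτ)).cu
        have c3 := (S.d3 _ (hin' σ hσ)).cu
        have c4 := (S.d3 _ (kin' σ hσ)).cu
        have i1 : IntegrableOn (fun x => 2 * (u (τ + k) x - u (σ + k) x) ^ 2) (Ioo 0 L) :=
          ic (by fun_prop)
        have i2 : IntegrableOn (fun x => 2 * (u τ x - u σ x) ^ 2) (Ioo 0 L) :=
          ic (by fun_prop)
        have := int_mono (L := L)
          (F := fun x => (u (τ + k) x - u τ x - (u (σ + k) x - u σ x)) ^ 2)
          (G := fun x => 2 * (u (τ + k) x - u (σ + k) x) ^ 2 + 2 * (u τ x - u σ x) ^ 2)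
          (ic (by fun_prop)) (i1.add i2) (fun x _ => by
            nlinarith [sq_nonneg ((u (τ + k) x - u (σ + k) x) + (u τ x - u σ x))])
        rw [integral_add i1 i2, integral_const_mul, integral_const_mul] at this
        have e4 : τ + k - (σ + k) = τ - σ := by ring
        rw [e4] at e2
        linarith)
      (fun τ hτ => by
        have D := (S.d3 _ (kin' τ hτ)).sub (S.d3 _ (hin' τ hτ))
        have d := D.diss hL
        rw [zero_mul]
        have e : ∫ x in Ioo 0 L, (u (τ + k) x - u τ x) *
            (- (a (τ + k) x + c (τ + k) x) - (- (a τ x + c τ x))) =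
            - ∫ x in Ioo 0 L, (u (τ + k) x - u τ x) *
            (a (τ + k) x - a τ x + (c (τ + k) x - c τ x)) := by
          rw [← integral_neg]
          apply int_congr
          intro x _
          ring
        rw [e]
        linarith)
    have h3 : √(∫ x in Ioo 0 L, (u (t + k) x - u t x) ^ 2) ≤ √(NN L a c s) * k := by
      have e : s + k - s = k := by ring
      rw [e] at h1
      linarith
    have h4 := pow_le_pow_left₀ (Real.sqrt_nonneg _) h3 2
    rw [Real.sq_sqrt (int_nonneg (fun x _ => sq_nonneg _)), mul_pow,
      Real.sq_sqrt (NN_nonneg s)] at h4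
    exact h4
  have ht : t ∈ Ioo 0 T := ⟨hs.trans_lt hst, htT⟩
  obtain ⟨κ, hκ, hall⟩ := exists_seq_forall_of_frequently (l := 𝓝[>] (0:ℝ))
    (p := fun k => k ∈ Ioo 0 k0) (Eventually.frequently (Ioo_mem_nhdsGT hk0))
  have c1 := (S.d3 t (Ioo_subset_Icc_self ht)).cu
  have c2 : ∀ n, ContinuousOn (u (t + κ n)) (Icc 0 L) := fun n =>
    (S.d3 _ ⟨by linarith [ht.1, (hall n).1], by linarith [(hall n).2, hk.1]⟩).cu
  refine fatou (φ := fun n x => ((u (t + κ n) x - u t x) / κ n) ^ 2)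
    (fun n => ic ((((c2 n).sub c1).div_const _).pow 2))
    (ic ((S.cac (Ioo_subset_Icc_self ht)).pow 2)) (fun n x _ => sq_nonneg _) ?_ ?_
  · intro x hx
    have := (hasDerivAt_iff_tendsto_slope_zero.1 (S.dt t ht x hx)).mono_left
      (nhdsWithin_mono 0 (fun y (hy : 0 < y) => hy.ne') : 𝓝[>] (0:ℝ) ≤ 𝓝[≠] 0)
    have := (this.comp hκ).pow 2
    rw [neg_sq] at this
    refine this.congr fun n => ?_
    simp only [Function.comp, smul_eq_mul]
    rw [inv_mul_eq_div]
  · intro n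
    have h0 := (hall n).1
    simp_rw [div_pow]
    rw [integral_div, div_le_iff₀ (by positivity)]
    exact main _ h0 (hall n).2

end KdV
namespace KdV

variable {L T : ℝ} {u a b c : ℝ → ℝ → ℝ}

/-- Baire category argument: the time derivative is locally bounded in `L²` -/
lemma Sol.allLB (S : Sol L T u a b c) (hL : 0 < L) : ∀ t ∈ Ioo 0 T, LB L a c t := by
  by_contra! hne
  have hopen : IsOpen {t | LB L a c t} := by
    rw [isOpen_iff_mem_nhds]
    intro t ht
    exact LB_nhds ht
  set B : Set ℝ := Ioo 0 T ∩ {t | LB L a c t}ᶜ with hB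
  have hlc : IsLocallyClosed B :=
    isOpen_Ioo.isLocallyClosed.inter hopen.isClosed_compl.isLocallyClosed
  have : LocallyCompactSpace B := hlc.locallyCompactSpace
  have : Nonempty B := by
    obtain ⟨t, ht, h⟩ := hne
    exact ⟨⟨t, ht, h⟩⟩
  obtain ⟨n, t1, ht1⟩ := nonempty_interior_of_iUnion_of_closed
    (f := fun n : ℕ => {t : B | NN L a c t ≤ n})
    (fun n => by
      apply IsSeqClosed.isClosed
      intro σ t hσ hlim
      exact S.lsc t.2.1 (fun k => (σ k).2.1)
        ((continuous_subtype_val.tendsto t).comp hlim) hσ)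
    (by
      rw [iUnion_eq_univ_iff]
      intro t
      exact exists_nat_ge (NN L a c t))
  have hev : ∀ᶠ t in 𝓝[B] (t1 : ℝ), NN L a c t ≤ n :=
    (eventually_nhds_subtype_iff B t1 (fun t => NN L a c t ≤ n)).1
      (mem_interior_iff_mem_nhds.1 ht1)
  rw [eventually_nhdsWithin_iff] at hev
  obtain ⟨ε, hε, h⟩ := Metric.eventually_nhds_iff_ball.1
    (hev.and (Ioo_mem_nhds t1.2.1.1 t1.2.1.2))
  rw [Real.ball_eq_Ioo] at h
  obtain ⟨s, hs⟩ : ∃ s, s = (t1 : ℝ) - ε / 2 := ⟨_, rfl⟩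
  have hsI := h s ⟨by linarith, by linarith⟩
  apply t1.2.2
  refine ⟨max n (NN L a c s), ?_⟩
  filter_upwards [Ioo_mem_nhds (a := s) (b := t1 + ε) (by linarith) (by linarith)] with t ht
  have htI := h t ⟨by linarith [ht.1], ht.2⟩
  by_cases htB : t ∈ B
  · exact (htI.1 htB).trans (le_max_left _ _)
  have hsub : Icc s t ⊆ Ioo 0 T := fun y hy => ⟨hsI.2.1.trans_le hy.1, hy.2.trans_lt htI.2.2⟩
  rcases (Icc s t ∩ {t | LB L a c t}ᶜ).eq_empty_or_nonempty with hE | hE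
  · refine (S.mono hL hsI.2.1.le ht.1 htI.2.2 ?_).trans (le_max_right _ _)
    intro τ hτ
    by_contra hcon
    have : τ ∈ Icc s t ∩ {t | LB L a c t}ᶜ := ⟨Ioc_subset_Icc_self hτ, hcon⟩
    rw [hE] at this
    exact this
  · have hcpt : IsCompact (Icc s t ∩ {t | LB L a c t}ᶜ) :=
      isCompact_Icc.inter_right hopen.isClosed_compl
    have hmem := hcpt.sSup_mem hE
    obtain ⟨p, hp⟩ : ∃ p, p = sSup (Icc s t ∩ {t | LB L a c t}ᶜ) := ⟨_, rfl⟩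
    rw [← hp] at hmem
    have hpB : p ∈ B := ⟨hsub hmem.1, hmem.2⟩
    have hpt : p < t := lt_of_le_of_ne hmem.1.2 (fun e => htB (e ▸ hpB))
    have h1 := S.mono hL (hsub hmem.1).1.le hpt htI.2.2 (fun τ hτ => by
      by_contra hcon
      have : τ ≤ p := by
        rw [hp]
        exact le_csSup hcpt.bddAbove ⟨⟨hmem.1.1.trans hτ.1.le, hτ.2⟩, hcon⟩
      exact absurd hτ.1 (not_lt.2 this))
    have h2 := (h p ⟨by linarith [hmem.1.1], by linarith [ht.2]⟩).1 hpB
    exact h1.trans (h2.trans (le_max_left _ _))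

lemma Sol.NN_le (S : Sol L T u a b c) (hL : 0 < L) {t : ℝ} (ht : t ∈ Ico 0 T) :
    NN L a c t ≤ NN L a c 0 := by
  rcases ht.1.eq_or_lt with rfl | h0
  · exact le_rfl
  · exact S.mono hL le_rfl h0 ht.2 fun τ hτ => S.allLB hL τ ⟨hτ.1, hτ.2.trans_lt ht.2⟩

lemma Sol.lip_ev (S : Sol L T u a b c) (hL : 0 < L) {τ : ℝ} (hτ : τ ∈ Ioo 0 T) :
    ∃ M, ∀ᶠ σ in 𝓝[<] τ, ∫ x in Ioo 0 L, (u τ x - u σ x) ^ 2 ≤ M * (τ - σ) ^ 2 := by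
  obtain ⟨M, hM⟩ := S.liploc hτ (S.allLB hL τ hτ)
  exact ⟨M, hM.filter_mono nhdsWithin_le_nhds⟩

/-- decay of the `L²` norm, including the final time -/
lemma Sol.L2_le (S : Sol L T u a b c) (hL : 0 < L) (hT : 0 < T) {t : ℝ} (ht : t ∈ Icc 0 T) :
    ∫ x in Ioo 0 L, u t x ^ 2 ≤ ∫ x in Ioo 0 L, u 0 x ^ 2 := by
  have hlt : ∀ t ∈ Ico 0 T, ∫ x in Ioo 0 L, u t x ^ 2 ≤ ∫ x in Ioo 0 L, u 0 x ^ 2 := by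
    intro t ht
    have hin : ∀ τ ∈ Ioc 0 t, τ ∈ Ioo 0 T := fun τ hτ => ⟨hτ.1, hτ.2.trans_lt ht.2⟩
    have hin' : ∀ τ ∈ Ioc 0 t, τ ∈ Icc 0 T := fun τ hτ => Ioo_subset_Icc_self (hin τ hτ)
    have := energy ht.1 le_rfl (L := L) (u := u) (v := fun τ x => - (a τ x + c τ x))
      (S.cont.mono (prod_mono (Icc_subset_Icc le_rfl ht.2.le) le_rfl))
      (fun τ hτ => (S.cac (hin' τ hτ)).neg) (fun τ hτ => S.dt τ (hin τ hτ))
      (fun τ hτ => S.lip_ev hL (hin τ hτ)) (fun τ hτ => by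
        have d := (S.d3 τ (hin' τ hτ)).diss hL
        rw [zero_mul]
        simp only [mul_neg]
        rw [integral_neg]
        linarith)
    rw [zero_mul, add_zero] at this
    exact (Real.sqrt_le_sqrt_iff (int_nonneg (fun x _ => sq_nonneg _))).1 this
  have hc : ContinuousOn (fun τ => ∫ x in Ioo 0 L, u τ x ^ 2) (Icc 0 T) := contint (S.cont.pow 2)
  rcases ht.2.eq_or_lt with rfl | h
  · have := D3.lim_left hT hc
    refine le_of_tendsto this ?_
    filter_upwards [Ioo_mem_nhdsLT hT] with σ hσ
    exact hlt σ ⟨hσ.1.le, hσ.2⟩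
  · exact hlt t ⟨ht.1, h⟩

/-- uniform bound for the gradient of the Lyapunov functional -/
lemma Sol.gbound (S : Sol L T u a b c) (hL : 0 < L) (hT : 0 < T) :
    ∃ G, ∀ t ∈ Icc 0 T, ∀ x ∈ Ioo 0 L, |gf L (u t) (b t) x| ≤ G := by
  obtain ⟨U, hU⟩ := (isCompact_Icc.prod isCompact_Icc).exists_bound_of_continuousOn S.cont
  obtain ⟨B, hB⟩ : ∃ B, ∀ t ∈ Icc 0 T, ∀ x ∈ Icc 0 L, |b t x| ≤ B := by
    refine ⟨L + max (NN L a c 0) (NN L a c T) + 2 * U, fun t ht => ?_⟩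
    refine (S.d3 t ht).bbound hL (fun x hx => hU (t, x) ⟨ht, hx⟩) ?_
    rcases ht.2.eq_or_lt with rfl | h
    · exact le_max_right _ _
    · exact (S.NN_le hL ⟨ht.1, h⟩).trans (le_max_left _ _)
  refine ⟨B + 2 * B + 6 * (L * U), fun t ht x hx => ?_⟩
  have hs : 0 < L - x := sub_pos.2 hx.2
  have h1 := hB t ht x (Ioo_subset_Icc_self hx)
  have h2 : |u t x / (L - x) ^ 2| ≤ B := by
    rw [abs_div, abs_of_pos (pow_pos hs 2), div_le_iff₀ (pow_pos hs 2)]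
    exact ((S.d3 t ht).dec (hB t ht) x hx).2
  have h3 : |x * u t x| ≤ L * U := by
    rw [abs_mul, abs_of_pos hx.1]
    exact mul_le_mul hx.2.le (hU (t, x) ⟨ht, Ioo_subset_Icc_self hx⟩) (abs_nonneg _) hL.le
  simp only [gf]
  refine (abs_add_le _ _).trans (add_le_add ((abs_add_le _ _).trans (add_le_add ?_ ?_)) ?_)
  · rwa [abs_neg]
  · rw [abs_mul, abs_of_pos (by norm_num : (0:ℝ) < 2)]
    linarith
  · rw [abs_mul, abs_of_pos (by norm_num : (0:ℝ) < 6)]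
    linarith

/-- polarization identity for the Lyapunov functional -/
lemma Q_diff (hL : 0 < L) {u a b c u' a' b' c' : ℝ → ℝ} (h : D3 L u a b c)
    (k : D3 L u' a' b' c') :
    Q L u a - Q L u' a' = 2 * (∫ x in Ioo 0 L, gf L u b x * (u x - u' x)) -
      Q L (fun x => u x - u' x) (fun x => a x - a' x) := by
  have := h.cu; have := h.ca; have := h.cb; have := h.cc
  have := k.cu; have := k.ca; have := k.cb; have := k.cc
  have D := h.sub k
  have ftc := ftc_eq hL (P := fun x => a x * (u x - u' x))
    (P' := fun x => b x * (u x - u' x) + a x * (a x - a' x)) (by fun_prop)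
    (fun x hx => (h.da x hx).mul ((h.du x hx).sub (k.du x hx))) (ic (by fun_prop))
  simp only [h.uL, k.uL, h.u0, k.u0, sub_self, mul_zero] at ftc
  have j : IntegrableOn (fun x => b x * (u x - u' x) + a x * (a x - a' x)) (Ioo 0 L) :=
    ic (by fun_prop)
  have cq : ∀ {u a b c : ℝ → ℝ}, D3 L u a b c → IntegrableOn
      (fun x => a x ^ 2 + 2 * (u x / (L - x)) ^ 2 + 6 * (x * u x ^ 2)) (Ioo 0 L) := by
    intro u a b c h
    have := h.cu; have := h.ca
    exact (((CB.icc h.ca).sq.add (h.cbw.sq.cmul 2)).add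
      (CB.icc (F := fun x => 6 * (x * u x ^ 2)) (by fun_prop))).int
  have jg : IntegrableOn (fun x => gf L u b x * (u x - u' x)) (Ioo 0 L) :=
    (h.cbg.mul (CB.icc D.cu)).int
  have e : Q L u a - Q L u' a' + Q L (fun x => u x - u' x) (fun x => a x - a' x)
      = 2 * (∫ x in Ioo 0 L, gf L u b x * (u x - u' x))
       + 2 * ∫ x in Ioo 0 L, (b x * (u x - u' x) + a x * (a x - a' x)) := by
    have q1 := cq h
    have q2 := cq k
    have q3 := cq D
    have q12 : IntegrableOn (fun x => a x ^ 2 + 2 * (u x / (L - x)) ^ 2 + 6 * (x * u x ^ 2)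
      - (a' x ^ 2 + 2 * (u' x / (L - x)) ^ 2 + 6 * (x * u' x ^ 2))) (Ioo 0 L) := q1.sub q2
    have jg2 := jg.const_mul 2
    have j2 := j.const_mul 2
    rw [Q, Q, Q, ← integral_sub q1 q2, ← integral_add q12 q3, ← integral_const_mul,
      ← integral_const_mul, ← integral_add jg2 j2]
    apply int_congr
    intro x hx
    have hs : 0 < L - x := sub_pos.2 hx.2
    simp only [gf]
    field_simp
    ring
  rw [ftc] at e
  linarith

lemma Q_nonneg {u a : ℝ → ℝ} : 0 ≤ Q L u a := by
  apply int_nonneg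
  intro x hx
  have := hx.1
  positivity

lemma Sol.Qcont (S : Sol L T u a b c) (hL : 0 < L) (hT : 0 < T) :
    ContinuousOn (fun t => Q L (u t) (a t)) (Icc 0 T) := by
  obtain ⟨G, hG⟩ := S.gbound hL hT
  have key : ∀ t ∈ Icc 0 T, ∀ σ ∈ Icc 0 T, Q L (u t) (a t) - Q L (u σ) (a σ) ≤
      2 * G * ∫ x in Ioo 0 L, |u t x - u σ x| := by
    intro t ht σ hσ
    have h := S.d3 t ht
    have k := S.d3 σ hσ
    have D := h.sub k
    rw [Q_diff hL h k]
    have h0 := Q_nonneg (L := L) (u := fun x => u t x - u σ x) (a := fun x => a t x - a σ x)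
    have h1 : ∫ x in Ioo 0 L, gf L (u t) (b t) x * (u t x - u σ x) ≤
        ∫ x in Ioo 0 L, G * |u t x - u σ x| := by
      apply int_mono (h.cbg.mul (CB.icc D.cu)).int (ic (continuousOn_const.mul D.cu.abs))
      intro x hx
      refine (le_abs_self _).trans ?_
      rw [abs_mul]
      exact mul_le_mul_of_nonneg_right (hG t ht x hx) (abs_nonneg _)
    rw [integral_const_mul] at h1
    linarith
  intro t ht
  have hc : ContinuousOn (fun σ => ∫ x in Ioo 0 L, |u t x - u σ x|) (Icc 0 T) := by
    apply contint (F := fun σ x => |u t x - u σ x|)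
    apply ContinuousOn.abs
    refine ContinuousOn.sub ?_ S.cont
    exact (S.d3 t ht).cu.comp continuousOn_snd (fun p hp => hp.2)
  have hl := ((hc t ht).tendsto.const_mul (2 * G))
  simp only [sub_self, abs_zero, integral_zero, mul_zero] at hl
  rw [ContinuousWithinAt, tendsto_iff_dist_tendsto_zero]
  refine squeeze_zero' (Eventually.of_forall fun _ => dist_nonneg) ?_ hl
  filter_upwards [self_mem_nhdsWithin] with σ hσ
  rw [Real.dist_eq, abs_le]
  have k1 := key t ht σ hσ
  have k2 := key σ hσ t ht
  simp_rw [abs_sub_comm (u σ _)] at k2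
  constructor <;> linarith

/-- the Lyapunov estimate -/
lemma Sol.Q_le (S : Sol L T u a b c) (hL : 0 < L) (hT : 0 < T) {t : ℝ} (ht : t ∈ Icc 0 T) :
    Q L (u t) (a t) ≤ Q L (u 0) (a 0) +
      (3 + 2 * L ^ 3 + 6 * L) * ∫ x in Ioo 0 L, u 0 x ^ 2 := by
  have hQc := S.Qcont hL hT
  have hE0 : 0 ≤ ∫ x in Ioo 0 L, u 0 x ^ 2 := int_nonneg (fun x _ => sq_nonneg _)
  set E := ∫ x in Ioo 0 L, u 0 x ^ 2 with hE
  set K := 3 + 2 * L ^ 3 + 6 * L with hK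
  have hK0 : 0 ≤ K := by positivity
  have hlt : ∀ t ∈ Ico 0 T, Q L (u t) (a t) ≤ Q L (u 0) (a 0) + K * E := by
    intro t ht
    by_contra! hcon
    have hin : ∀ τ ∈ Ioc 0 t, τ ∈ Ioo 0 T := fun τ hτ => ⟨hτ.1, hτ.2.trans_lt ht.2⟩
    have hin' : ∀ τ ∈ Ioc 0 t, τ ∈ Icc 0 T := fun τ hτ => Ioo_subset_Icc_self (hin τ hτ)
    have hQ0 := Q_nonneg (L := L) (u := u 0) (a := a 0)
    have res := dini ht.1 (ψ := fun τ => Q L (u τ) (a τ))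
      (ρ := fun τ => 2 * ∫ x in Ioo 0 L, gf L (u τ) (b τ) x * (- (a τ x + c τ x)))
      (Λ := fun _ => Q L (u t) (a t)) (Λ' := fun _ => 0)
      (hQc.mono (Icc_subset_Icc le_rfl ht.2.le)) (fun τ => hasDerivAt_const _ _) le_rfl
      (fun τ hτ r hr => by
        obtain ⟨M, hM⟩ := S.lip_ev hL (hin τ hτ)
        have h := S.d3 τ (hin' τ hτ)
        have hev : ∀ᶠ σ in 𝓝[<] τ, σ ∈ Icc 0 T := by
          filter_upwards [Ioo_mem_nhdsLT hτ.1] with σ hσ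
          exact ⟨hσ.1.le, (hσ.2.trans (hin τ hτ).2).le⟩
        refine rate (ψ := fun τ => Q L (u τ) (a τ)) (u := u) h.cbg (S.cac (hin' τ hτ)).neg ?_
          (hev.mono fun σ hσ => (S.d3 σ hσ).cu) h.cu (S.dt τ (hin τ hτ)) hM hr
        filter_upwards [hev] with σ hσ
        rw [Q_diff hL h (S.d3 σ hσ)]
        have h0 := Q_nonneg (L := L) (u := fun x => u τ x - u σ x) (a := fun x => a τ x - a σ x)
        linarith)
      (fun τ hτ he => by
        have h := (S.d3 τ (hin' τ hτ)).static hL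
        have h2 := S.L2_le hL hT (hin' τ hτ)
        have h3 := mul_le_mul_of_nonneg_left h2 hK0
        linarith)
    have : 0 ≤ K * E := mul_nonneg hK0 hE0
    linarith
  rcases ht.2.eq_or_lt with rfl | h
  · have := D3.lim_left hT hQc
    refine le_of_tendsto this ?_
    filter_upwards [Ioo_mem_nhdsLT hT] with σ hσ
    exact hlt σ ⟨hσ.1.le, hσ.2⟩
  · exact hlt t ⟨ht.1, h⟩

end KdV
namespace KdV

lemma hder {L : ℝ} (hL : 0 < L) {f : ℝ → ℝ} (hf : ContDiffOn ℝ 3 f (Icc 0 L)) {m : ℕ}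
    (hm : m < 3) : ∀ x ∈ Ioo 0 L,
    HasDerivAt (iteratedDerivWithin m f (Icc 0 L)) (iteratedDerivWithin (m + 1) f (Icc 0 L) x) x := by
  intro x hx
  have h := hf.differentiableOn_iteratedDerivWithin (m := m) (by exact_mod_cast hm)
    (uniqueDiffOn_Icc hL)
  rw [iteratedDerivWithin_succ]
  exact ((h x (Ioo_subset_Icc_self hx)).hasDerivWithinAt).hasDerivAt (Icc_mem_nhds hx.1 hx.2)

lemma hcon {L : ℝ} (hL : 0 < L) {f : ℝ → ℝ} (hf : ContDiffOn ℝ 3 f (Icc 0 L)) {m : ℕ}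
    (hm : m ≤ 3) : ContinuousOn (iteratedDerivWithin m f (Icc 0 L)) (Icc 0 L) :=
  hf.continuousOn_iteratedDerivWithin (by exact_mod_cast hm) (uniqueDiffOn_Icc hL)

lemma sol_of {L T : ℝ} (hL : 0 < L) (hT : 0 < T) {z : ℝ → ℝ → ℝ} (h : IsLinearKdVSol L T z) :
    Sol L T z (fun t => derivWithin (z t) (Icc 0 L))
      (fun t => iteratedDerivWithin 2 (z t) (Icc 0 L))
      (fun t => iteratedDerivWithin 3 (z t) (Icc 0 L)) := by
  obtain ⟨h1, h2, h3, h4, h5⟩ := h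
  have e1 : ∀ f : ℝ → ℝ, iteratedDerivWithin 1 f (Icc 0 L) = derivWithin f (Icc 0 L) := by
    intro f
    funext x
    rw [iteratedDerivWithin_one]
  refine ⟨?_, h3, ?_, ?_⟩
  · intro t ht
    have hf := h1 t ht
    refine ⟨hf.continuousOn, ?_, hcon hL hf (by norm_num), hcon hL hf (by norm_num), ?_, ?_,
      hder hL hf (by norm_num), (h5 t ht).1, (h5 t ht).2.1, (h5 t ht).2.2⟩
    · rw [← e1]
      exact hcon hL hf (by norm_num)
    · have := hder hL hf (m := 0) (by norm_num)
      rw [← e1]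
      simpa [iteratedDerivWithin_zero] using this
    · rw [← e1]
      exact hder hL hf (by norm_num)
  · intro t ht x hx
    have hd := ((h2 x (Ioo_subset_Icc_self hx)).differentiableOn (by norm_num)) t
      (Ioo_subset_Icc_self ht)
    refine (hd.hasDerivWithinAt.hasDerivAt (Icc_mem_nhds ht.1 ht.2)).congr_deriv ?_
    linarith [h4 t ht x hx]
  · intro x hx
    have hc := ((h2 x (Ioo_subset_Icc_self hx)).continuousOn_derivWithin
      (uniqueDiffOn_Icc hT) le_rfl).neg
    refine (hc.mono Ioo_subset_Icc_self).congr ?_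
    intro t ht
    simp only [Pi.neg_apply]
    linarith [h4 t ht x hx]

lemma H1norm_eq {L : ℝ} (hL : 0 < L) (f : ℝ → ℝ) : H1norm L f =
    √(∫ x in Ioo 0 L, (f x ^ 2 + derivWithin f (Icc 0 L) x ^ 2)) := by
  rw [H1norm, intervalIntegral.integral_of_le hL.le, integral_Ioc_eq_integral_Ioo]

end KdV

/-- there is a constant `C > 0` (independent of `T`) such that for every
initial datum `z₀ ∈ H³(0,L)` (here: `C³` on `[0,L]`) satisfying the boundary
conditions `z₀(0) = z₀(L) = z₀′(L) = 0`, every `T > 0` and every classical solution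
`z` of the linearized KdV system with `z(0,·) = z₀`, one has
`‖z(t,·)‖_{H₀¹(0,L)} ≤ C ‖z₀‖_{H₀¹(0,L)}` for all `t ∈ [0,T]`. -/
theorem linearKdV_H1_bound (L : ℝ) (hL : 0 < L) :
    ∃ C > 0, ∀ z₀ : ℝ → ℝ, ContDiffOn ℝ 3 z₀ (Icc (0:ℝ) L) →
      z₀ 0 = 0 → z₀ L = 0 → derivWithin z₀ (Icc (0:ℝ) L) L = 0 →
      ∀ T > 0, ∀ z : ℝ → ℝ → ℝ, IsLinearKdVSol L T z →
      (∀ x ∈ Icc (0:ℝ) L, z 0 x = z₀ x) →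
      ∀ t ∈ Icc (0:ℝ) T, H1norm L (z t) ≤ C * H1norm L z₀ := by
  refine ⟨√(10 + 12 * L + 2 * L ^ 3), by positivity, ?_⟩
  intro z₀ _ _ _ _ T hT z hz hz0 t ht
  have S := KdV.sol_of hL hT hz
  have h00 : (0:ℝ) ∈ Icc 0 T := ⟨le_rfl, hT.le⟩
  have e0 : H1norm L z₀ = H1norm L (z 0) := by
    rw [KdV.H1norm_eq hL, KdV.H1norm_eq hL]
    congr 1
    apply KdV.int_congr
    intro x hx
    rw [hz0 x (Ioo_subset_Icc_self hx),
      derivWithin_congr (fun y hy => hz0 y hy) (hz0 x (Ioo_subset_Icc_self hx))]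
  rw [e0, KdV.H1norm_eq hL, KdV.H1norm_eq hL, ← Real.sqrt_mul (by positivity)]
  apply Real.sqrt_le_sqrt
  have split : ∀ s ∈ Icc 0 T,
      ∫ x in Ioo 0 L, (z s x ^ 2 + derivWithin (z s) (Icc 0 L) x ^ 2) =
      (∫ x in Ioo 0 L, z s x ^ 2) + ∫ x in Ioo 0 L, derivWithin (z s) (Icc 0 L) x ^ 2 :=
    fun s hs => integral_add (KdV.ic ((S.d3 s hs).cu.pow 2)) (KdV.ic ((S.d3 s hs).ca.pow 2))
  rw [split t ht, split 0 h00]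
  have k1 := S.L2_le hL hT ht
  have k2 := S.Q_le hL hT ht
  have k3 := (S.d3 t ht).Q_ge
  have k4 := (S.d3 0 h00).Q_le hL
  have hE : 0 ≤ ∫ x in Ioo 0 L, z 0 x ^ 2 := KdV.int_nonneg (fun x _ => sq_nonneg _)
  have hA : 0 ≤ ∫ x in Ioo 0 L, derivWithin (z 0) (Icc 0 L) x ^ 2 :=
    KdV.int_nonneg (fun x _ => sq_nonneg _)
  set E := ∫ x in Ioo 0 L, z 0 x ^ 2
  set A := ∫ x in Ioo 0 L, derivWithin (z 0) (Icc 0 L) x ^ 2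
  have hLA : 0 ≤ (1 + 12 * L + 2 * L ^ 3) * A := by positivity
  nlinarith
end

section
/- Let L > 0 and T > 0. There exists a constant C > 0 such that for every z₀ ∈ H³(0,L) with z₀(0) = z₀(L) = z₀′(L) = 0 and every classical solution z of the linearized KdV system on [0,T] with z(0,·) = z₀, one has ‖z(t,·)‖_{H₀¹(0,L)} ≤ (C/√t) ‖z₀‖_{L²(0,L)} for all t ∈ (0,T]. -/
open Set Real MeasureTheory

theorem kdv_ftc {L : ℝ} (hL : 0 ≤ L) {F f : ℝ → ℝ} (hF : Continuous F) (hf : Continuous f)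
    (hd : ∀ x ∈ Ioo 0 L, HasDerivAt F (f x) x) : ∫ x in (0:ℝ)..L, f x = F L - F 0 :=
  intervalIntegral.integral_eq_sub_of_hasDerivAt_of_le hL hF.continuousOn hd
    (hf.intervalIntegrable _ _)

theorem kdv_mono {a b : ℝ} (hab : a ≤ b) {f g : ℝ → ℝ} (hf : Continuous f) (hg : Continuous g)
    (h : ∀ x ∈ Icc a b, f x ≤ g x) : ∫ x in a..b, f x ≤ ∫ x in a..b, g x :=
  intervalIntegral.integral_mono_on hab (hf.intervalIntegrable _ _) (hg.intervalIntegrable _ _) h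

theorem kdv_lin {a b : ℝ} {f g : ℝ → ℝ} (hf : Continuous f) (hg : Continuous g) (c d : ℝ) :
    ∫ x in a..b, (c * f x + d * g x) = c * (∫ x in a..b, f x) + d * ∫ x in a..b, g x := by
  rw [intervalIntegral.integral_add (Continuous.intervalIntegrable (by fun_prop) _ _)
    (Continuous.intervalIntegrable (by fun_prop) _ _)]
  simp

theorem kdv_le2 {a b : ℝ} (hab : a ≤ b) {h f g : ℝ → ℝ} (hh : Continuous h) (hf : Continuous f)
    (hg : Continuous g) (c d : ℝ) (H : ∀ x ∈ Icc a b, h x ≤ c * f x + d * g x) :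
    ∫ x in a..b, h x ≤ c * (∫ x in a..b, f x) + d * ∫ x in a..b, g x := by
  rw [← kdv_lin hf hg]
  exact kdv_mono hab hh (by fun_prop) H

theorem kdv_nonneg {a b : ℝ} (hab : a ≤ b) {f : ℝ → ℝ} (h : ∀ x, 0 ≤ f x) :
    0 ≤ ∫ x in a..b, f x := intervalIntegral.integral_nonneg_of_forall hab h

/-- A space profile with three derivatives and the KdV boundary conditions. -/
structure KSp (L : ℝ) (u p q r : ℝ → ℝ) : Prop where
  cu : Continuous u
  cp : Continuous p
  cq : Continuous q
  cr : Continuous r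
  du : ∀ x ∈ Ioo 0 L, HasDerivAt u (p x) x
  dp : ∀ x ∈ Ioo 0 L, HasDerivAt p (q x) x
  dq : ∀ x ∈ Ioo 0 L, HasDerivAt q (r x) x
  u0 : u 0 = 0
  uL : u L = 0
  pL : p L = 0

theorem KSp.sub {L : ℝ} {u p q r u' p' q' r' : ℝ → ℝ} (h : KSp L u p q r) (h' : KSp L u' p' q' r') :
    KSp L (fun x => u x - u' x) (fun x => p x - p' x) (fun x => q x - q' x) (fun x => r x - r' x) where
  cu := h.cu.sub h'.cu
  cp := h.cp.sub h'.cp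
  cq := h.cq.sub h'.cq
  cr := h.cr.sub h'.cr
  du x hx := (h.du x hx).sub (h'.du x hx)
  dp x hx := (h.dp x hx).sub (h'.dp x hx)
  dq x hx := (h.dq x hx).sub (h'.dq x hx)
  u0 := by simp [h.u0, h'.u0]
  uL := by simp [h.uL, h'.uL]
  pL := by simp [h.pL, h'.pL]

theorem KSp.smul {L : ℝ} {u p q r : ℝ → ℝ} (h : KSp L u p q r) (c : ℝ) :
    KSp L (fun x => c * u x) (fun x => c * p x) (fun x => c * q x) (fun x => c * r x) where
  cu := continuous_const.mul h.cu
  cp := continuous_const.mul h.cp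
  cq := continuous_const.mul h.cq
  cr := continuous_const.mul h.cr
  du x hx := (h.du x hx).const_mul c
  dp x hx := (h.dp x hx).const_mul c
  dq x hx := (h.dq x hx).const_mul c
  u0 := by simp [h.u0]
  uL := by simp [h.uL]
  pL := by simp [h.pL]

theorem KSp.e1 {L : ℝ} (hL : 0 ≤ L) {u p q r : ℝ → ℝ} (h : KSp L u p q r) :
    0 ≤ ∫ x in (0:ℝ)..L, u x * (p x + r x) := by
  have cu := h.cu; have cp := h.cp; have cq := h.cq; have cr := h.cr
  rw [kdv_ftc hL (F := fun x => u x ^ 2 / 2 + u x * q x - p x ^ 2 / 2) (by fun_prop) (by fun_prop)]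
  · simp only [h.u0, h.uL, h.pL]
    have := sq_nonneg (p 0)
    linarith
  · intro x hx
    have a := h.du x hx; have b := h.dp x hx; have c := h.dq x hx
    refine ((((a.pow 2).div_const 2).add (a.mul c)).sub ((b.pow 2).div_const 2)).congr_deriv ?_
    simp; ring

theorem KSp.e2 {L : ℝ} (hL : 0 ≤ L) {u p q r : ℝ → ℝ} (h : KSp L u p q r) :
    ∫ x in (0:ℝ)..L, x * (u x * (p x + r x)) =
      -(1/2) * (∫ x in (0:ℝ)..L, u x ^ 2) + (3/2) * ∫ x in (0:ℝ)..L, p x ^ 2 := by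
  have cu := h.cu; have cp := h.cp; have cq := h.cq; have cr := h.cr
  have := kdv_ftc hL (F := fun x => x * (u x ^ 2 / 2 + u x * q x - p x ^ 2 / 2) - u x * p x)
    (f := fun x => x * (u x * (p x + r x)) - (-(1/2) * u x ^ 2 + (3/2) * p x ^ 2))
    (by fun_prop) (by fun_prop) (by
    intro x hx
    have a := h.du x hx; have b := h.dp x hx; have c := h.dq x hx
    refine (((hasDerivAt_id x).mul ((((a.pow 2).div_const 2).add (a.mul c)).sub
      ((b.pow 2).div_const 2))).sub (a.mul b)).congr_deriv ?_
    simp; ring)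
  rw [intervalIntegral.integral_sub (Continuous.intervalIntegrable (by fun_prop) _ _)
    (Continuous.intervalIntegrable (by fun_prop) _ _), kdv_lin (by fun_prop) (by fun_prop)] at this
  simp only [h.u0, h.uL, h.pL] at this
  linarith

theorem KSp.e3 {L : ℝ} (hL : 0 ≤ L) {u p q r g w : ℝ → ℝ} (h : KSp L u p q r)
    (hg : Continuous g) (hw : Continuous w) (hd : ∀ x ∈ Ioo 0 L, HasDerivAt g (w x) x)
    (g0 : g 0 = 0) (gL : g L = 0) :
    ∫ x in (0:ℝ)..L, (g x * r x + w x * q x) = 0 := by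
  have cu := h.cu; have cp := h.cp; have cq := h.cq; have cr := h.cr
  rw [kdv_ftc hL (F := fun x => g x * q x) (by fun_prop) (by fun_prop)]
  · simp [g0, gL]
  · intro x hx
    refine ((hd x hx).mul (h.dq x hx)).congr_deriv ?_
    ring

theorem KSp.e4 {L : ℝ} (hL : 0 ≤ L) {u p q r v w : ℝ → ℝ} (h : KSp L u p q r)
    (hv : Continuous v) (hw : Continuous w) (hd : ∀ x ∈ Ioo 0 L, HasDerivAt v (w x) x)
    (v0 : v 0 = 0) (vL : v L = 0) :
    ∫ x in (0:ℝ)..L, (w x * p x + v x * q x) = 0 := by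
  have cu := h.cu; have cp := h.cp; have cq := h.cq; have cr := h.cr
  rw [kdv_ftc hL (F := fun x => v x * p x) (by fun_prop) (by fun_prop)]
  · simp [v0, vL]
  · intro x hx
    exact (hd x hx).mul (h.dp x hx)

theorem kdv_young (a b m : ℝ) (hm : 0 < m) : 2 * a * b ≤ m⁻¹ * a ^ 2 + m * b ^ 2 := by
  have : m⁻¹ * a ^ 2 + m * b ^ 2 - 2 * a * b = m⁻¹ * (a - m * b) ^ 2 := by field_simp; ring
  have : 0 ≤ m⁻¹ * (a - m * b) ^ 2 := by positivity
  linarith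

theorem KSp.interp {L : ℝ} (hL : 0 < L) {u p q r : ℝ → ℝ} (h : KSp L u p q r) (μ : ℝ) (hμ : 0 < μ)
    (hμL : μ ≤ L / 8) :
    ∫ x in (0:ℝ)..L, q x ^ 2 ≤ 6 * μ ^ 2 * (∫ x in (0:ℝ)..L, r x ^ 2)
      + 4 / μ ^ 2 * ∫ x in (0:ℝ)..L, p x ^ 2 := by
  have cu := h.cu; have cp := h.cp; have cq := h.cq; have cr := h.cr
  set P := ∫ x in (0:ℝ)..L, p x ^ 2
  set Q := ∫ x in (0:ℝ)..L, q x ^ 2 with hQ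
  set R := ∫ x in (0:ℝ)..L, r x ^ 2
  have hP0 : 0 ≤ P := kdv_nonneg hL.le fun x => sq_nonneg _
  have hQ0 : 0 ≤ Q := kdv_nonneg hL.le fun x => sq_nonneg _
  have hR0 : 0 ≤ R := kdv_nonneg hL.le fun x => sq_nonneg _
  have I1 := kdv_ftc hL.le (F := fun x => p x * q x)
    (f := fun x => q x * q x + p x * r x) (by fun_prop) (by fun_prop)
    (fun x hx => (h.dp x hx).mul (h.dq x hx))
  have I2 := kdv_ftc hL.le (F := fun x => -(p x * p x))
    (f := fun x => -(q x * p x + p x * q x)) (by fun_prop) (by fun_prop)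
    (fun x hx => ((h.dp x hx).mul (h.dp x hx)).neg)
  have I3 := kdv_ftc hL.le (F := fun x => (x - L) * (q x * q x))
    (f := fun x => 1 * (q x * q x) + (x - L) * (r x * q x + q x * r x)) (by fun_prop) (by fun_prop)
    (fun x hx => ((hasDerivAt_id x).sub_const L).mul ((h.dq x hx).mul (h.dq x hx)))
  simp only [h.pL] at I1 I2
  have J1 : Q ≤ 1 * (∫ x in (0:ℝ)..L, (q x * q x + p x * r x)) +
      1 * ∫ x in (0:ℝ)..L, (((2 * μ ^ 2)⁻¹) * p x ^ 2 + (μ ^ 2 / 2) * r x ^ 2) := by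
    apply kdv_le2 hL.le (by fun_prop) (by fun_prop) (by fun_prop)
    intro x hx
    have := kdv_young (-p x) (r x) (μ ^ 2) (by positivity)
    have e : (2 * μ ^ 2)⁻¹ = (μ ^ 2)⁻¹ / 2 := by field_simp
    rw [e]
    nlinarith
  rw [kdv_lin (by fun_prop) (by fun_prop), I1] at J1
  have J2 : ∫ x in (0:ℝ)..L, -(q x * p x + p x * q x) ≤ (μ / 4)⁻¹ * P + (μ / 4) * Q := by
    apply kdv_le2 hL.le (by fun_prop) (by fun_prop) (by fun_prop)
    intro x hx
    have := kdv_young (-p x) (q x) (μ / 4) (by positivity)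
    nlinarith
  rw [I2] at J2
  have J3 : ∫ x in (0:ℝ)..L, (1 * (q x * q x) + (x - L) * (r x * q x + q x * r x)) ≤
      (1 + L * (8 * μ)⁻¹) * Q + (L * (8 * μ)) * R := by
    apply kdv_le2 hL.le (by fun_prop) (by fun_prop) (by fun_prop)
    intro x hx
    have h1 := kdv_young (-q x) (r x) (8 * μ) (by positivity)
    have h2 : 0 ≤ L - x := by linarith [hx.2]
    have h3 : L - x ≤ L := by linarith [hx.1]
    have h4 : 0 ≤ (8 * μ)⁻¹ * q x ^ 2 + 8 * μ * r x ^ 2 := by positivity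
    have h5 := mul_le_mul_of_nonneg_left h1 h2
    have h6 := mul_le_mul_of_nonneg_right h3 h4
    nlinarith
  rw [I3] at J3
  have h8 : (-p 0) * q 0 * 2 ≤ μ⁻¹ * p 0 ^ 2 + μ * q 0 ^ 2 := by
    have := kdv_young (-p 0) (q 0) μ hμ
    nlinarith
  have h9 : p 0 ^ 2 ≤ 4 * μ⁻¹ * P + μ / 4 * Q := by
    have : (μ / 4)⁻¹ = 4 * μ⁻¹ := by field_simp
    rw [this] at J2; nlinarith
  have h10 : μ * q 0 ^ 2 ≤ (1/4) * Q + 8 * μ ^ 2 * R := by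
    have h11 : L * q 0 ^ 2 ≤ (1 + L * (8 * μ)⁻¹) * Q + (L * (8 * μ)) * R := by nlinarith
    have h12 : μ * (L * q 0 ^ 2) ≤ (μ + L / 8) * Q + 8 * L * μ ^ 2 * R := by
      have := mul_le_mul_of_nonneg_left h11 hμ.le
      have e : μ * ((1 + L * (8 * μ)⁻¹) * Q + L * (8 * μ) * R) = (μ + L / 8) * Q + 8 * L * μ ^ 2 * R := by
        field_simp
      linarith
    have h13 : (μ + L / 8) * Q ≤ (L / 4) * Q := by
      apply mul_le_mul_of_nonneg_right _ hQ0; linarith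
    have : L * (μ * q 0 ^ 2) ≤ L * ((1/4) * Q + 8 * μ ^ 2 * R) := by linarith
    exact le_of_mul_le_mul_left this hL
  have h14 : μ⁻¹ * p 0 ^ 2 ≤ 4 / μ ^ 2 * P + Q / 4 := by
    have := mul_le_mul_of_nonneg_left h9 (inv_nonneg.2 hμ.le)
    have e : μ⁻¹ * (4 * μ⁻¹ * P + μ / 4 * Q) = 4 / μ ^ 2 * P + Q / 4 := by field_simp
    linarith
  have e : (2 * μ ^ 2)⁻¹ = (1 / μ ^ 2) / 2 := by field_simp
  have e2 : 4 / μ ^ 2 = 4 * (1 / μ ^ 2) := by ring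
  rw [e] at J1
  rw [e2] at h14 ⊢
  have h15 : 0 ≤ 1 / μ ^ 2 * P := by positivity
  have h16 : 0 ≤ μ ^ 2 * R := by positivity
  nlinarith


theorem kdv_swap {f : ℝ → ℝ → ℝ} (hf : Continuous (Function.uncurry f)) {a b c d : ℝ}
    (hab : a ≤ b) (hcd : c ≤ d) :
    ∫ x in a..b, ∫ y in c..d, f x y = ∫ y in c..d, ∫ x in a..b, f x y := by
  simp only [intervalIntegral.integral_of_le hab, intervalIntegral.integral_of_le hcd]
  refine integral_integral_swap ?_
  rw [Measure.prod_restrict]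
  exact (hf.continuousOn.integrableOn_compact (isCompact_Icc.prod isCompact_Icc)).mono_set
    (prod_mono Ioc_subset_Icc_self Ioc_subset_Icc_self)

theorem kdv_time {F G : ℝ → ℝ → ℝ} (hG : Continuous (Function.uncurry G))
    (hF : ∀ t, Continuous (F t))
    (hd : ∀ t x, HasDerivAt (fun s => F s x) (G t x) t) {L : ℝ} (hL : 0 ≤ L) {s t : ℝ} (hst : s ≤ t) :
    (∫ x in (0:ℝ)..L, F t x) - (∫ x in (0:ℝ)..L, F s x) =
      ∫ τ in s..t, ∫ x in (0:ℝ)..L, G τ x := by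
  rw [kdv_swap hG hst hL, ← intervalIntegral.integral_sub ((hF t).intervalIntegrable _ _)
    ((hF s).intervalIntegrable _ _)]
  refine intervalIntegral.integral_congr fun x hx => ?_
  rw [intervalIntegral.integral_eq_sub_of_hasDerivAt (fun τ _ => hd τ x)]
  exact Continuous.intervalIntegrable (by fun_prop) _ _

structure KNice (L a b : ℝ) (u p q r g : ℝ → ℝ → ℝ) : Prop where
  cu : Continuous (Function.uncurry u)
  cp : Continuous (Function.uncurry p)
  cq : Continuous (Function.uncurry q)
  cr : Continuous (Function.uncurry r)
  cg : Continuous (Function.uncurry g)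
  sp : ∀ t ∈ Icc a b, KSp L (u t) (p t) (q t) (r t)
  dt : ∀ t x, HasDerivAt (fun s => u s x) (g t x) t
  eq : ∀ t ∈ Icc a b, ∀ x ∈ Icc 0 L, g t x = -(p t x + r t x)

theorem KNice.mono_int {L a b a' b' : ℝ} {u p q r g : ℝ → ℝ → ℝ} (h : KNice L a b u p q r g)
    (ha : a ≤ a') (hb : b' ≤ b) : KNice L a' b' u p q r g :=
  { h with
    sp := fun t ht => h.sp t ⟨ha.trans ht.1, ht.2.trans hb⟩
    eq := fun t ht => h.eq t ⟨ha.trans ht.1, ht.2.trans hb⟩ }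

theorem KNice.energy {L a b : ℝ} (hL : 0 ≤ L) {u p q r g : ℝ → ℝ → ℝ} (h : KNice L a b u p q r g)
    {s t : ℝ} (hs : a ≤ s) (hst : s ≤ t) (ht : t ≤ b) :
    ∫ x in (0:ℝ)..L, u t x ^ 2 ≤ ∫ x in (0:ℝ)..L, u s x ^ 2 := by
  have cu := h.cu; have cp := h.cp; have cq := h.cq; have cr := h.cr; have cg := h.cg
  have := kdv_time (F := fun t x => u t x ^ 2) (G := fun t x => 2 * (u t x * g t x))
    (by fun_prop) (by fun_prop) (fun t x => ((h.dt t x).pow 2).congr_deriv (by simp; ring)) hL hst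
  have h2 : ∫ τ in s..t, ∫ x in (0:ℝ)..L, 2 * (u τ x * g τ x) ≤ 0 := by
    rw [← neg_nonneg, ← intervalIntegral.integral_neg]
    refine intervalIntegral.integral_nonneg hst fun τ hτ => ?_
    have hτ' : τ ∈ Icc a b := ⟨hs.trans hτ.1, hτ.2.trans ht⟩
    have e := (h.sp τ hτ').e1 hL
    rw [← intervalIntegral.integral_neg]
    have e' : ∫ x in (0:ℝ)..L, -(2 * (u τ x * g τ x)) =
        2 * ∫ x in (0:ℝ)..L, (u τ x * (p τ x + r τ x)) := by
      rw [← intervalIntegral.integral_const_mul]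
      refine intervalIntegral.integral_congr fun x hx => ?_
      rw [uIcc_of_le hL] at hx
      simp only [h.eq τ hτ' x hx]; ring
    rw [e']; linarith
  linarith

theorem KNice.kato {L a b : ℝ} (hL : 0 ≤ L) {u p q r g : ℝ → ℝ → ℝ} (h : KNice L a b u p q r g)
    {s t : ℝ} (hs : a ≤ s) (hst : s ≤ t) (ht : t ≤ b) :
    ∫ τ in s..t, ∫ x in (0:ℝ)..L, p τ x ^ 2 ≤ (L + (t - s)) * ∫ x in (0:ℝ)..L, u s x ^ 2 := by
  have cu := h.cu; have cp := h.cp; have cq := h.cq; have cr := h.cr; have cg := h.cg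
  have h1 := kdv_time (F := fun t x => x * u t x ^ 2) (G := fun t x => x * (2 * (u t x * g t x)))
    (by fun_prop) (by fun_prop)
    (fun t x => (((h.dt t x).pow 2).const_mul x).congr_deriv (by push_cast; ring)) hL hst
  have h2 : ∫ τ in s..t, ∫ x in (0:ℝ)..L, x * (2 * (u τ x * g τ x)) =
      ∫ τ in s..t, (1 * (∫ x in (0:ℝ)..L, u τ x ^ 2) + (-3) * ∫ x in (0:ℝ)..L, p τ x ^ 2) := by
    refine intervalIntegral.integral_congr fun τ hτ => ?_
    rw [uIcc_of_le hst] at hτ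
    have hτ' : τ ∈ Icc a b := ⟨hs.trans hτ.1, hτ.2.trans ht⟩
    have e := (h.sp τ hτ').e2 hL
    have e' : ∫ x in (0:ℝ)..L, x * (2 * (u τ x * g τ x)) =
        (-2) * ∫ x in (0:ℝ)..L, x * (u τ x * (p τ x + r τ x)) := by
      rw [← intervalIntegral.integral_const_mul]
      refine intervalIntegral.integral_congr fun x hx => ?_
      rw [uIcc_of_le hL] at hx
      simp only [h.eq τ hτ' x hx]; ring
    rw [e', e]; ring
  rw [kdv_lin (by fun_prop) (by fun_prop)] at h2
  have h3 : ∫ τ in s..t, (∫ x in (0:ℝ)..L, u τ x ^ 2) ≤ ∫ τ in s..t, (∫ x in (0:ℝ)..L, u s x ^ 2) :=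
    kdv_mono hst (by fun_prop) (by fun_prop)
      fun τ hτ => h.energy hL hs hτ.1 (hτ.2.trans ht)
  rw [intervalIntegral.integral_const, smul_eq_mul] at h3
  have h4 : ∫ x in (0:ℝ)..L, x * u s x ^ 2 ≤ L * ∫ x in (0:ℝ)..L, u s x ^ 2 := by
    rw [← intervalIntegral.integral_const_mul]
    exact kdv_mono hL (by fun_prop) (by fun_prop)
      fun x hx => mul_le_mul_of_nonneg_right hx.2 (sq_nonneg _)
  have h5 : 0 ≤ ∫ x in (0:ℝ)..L, x * u t x ^ 2 :=
    intervalIntegral.integral_nonneg hL fun x hx => mul_nonneg hx.1 (sq_nonneg _)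
  have h6 : 0 ≤ ∫ τ in s..t, ∫ x in (0:ℝ)..L, p τ x ^ 2 :=
    kdv_nonneg hst fun τ => kdv_nonneg hL fun x => sq_nonneg _
  nlinarith

theorem KNice.step {L T b : ℝ} (hL : 0 < L) (hbT : b ≤ T) {u p q r g w1 w2 w3 w4 : ℝ → ℝ → ℝ}
    (h : KNice L 0 b u p q r g) (hg : KNice L 0 b g w1 w2 w3 w4) {t : ℝ} (ht : t ∈ Ioc 0 b)
    {η : ℝ} (hη : 0 < η) (hηL : η ≤ L ^ 2 / 4) :
    t / 2 * (∫ x in (0:ℝ)..L, g t x ^ 2) ≤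
      (3 + 192 / η ^ 2) * ((L + T) * ∫ x in (0:ℝ)..L, u 0 x ^ 2)
        + 2 * η * ((L + T) * ∫ x in (0:ℝ)..L, g (t / 2) x ^ 2) := by
  have cu := h.cu; have cp := h.cp; have cq := h.cq; have cr := h.cr; have cg := h.cg
  have cw := hg.cp
  obtain ⟨ht0, htb⟩ := ht
  have h12 : t / 2 ≤ t := by linarith
  set A := ∫ x in (0:ℝ)..L, u 0 x ^ 2
  set a := ∫ τ in (t/2)..t, ∫ x in (0:ℝ)..L, p τ x ^ 2 with ha
  set bb := ∫ τ in (t/2)..t, ∫ x in (0:ℝ)..L, q τ x ^ 2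
  set c := ∫ τ in (t/2)..t, ∫ x in (0:ℝ)..L, r τ x ^ 2
  set d := ∫ τ in (t/2)..t, ∫ x in (0:ℝ)..L, g τ x ^ 2
  set e := ∫ τ in (t/2)..t, ∫ x in (0:ℝ)..L, w1 τ x ^ 2
  have hA0 : 0 ≤ A := kdv_nonneg hL.le fun x => sq_nonneg _
  have hG0 : 0 ≤ ∫ x in (0:ℝ)..L, g (t/2) x ^ 2 := kdv_nonneg hL.le fun x => sq_nonneg _
  have ha0 : 0 ≤ a := kdv_nonneg h12 fun τ => kdv_nonneg hL.le fun x => sq_nonneg _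
  have Ha : a ≤ (L + T) * A := by
    have k := h.kato hL.le (s := t/2) (t := t) (by linarith) h12 htb
    have k2 := h.energy hL.le (s := 0) (t := t/2) le_rfl (by linarith) (by linarith)
    refine k.trans (mul_le_mul (by linarith) k2 (kdv_nonneg hL.le fun x => sq_nonneg _) (by linarith))
  have He : e ≤ (L + T) * ∫ x in (0:ℝ)..L, g (t/2) x ^ 2 := by
    have k := hg.kato hL.le (s := t/2) (t := t) (by linarith) h12 htb
    exact k.trans (mul_le_mul_of_nonneg_right (by linarith) hG0)
  have Hd : t / 2 * (∫ x in (0:ℝ)..L, g t x ^ 2) ≤ d := by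
    have : ∫ τ in (t/2)..t, (∫ x in (0:ℝ)..L, g t x ^ 2) ≤ d :=
      kdv_mono h12 (by fun_prop) (by fun_prop)
        fun τ hτ => hg.energy hL.le (by linarith [hτ.1]) hτ.2 htb
    rw [intervalIntegral.integral_const, smul_eq_mul] at this
    linarith
  have Hc : c ≤ 2 * d + 2 * a := by
    apply kdv_le2 h12 (by fun_prop) (by fun_prop) (by fun_prop)
    intro τ hτ
    apply kdv_le2 hL.le (by fun_prop) (by fun_prop) (by fun_prop)
    intro x hx
    have := h.eq τ ⟨by linarith [hτ.1], hτ.2.trans htb⟩ x hx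
    have e : r τ x = - g τ x - p τ x := by linarith
    rw [e]
    nlinarith [sq_nonneg (g τ x - p τ x)]
  have Hb : bb ≤ η / 4 * c + 96 / η * a := by
    apply kdv_le2 h12 (by fun_prop) (by fun_prop) (by fun_prop)
    intro τ hτ
    have k := (h.sp τ ⟨by linarith [hτ.1], hτ.2.trans htb⟩).interp hL (Real.sqrt (η / 24))
      (by positivity) (Real.sqrt_le_iff.2 ⟨by positivity, by nlinarith⟩)
    rw [Real.sq_sqrt (by positivity)] at k
    have e1 : 6 * (η / 24) = η / 4 := by ring
    have e2 : 4 / (η / 24) = 96 / η := by field_simp; norm_num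
    rwa [e1, e2] at k
  have Hd2 : d ≤ 1 * ((1/2) * d + (1/2) * a) + 1 * ((η / 2) * e + (η⁻¹ / 2) * bb) := by
    have k1 : (1/2) * d + (1/2) * a = ∫ τ in (t/2)..t, ((1/2) * (∫ x in (0:ℝ)..L, g τ x ^ 2) +
        (1/2) * ∫ x in (0:ℝ)..L, p τ x ^ 2) := (kdv_lin (by fun_prop) (by fun_prop) _ _).symm
    have k2 : (η/2) * e + (η⁻¹/2) * bb = ∫ τ in (t/2)..t, ((η/2) * (∫ x in (0:ℝ)..L, w1 τ x ^ 2) +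
        (η⁻¹/2) * ∫ x in (0:ℝ)..L, q τ x ^ 2) := (kdv_lin (by fun_prop) (by fun_prop) _ _).symm
    rw [k1, k2]
    apply kdv_le2 h12 (by fun_prop) (by fun_prop) (by fun_prop)
    intro τ hτ
    have hτ' : τ ∈ Icc 0 b := ⟨by linarith [hτ.1], hτ.2.trans htb⟩
    have k3 := (h.sp τ hτ').e3 hL.le (hg.sp τ hτ').cu (hg.sp τ hτ').cp (hg.sp τ hτ').du
      (hg.sp τ hτ').u0 (hg.sp τ hτ').uL
    rw [← kdv_lin (by fun_prop) (by fun_prop), ← kdv_lin (by fun_prop) (by fun_prop)]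
    have k4 : ∫ x in (0:ℝ)..L, g τ x ^ 2 = ∫ x in (0:ℝ)..L,
        (1 * (-(g τ x * p τ x) + w1 τ x * q τ x) + (-1) * (g τ x * r τ x + w1 τ x * q τ x)) := by
      refine intervalIntegral.integral_congr fun x hx => ?_
      rw [uIcc_of_le hL.le] at hx
      have := h.eq τ hτ' x hx
      have e : r τ x = - g τ x - p τ x := by linarith
      simp only [e]; ring
    rw [k4, kdv_lin (by fun_prop) (by fun_prop), k3, mul_zero, add_zero, one_mul]
    apply kdv_le2 hL.le (by fun_prop) (by fun_prop) (by fun_prop)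
    intro x hx
    have y := kdv_young (q τ x) (w1 τ x) η hη
    nlinarith [sq_nonneg (g τ x + p τ x)]
  have K1 : η⁻¹ * bb ≤ (1/2) * d + (1/2) * a + 96 / η ^ 2 * a := by
    have := mul_le_mul_of_nonneg_left (Hb.trans (by gcongr : _ ≤ η / 4 * (2 * d + 2 * a) + 96 / η * a))
      (inv_nonneg.2 hη.le)
    refine this.trans (le_of_eq ?_)
    field_simp
    ring
  have K2 : 192 / η ^ 2 * a = 2 * (96 / η ^ 2 * a) := by ring
  have K3 : d ≤ (3 + 192 / η ^ 2) * a + 2 * η * e := by nlinarith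
  refine Hd.trans (K3.trans ?_)
  gcongr

theorem KNice.smoothing {L T : ℝ} (hL : 0 < L) (hT : 0 < T) : ∃ C : ℝ, 0 < C ∧ ∀ b ∈ Ioc 0 T,
    ∀ u p q r g w1 w2 w3 w4 : ℝ → ℝ → ℝ, KNice L 0 b u p q r g → KNice L 0 b g w1 w2 w3 w4 →
    ∀ t ∈ Ioc 0 b, ∫ x in (0:ℝ)..L, p t x ^ 2 ≤ C / t * ∫ x in (0:ℝ)..L, u 0 x ^ 2 := by
  set K := L + T with hK
  have hK0 : 0 < K := by positivity
  obtain ⟨κ, hκ0, hκ1, hκ2, hκ3⟩ : ∃ κ : ℝ, 0 < κ ∧ κ * T ≤ L ^ 2 / 64 ∧ κ * (64 * K) ≤ 1 ∧ κ * T ≤ 1/4 := by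
    refine ⟨min (L ^ 2 / 64 / T) (min (1 / (64 * K)) (1/4 / T)), by positivity, ?_, ?_, ?_⟩
    · rw [← le_div_iff₀ hT]; exact min_le_left _ _
    · rw [← le_div_iff₀ (by positivity)]; exact (min_le_right _ _).trans (min_le_left _ _)
    · rw [← le_div_iff₀ hT]; exact (min_le_right _ _).trans (min_le_right _ _)
  set C1 := 2 * (6 * T ^ 2 * K + 384 * K / κ ^ 2) with hC1
  refine ⟨1.5 * κ ^ 2 * C1 + 8 / κ, by positivity, ?_⟩
  intro b hb u p q r g w1 w2 w3 w4 h hg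
  have cu := h.cu; have cp := h.cp; have cq := h.cq; have cr := h.cr; have cg := h.cg
  set A := ∫ x in (0:ℝ)..L, u 0 x ^ 2
  have hA0 : 0 ≤ A := kdv_nonneg hL.le fun x => sq_nonneg _
  have hY0 : ∀ t, 0 ≤ ∫ x in (0:ℝ)..L, g t x ^ 2 := fun t => kdv_nonneg hL.le fun x => sq_nonneg _
  have main : ∀ t ∈ Ioc 0 b, t ^ 3 * (∫ x in (0:ℝ)..L, g t x ^ 2) ≤ C1 * A := by
    obtain ⟨m, hm, hmax⟩ := (isCompact_Icc (a := (0:ℝ)) (b := b)).exists_isMaxOn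
      (nonempty_Icc.2 hb.1.le)
      (f := fun t => t ^ 3 * (∫ x in (0:ℝ)..L, g t x ^ 2)) (Continuous.continuousOn (by fun_prop))
    have hmm : m ^ 3 * (∫ x in (0:ℝ)..L, g m x ^ 2) ≤ C1 * A := by
      rcases hm.1.eq_or_lt with h0 | h0
      · rw [← h0]; simp; positivity
      have hmT : m ≤ T := hm.2.trans hb.2
      have st := h.step hL hb.2 hg (t := m) ⟨h0, hm.2⟩ (η := κ * m) (by positivity)
        (by nlinarith [mul_le_mul_of_nonneg_left hmT hκ0.le])
      have hx := hmax (show m / 2 ∈ Icc 0 b from ⟨by linarith, by linarith [hm.2]⟩)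
      simp only [mem_ofPred_eq] at hx
      rw [← hK] at st
      have s2 := mul_le_mul_of_nonneg_left st (show 0 ≤ 2 * m ^ 2 by positivity)
      set Ym := ∫ x in (0:ℝ)..L, g m x ^ 2
      set Yh := ∫ x in (0:ℝ)..L, g (m/2) x ^ 2
      have e1 : 2 * m ^ 2 * ((3 + 192 / (κ * m) ^ 2) * (K * A) + 2 * (κ * m) * (K * Yh)) =
        6 * m ^ 2 * K * A + 384 * K / κ ^ 2 * A + 32 * κ * K * ((m/2) ^ 3 * Yh) := by
        field_simp; ring
      have e2 : 6 * m ^ 2 * K * A ≤ 6 * T ^ 2 * K * A := by gcongr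
      have e3 : 32 * κ * K * ((m/2) ^ 3 * Yh) ≤ (1/2) * (m ^ 3 * Ym) := by
        apply mul_le_mul (by linarith) hx (mul_nonneg (by positivity) (hY0 _)) (by norm_num)
      have e4 : 2 * m ^ 2 * (m / 2 * Ym) = m ^ 3 * Ym := by ring
      rw [hC1]
      nlinarith
    intro t ht
    exact (hmax (Ioc_subset_Icc_self ht)).trans hmm
  intro t ht
  have ht0 := ht.1
  have htT : t ≤ T := ht.2.trans hb.2
  have ht' := Ioc_subset_Icc_self ht
  have sp := h.sp t ht'
  set P := ∫ x in (0:ℝ)..L, p t x ^ 2 with hP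
  set Q := ∫ x in (0:ℝ)..L, q t x ^ 2
  set R := ∫ x in (0:ℝ)..L, r t x ^ 2
  set Y := ∫ x in (0:ℝ)..L, g t x ^ 2
  have hP0 : 0 ≤ P := kdv_nonneg hL.le fun x => sq_nonneg _
  have hY := main t ht
  have hU := h.energy hL.le (s := 0) (t := t) le_rfl ht0.le ht.2
  have hR : R ≤ 2 * Y + 2 * P := by
    apply kdv_le2 hL.le (by fun_prop) (by fun_prop) (by fun_prop)
    intro x hx
    have := h.eq t ht' x hx
    have e : r t x = - g t x - p t x := by linarith
    rw [e]
    nlinarith [sq_nonneg (g t x - p t x)]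
  set ν := κ * t with hν
  have hν0 : 0 < ν := by positivity
  have hνT : ν ≤ κ * T := by rw [hν]; gcongr
  have hQ : Q ≤ 6 * ν * R + 4 / ν * P := by
    have k := sp.interp hL (Real.sqrt ν)
      (by positivity) (Real.sqrt_le_iff.2 ⟨by positivity, by nlinarith⟩)
    rwa [Real.sq_sqrt (by positivity)] at k
  have hPQ : P ≤ (ν / 16) * Q + (4 / ν) * ∫ x in (0:ℝ)..L, u t x ^ 2 := by
    have k := sp.e4 hL.le sp.cu sp.cp sp.du sp.u0 sp.uL
    have k2 : P = ∫ x in (0:ℝ)..L,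
        (1 * (p t x * p t x + u t x * q t x) + (-1) * (u t x * q t x)) := by
      refine intervalIntegral.integral_congr fun x hx => ?_
      ring
    rw [k2, kdv_lin (by fun_prop) (by fun_prop), k, mul_zero, zero_add,
      ← intervalIntegral.integral_const_mul]
    apply kdv_le2 hL.le (by fun_prop) (by fun_prop) (by fun_prop)
    intro x hx
    have y := kdv_young (- u t x) (q t x) (ν / 8) (by positivity)
    have e : (ν / 8)⁻¹ = 2 * (4 / ν) := by field_simp; norm_num
    rw [e] at y
    nlinarith
  have h1 : ν / 16 * Q ≤ ν / 16 * (6 * ν * (2 * Y + 2 * P) + 4 / ν * P) := by gcongr; exact hQ.trans (by gcongr)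
  have e1 : ν / 16 * (6 * ν * (2 * Y + 2 * P) + 4 / ν * P) = (3/4) * ν ^ 2 * Y + (3/4) * ν ^ 2 * P + P / 4 := by
    field_simp; ring
  have h2 : (3/4) * ν ^ 2 * P ≤ (1/4) * P := by
    apply mul_le_mul_of_nonneg_right _ hP0; nlinarith
  have h3 : 4 / ν * (∫ x in (0:ℝ)..L, u t x ^ 2) ≤ 4 / ν * A := by gcongr
  have h4 : P ≤ 1.5 * ν ^ 2 * Y + 8 / ν * A := by
    have : 8 / ν * A = 2 * (4 / ν * A) := by ring
    rw [this]; nlinarith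
  refine h4.trans ?_
  have h5 : 1.5 * ν ^ 2 * Y = 1.5 * κ ^ 2 * (t ^ 3 * Y) / t := by rw [hν]; field_simp
  rw [h5]
  have h6 : 1.5 * κ ^ 2 * (t ^ 3 * Y) / t ≤ 1.5 * κ ^ 2 * (C1 * A) / t := by gcongr
  refine (add_le_add_left h6 _).trans (le_of_eq ?_)
  rw [hν]; field_simp


noncomputable def kker (L x y : ℝ) : ℝ := (max (y - x) 0) ^ 2 / 2 - ((L - x) ^ 2 / L ^ 2) * (y ^ 2 / 2)
noncomputable def kker' (L x y : ℝ) : ℝ := max (y - x) 0 - ((L - x) ^ 2 / L ^ 2) * y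

theorem kker_cont (L x : ℝ) : Continuous (kker L x) := by unfold kker; fun_prop
theorem kker'_cont (L x : ℝ) : Continuous (kker' L x) := by unfold kker'; fun_prop

theorem kmax_int {L x : ℝ} (hx : x ∈ Icc 0 L) {φ : ℝ → ℝ} (hφ : Continuous φ) (h0 : φ 0 = 0) {f : ℝ → ℝ}
    (hf : Continuous f) :
    ∫ y in (0:ℝ)..L, φ (max (y - x) 0) * f y = ∫ y in x..L, φ (y - x) * f y := by
  rw [← intervalIntegral.integral_add_adjacent_intervals (b := x)
    (Continuous.intervalIntegrable (by fun_prop) _ _) (Continuous.intervalIntegrable (by fun_prop) _ _)]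
  have h1 : ∫ y in (0:ℝ)..x, φ (max (y - x) 0) * f y = ∫ y in (0:ℝ)..x, 0 := by
    refine intervalIntegral.integral_congr fun y hy => ?_
    rw [uIcc_of_le hx.1] at hy
    have : max (y - x) 0 = 0 := max_eq_right (by linarith [hy.2])
    simp [this, h0]
  have h2 : ∫ y in x..L, φ (max (y - x) 0) * f y = ∫ y in x..L, φ (y - x) * f y := by
    refine intervalIntegral.integral_congr fun y hy => ?_
    rw [uIcc_of_le hx.2] at hy
    have : max (y - x) 0 = y - x := max_eq_left (by linarith [hy.1])
    simp [this]
  rw [h1, h2]; simp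

theorem kker_split {L x : ℝ} (hx : x ∈ Icc 0 L) {f : ℝ → ℝ} (hf : Continuous f) :
    ∫ y in (0:ℝ)..L, kker L x y * f y = (∫ y in x..L, (y - x) ^ 2 / 2 * f y)
      - (L - x) ^ 2 / L ^ 2 * ∫ y in (0:ℝ)..L, y ^ 2 / 2 * f y := by
  rw [← kmax_int hx (φ := fun y => y ^ 2 / 2) (by fun_prop) (by simp) hf,
    ← intervalIntegral.integral_const_mul, ← intervalIntegral.integral_sub
    (Continuous.intervalIntegrable (by fun_prop) _ _) (Continuous.intervalIntegrable (by fun_prop) _ _)]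
  refine intervalIntegral.integral_congr fun y hy => ?_
  simp only [kker]; ring

theorem kker'_split {L x : ℝ} (hx : x ∈ Icc 0 L) {f : ℝ → ℝ} (hf : Continuous f) :
    ∫ y in (0:ℝ)..L, kker' L x y * f y = (∫ y in x..L, (y - x) * f y)
      - (L - x) ^ 2 / L ^ 2 * ∫ y in (0:ℝ)..L, y * f y := by
  rw [← kmax_int hx (φ := fun y => y) (by fun_prop) (by simp) hf,
    ← intervalIntegral.integral_const_mul, ← intervalIntegral.integral_sub
    (Continuous.intervalIntegrable (by fun_prop) _ _) (Continuous.intervalIntegrable (by fun_prop) _ _)]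
  refine intervalIntegral.integral_congr fun y hy => ?_
  simp only [kker']; ring

theorem KSp.green0 {L x : ℝ} (hx : x ∈ Icc 0 L) {u p q r : ℝ → ℝ} (h : KSp L u p q r) :
    (∫ y in x..L, (y - x) ^ 2 / 2 * (p y + r y)) + (∫ y in x..L, (y - x) * u y) =
      (L - x) ^ 2 / 2 * q L - u x := by
  have cu := h.cu; have cp := h.cp; have cq := h.cq; have cr := h.cr
  rw [← intervalIntegral.integral_add
    (Continuous.intervalIntegrable (by fun_prop) _ _) (Continuous.intervalIntegrable (by fun_prop) _ _)]
  rw [intervalIntegral.integral_eq_sub_of_hasDerivAt_of_le hx.2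
    (f := fun y => (y - x) ^ 2 / 2 * (q y + u y) - (y - x) * p y + u y)
    (Continuous.continuousOn (by fun_prop)) ?_ (Continuous.intervalIntegrable (by fun_prop) _ _)]
  · simp [h.uL, h.pL]
  · intro y hy
    have hy' : y ∈ Ioo 0 L := ⟨lt_of_le_of_lt hx.1 hy.1, hy.2⟩
    have a := h.du y hy'; have b := h.dp y hy'; have c := h.dq y hy'
    have e := (hasDerivAt_id y).sub_const x
    refine ((((e.pow 2).div_const 2).mul (c.add a)).sub (e.mul b)).add a |>.congr_deriv ?_
    simp; ring

theorem KSp.green {L x : ℝ} (hL : 0 < L) (hx : x ∈ Icc 0 L) {u p q r : ℝ → ℝ} (h : KSp L u p q r) :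
    ∫ y in (0:ℝ)..L, kker L x y * (p y + r y) = - u x - ∫ y in (0:ℝ)..L, kker' L x y * u y := by
  have g1 := h.green0 hx
  have g2 := h.green0 (x := 0) ⟨le_rfl, hL.le⟩
  have cp := h.cp; have cr := h.cr
  rw [kker_split hx (by fun_prop), kker'_split hx h.cu]
  simp only [sub_zero, h.u0] at g2
  have e : (L - x) ^ 2 / L ^ 2 * (∫ y in (0:ℝ)..L, y ^ 2 / 2 * (p y + r y)) =
    (L - x) ^ 2 / 2 * q L - (L - x) ^ 2 / L ^ 2 * (∫ y in (0:ℝ)..L, y * u y) := by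
    have : (∫ y in (0:ℝ)..L, y ^ 2 / 2 * (p y + r y)) = L ^ 2 / 2 * q L - (∫ y in (0:ℝ)..L, y * u y) := by
      linarith
    rw [this]; field_simp
  linarith

theorem kD0 {f : ℝ → ℝ} (hf : Continuous f) (L x : ℝ) :
    HasDerivAt (fun x => ∫ y in x..L, f y) (-f x) x :=
  intervalIntegral.integral_hasDerivAt_left (hf.intervalIntegrable _ _)
    (hf.stronglyMeasurableAtFilter _ _) hf.continuousAt

theorem kD1 {f : ℝ → ℝ} (hf : Continuous f) (L x : ℝ) :
    HasDerivAt (fun x => ∫ y in x..L, (y - x) * f y) (-∫ y in x..L, f y) x := by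
  have e : (fun x => ∫ y in x..L, (y - x) * f y) =
      fun x => (∫ y in x..L, y * f y) - x * ∫ y in x..L, f y := by
    funext x
    rw [← intervalIntegral.integral_const_mul, ← intervalIntegral.integral_sub
      (Continuous.intervalIntegrable (by fun_prop) _ _) (Continuous.intervalIntegrable (by fun_prop) _ _)]
    refine intervalIntegral.integral_congr fun y hy => ?_
    ring
  rw [e]
  refine ((kD0 (f := fun y => y * f y) (by fun_prop) L x).sub
    ((hasDerivAt_id x).mul (kD0 hf L x))).congr_deriv ?_
  simp

theorem kD2 {f : ℝ → ℝ} (hf : Continuous f) (L x : ℝ) :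
    HasDerivAt (fun x => ∫ y in x..L, (y - x) ^ 2 / 2 * f y) (-∫ y in x..L, (y - x) * f y) x := by
  have e : (fun x => ∫ y in x..L, (y - x) ^ 2 / 2 * f y) =
      fun x => (∫ y in x..L, (y - x) * (y * f y)) / 2 - x * (∫ y in x..L, (y - x) * f y) / 2 := by
    funext x
    rw [← intervalIntegral.integral_const_mul, ← sub_div, ← intervalIntegral.integral_sub
      (Continuous.intervalIntegrable (by fun_prop) _ _) (Continuous.intervalIntegrable (by fun_prop) _ _),
      ← intervalIntegral.integral_div]
    refine intervalIntegral.integral_congr fun y hy => ?_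
    ring
  rw [e]
  refine (((kD1 (f := fun y => y * f y) (by fun_prop) L x).div_const 2).sub
    (((hasDerivAt_id x).mul (kD1 hf L x)).div_const 2)).congr_deriv ?_
  have e2 : ∫ y in x..L, (y - x) * f y = (∫ y in x..L, y * f y) - x * ∫ y in x..L, f y := by
    rw [← intervalIntegral.integral_const_mul, ← intervalIntegral.integral_sub
      (Continuous.intervalIntegrable (by fun_prop) _ _) (Continuous.intervalIntegrable (by fun_prop) _ _)]
    refine intervalIntegral.integral_congr fun y hy => ?_
    ring
  simp [e2]; ring

structure KMild (L a b : ℝ) (z : ℝ → ℝ → ℝ) : Prop where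
  cz : Continuous (Function.uncurry z)
  z0 : ∀ t ∈ Icc a b, z t 0 = 0
  zL : ∀ t ∈ Icc a b, z t L = 0
  mild : ∀ s t, a ≤ s → s ≤ t → t ≤ b → ∀ x ∈ Icc 0 L,
    ∫ y in (0:ℝ)..L, kker L x y * (z t y - z s y) =
      ∫ τ in s..t, (z τ x + ∫ y in (0:ℝ)..L, kker' L x y * z τ y)

noncomputable def kavg (h : ℝ) (z : ℝ → ℝ → ℝ) (t x : ℝ) : ℝ := ∫ ρ in (0:ℝ)..1, z (t + h * ρ) x

theorem kavg_cont (h : ℝ) {z : ℝ → ℝ → ℝ} (hz : Continuous (Function.uncurry z)) :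
    Continuous (Function.uncurry (kavg h z)) := by
  have : Function.uncurry (kavg h z) = fun w : ℝ × ℝ => ∫ ρ in (0:ℝ)..1, z (w.1 + h * ρ) w.2 := rfl
  rw [this]
  fun_prop

theorem kavg_eq {h : ℝ} (hh : 0 < h) (z : ℝ → ℝ → ℝ) (t x : ℝ) :
    h * kavg h z t x = ∫ τ in t..(t + h), z τ x := by
  unfold kavg
  have := intervalIntegral.smul_integral_comp_add_mul (a := 0) (b := 1) (f := fun τ => z τ x) h t
  simpa using this

theorem kavg_dt {h : ℝ} (hh : 0 < h) {z : ℝ → ℝ → ℝ} (hz : Continuous (Function.uncurry z)) (t x : ℝ) :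
    HasDerivAt (fun s => kavg h z s x) (h⁻¹ * (z (t + h) x - z t x)) t := by
  have e : (fun s => kavg h z s x) = fun s => h⁻¹ * ((∫ τ in (0:ℝ)..(s + h), z τ x) - ∫ τ in (0:ℝ)..s, z τ x) := by
    funext s
    rw [intervalIntegral.integral_interval_sub_left (Continuous.intervalIntegrable (by fun_prop) _ _)
      (Continuous.intervalIntegrable (by fun_prop) _ _), ← kavg_eq hh]
    field_simp
  rw [e]
  have c : Continuous fun τ => z τ x := by fun_prop
  have d : ∀ s, HasDerivAt (fun s => ∫ τ in (0:ℝ)..s, z τ x) (z s x) s := fun s => c.integral_hasStrictDerivAt 0 s |>.hasDerivAt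
  exact (((d (t + h)).comp_add_const t h).sub (d t)).const_mul _

theorem KMild.avg {L a b h : ℝ} (hL : 0 < L) (hh : 0 < h) {z : ℝ → ℝ → ℝ} (H : KMild L a b z) :
    KMild L a (b - h) (kavg h z) where
  cz := kavg_cont h H.cz
  z0 t ht := by
    have : kavg h z t 0 = ∫ ρ in (0:ℝ)..1, 0 := by
      refine intervalIntegral.integral_congr fun ρ hρ => ?_
      rw [uIcc_of_le zero_le_one] at hρ
      exact H.z0 _ ⟨by nlinarith [ht.1, hρ.1], by nlinarith [ht.2, hρ.2]⟩
    simpa using this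
  zL t ht := by
    have : kavg h z t L = ∫ ρ in (0:ℝ)..1, 0 := by
      refine intervalIntegral.integral_congr fun ρ hρ => ?_
      rw [uIcc_of_le zero_le_one] at hρ
      exact H.zL _ ⟨by nlinarith [ht.1, hρ.1], by nlinarith [ht.2, hρ.2]⟩
    simpa using this
  mild s t hs hst ht x hx := by
    have cz := H.cz
    have ck := kker_cont L x
    have ck' := kker'_cont L x
    have e1 : ∫ y in (0:ℝ)..L, kker L x y * (kavg h z t y - kavg h z s y) =
        ∫ ρ in (0:ℝ)..1, ∫ y in (0:ℝ)..L, kker L x y * (z (t + h * ρ) y - z (s + h * ρ) y) := by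
      rw [kdv_swap (by fun_prop) zero_le_one hL.le]
      refine intervalIntegral.integral_congr fun y hy => ?_
      unfold kavg
      rw [← intervalIntegral.integral_sub
        (Continuous.intervalIntegrable (by fun_prop) _ _) (Continuous.intervalIntegrable (by fun_prop) _ _),
        ← intervalIntegral.integral_const_mul]
    rw [e1]
    have e2 : ∀ τ, kavg h z τ x + ∫ y in (0:ℝ)..L, kker' L x y * kavg h z τ y =
        ∫ ρ in (0:ℝ)..1, (z (τ + h * ρ) x + ∫ y in (0:ℝ)..L, kker' L x y * z (τ + h * ρ) y) := by
      intro τ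
      rw [intervalIntegral.integral_add
        (Continuous.intervalIntegrable (by fun_prop) _ _) (Continuous.intervalIntegrable (by fun_prop) _ _),
        kdv_swap (by fun_prop) zero_le_one hL.le]
      congr 1
      refine intervalIntegral.integral_congr fun y hy => ?_
      unfold kavg
      rw [← intervalIntegral.integral_const_mul]
    simp only [e2]
    rw [kdv_swap (by fun_prop) hst zero_le_one]
    refine intervalIntegral.integral_congr fun ρ hρ => ?_
    rw [uIcc_of_le zero_le_one] at hρ
    have hr0 : 0 ≤ h * ρ := mul_nonneg hh.le hρ.1
    have hr1 : h * ρ ≤ h := by nlinarith [hρ.2]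
    rw [H.mild (s + h * ρ) (t + h * ρ) (by linarith) (by linarith) (by linarith) x hx,
      intervalIntegral.integral_comp_add_right (fun τ => z τ x + ∫ y in (0:ℝ)..L, kker' L x y * z τ y)]

theorem KMild.nice {L a b h : ℝ} (hL : 0 < L) (hh : 0 < h) {z : ℝ → ℝ → ℝ} (H : KMild L a b z) :
    ∃ p q r, KNice L a (b - h) (kavg h z) p q r (fun t x => h⁻¹ * (z (t + h) x - z t x)) := by
  have cz := H.cz
  have cv := kavg_cont h cz
  set v := kavg h z with hv
  set D : ℝ → ℝ → ℝ := fun t x => h⁻¹ * (z (t + h) x - z t x) with hD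
  have cD : Continuous (Function.uncurry D) := by
    simp only [hD]; fun_prop
  set c : ℝ → ℝ := fun t => 2 * ((∫ y in (0:ℝ)..L, y ^ 2 / 2 * D t y) - ∫ y in (0:ℝ)..L, y * v t y) / L ^ 2 with hc
  have cc : Continuous c := by simp only [hc]; fun_prop
  have key : ∀ t ∈ Icc a (b - h), ∀ x ∈ Icc 0 L, v t x = (∫ y in x..L, (y - x) ^ 2 / 2 * D t y)
      - (∫ y in x..L, (y - x) * v t y) - (L - x) ^ 2 / 2 * c t := by
    intro t ht x hx
    have ck := kker_cont L x
    have ck' := kker'_cont L x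
    have m := H.mild t (t + h) ht.1 (by linarith) (by linarith [ht.2]) x hx
    have e1 : ∫ y in (0:ℝ)..L, kker L x y * (z (t + h) y - z t y) = h * ∫ y in (0:ℝ)..L, kker L x y * D t y := by
      rw [← intervalIntegral.integral_const_mul]
      refine intervalIntegral.integral_congr fun y hy => ?_
      simp only [hD]; field_simp
    rw [intervalIntegral.integral_add (Continuous.intervalIntegrable (by fun_prop) _ _)
      (Continuous.intervalIntegrable (by fun_prop) _ _), kdv_swap (by fun_prop) (by linarith) hL.le,
      ← kavg_eq hh, e1] at m
    have e2 : ∫ y in (0:ℝ)..L, ∫ τ in t..(t + h), kker' L x y * z τ y = h * ∫ y in (0:ℝ)..L, kker' L x y * v t y := by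
      rw [← intervalIntegral.integral_const_mul]
      refine intervalIntegral.integral_congr fun y hy => ?_
      rw [intervalIntegral.integral_const_mul, ← kavg_eq hh]; ring
    rw [e2, ← mul_add] at m
    have m2 := mul_left_cancel₀ hh.ne' m
    rw [kker_split hx (by fun_prop), kker'_split hx (by fun_prop)] at m2
    simp only [hc]
    have e3 : (L - x) ^ 2 / 2 * (2 * ((∫ y in (0:ℝ)..L, y ^ 2 / 2 * D t y) - ∫ y in (0:ℝ)..L, y * v t y) / L ^ 2)
      = (L - x) ^ 2 / L ^ 2 * (∫ y in (0:ℝ)..L, y ^ 2 / 2 * D t y) - (L - x) ^ 2 / L ^ 2 * ∫ y in (0:ℝ)..L, y * v t y := by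
      ring
    rw [e3]
    linarith
  set p : ℝ → ℝ → ℝ := fun t x => -(∫ y in x..L, (y - x) * D t y) + (∫ y in x..L, v t y) + (L - x) * c t with hp
  set q : ℝ → ℝ → ℝ := fun t x => (∫ y in x..L, D t y) - v t x - c t with hq
  have cp : Continuous (Function.uncurry p) := by
    simp only [hp, intervalIntegral.integral_symm L]; fun_prop
  have cq : Continuous (Function.uncurry q) := by
    simp only [hq, intervalIntegral.integral_symm L]; fun_prop
  have mA := H.avg hL hh
  have dv : ∀ t ∈ Icc a (b - h), ∀ x ∈ Ioo 0 L, HasDerivAt (v t) (p t x) x := by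
    intro t ht x hx
    have k := ((kD2 (f := D t) (by fun_prop) L x).sub (kD1 (f := v t) (by fun_prop) L x)).sub
      (((((hasDerivAt_id x).const_sub L).pow 2).div_const 2).mul_const (c t))
    refine (k.congr_deriv ?_).congr_of_eventuallyEq ?_
    · simp [hp]; ring
    · filter_upwards [Ioo_mem_nhds hx.1 hx.2] with w hw
      rw [key t ht w ⟨hw.1.le, hw.2.le⟩]
      simp
  refine ⟨p, q, fun t x => -D t x - p t x, cv, cp, cq, by fun_prop, cD, ?_, ?_, ?_⟩
  · intro t ht
    refine ⟨by fun_prop, by fun_prop, by fun_prop, by fun_prop, dv t ht, ?_, ?_, mA.z0 t ht, mA.zL t ht, by simp [hp]⟩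
    · intro x hx
      refine (((kD1 (f := D t) (by fun_prop) L x).neg.add (kD0 (f := v t) (by fun_prop) L x)).add
        (((hasDerivAt_id x).const_sub L).mul_const (c t))).congr_deriv ?_
      simp [hq]; ring
    · intro x hx
      refine (((kD0 (f := D t) (by fun_prop) L x).sub (dv t ht x hx)).sub_const (c t)).congr_deriv ?_
      simp
  · intro t x
    exact kavg_dt hh cz t x
  · intro t ht x hx
    ring


theorem kavg_zero (z : ℝ → ℝ → ℝ) (t x : ℝ) : kavg 0 z t x = z t x := by simp [kavg]

theorem kdv_lim {F G : ℝ → ℝ} (hF : ContinuousAt F 0) (hG : ContinuousAt G 0) {δ : ℝ} (hδ : 0 < δ)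
    (h : ∀ x ∈ Ioo 0 δ, F x ≤ G x) : F 0 ≤ G 0 := by
  refine le_of_tendsto_of_tendsto (b := nhdsWithin 0 (Ioi 0))
    (hF.tendsto.mono_left nhdsWithin_le_nhds) (hG.tendsto.mono_left nhdsWithin_le_nhds) ?_
  filter_upwards [Ioo_mem_nhdsGT hδ] with x hx using h x hx

theorem KNice.gap {L a b : ℝ} (hL : 0 < L) (hab : a ≤ b) {u p q r g : ℝ → ℝ → ℝ}
    (h : KNice L a b u p q r g)
    {u' p' q' r' : ℝ → ℝ} (h' : KSp L u' p' q' r') {n ℓ : ℝ} (hℓ : 0 < ℓ) (hbl : b - a ≤ ℓ)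
    (hn : ∀ x ∈ Icc 0 L, |p' x + r' x| ≤ n) :
    ∫ x in (0:ℝ)..L, (u b x - u' x) ^ 2 ≤
      2 * (∫ x in (0:ℝ)..L, (u a x - u' x) ^ 2) + 4 * ℓ ^ 2 * n ^ 2 * L := by
  have cu := h.cu; have cp := h.cp; have cq := h.cq; have cr := h.cr; have cg := h.cg
  have cu' := h'.cu; have cp' := h'.cp; have cr' := h'.cr
  obtain ⟨m, hm, hmax⟩ := (isCompact_Icc (a := a) (b := b)).exists_isMaxOn
    (nonempty_Icc.2 hab)
    (f := fun t => (∫ x in (0:ℝ)..L, (u t x - u' x) ^ 2)) (Continuous.continuousOn (by fun_prop))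
  refine (hmax (right_mem_Icc.2 hab)).trans ?_
  beta_reduce
  set S := ∫ x in (0:ℝ)..L, (u m x - u' x) ^ 2 with hS
  have hS0 : 0 ≤ S := kdv_nonneg hL.le fun x => sq_nonneg _
  have k := kdv_time (F := fun t x => (u t x - u' x) ^ 2) (G := fun t x => 2 * ((u t x - u' x) * g t x))
    (by fun_prop) (by fun_prop)
    (fun t x => (((h.dt t x).sub_const (u' x)).pow 2).congr_deriv (by push_cast; ring)) hL.le hm.1
  have k2 : ∫ τ in a..m, ∫ x in (0:ℝ)..L, 2 * ((u τ x - u' x) * g τ x) ≤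
      ∫ τ in a..m, ((2 * ℓ)⁻¹ * S + 2 * ℓ * (n ^ 2 * L)) := by
    refine kdv_mono hm.1 (by fun_prop) (by fun_prop) fun τ hτ => ?_
    have hτ' : τ ∈ Icc a b := ⟨hτ.1, hτ.2.trans hm.2⟩
    have e1 := ((h.sp τ hτ').sub h').e1 hL.le
    have e2 : ∫ x in (0:ℝ)..L, 2 * ((u τ x - u' x) * g τ x) =
        (-2) * (∫ x in (0:ℝ)..L, (u τ x - u' x) * ((p τ x - p' x) + (r τ x - r' x))) +
        1 * ∫ x in (0:ℝ)..L, (2 * (-(u τ x - u' x)) * (p' x + r' x)) := by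
      rw [← kdv_lin (by fun_prop) (by fun_prop)]
      refine intervalIntegral.integral_congr fun x hx => ?_
      rw [uIcc_of_le hL.le] at hx
      simp only [h.eq τ hτ' x hx]; ring
    have e3 : ∫ x in (0:ℝ)..L, (2 * (-(u τ x - u' x)) * (p' x + r' x)) ≤
        (2 * ℓ)⁻¹ * (∫ x in (0:ℝ)..L, (u τ x - u' x) ^ 2) + 2 * ℓ * ∫ x in (0:ℝ)..L, n ^ 2 := by
      apply kdv_le2 hL.le (by fun_prop) (by fun_prop) (by fun_prop)
      intro x hx
      refine (kdv_young _ _ (2 * ℓ) (by positivity)).trans ?_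
      have : (p' x + r' x) ^ 2 ≤ n ^ 2 := sq_le_sq' (abs_le.1 (hn x hx)).1 (abs_le.1 (hn x hx)).2
      rw [neg_sq]
      gcongr
    have e4 : ∫ x in (0:ℝ)..L, n ^ 2 = n ^ 2 * L := by simp; ring
    have e5 : (2 * ℓ)⁻¹ * (∫ x in (0:ℝ)..L, (u τ x - u' x) ^ 2) ≤ (2 * ℓ)⁻¹ * S := by
      gcongr; exact hmax hτ'
    rw [e4] at e3
    linarith
  rw [intervalIntegral.integral_const, smul_eq_mul] at k2
  have k3 : (m - a) * ((2 * ℓ)⁻¹ * S + 2 * ℓ * (n ^ 2 * L)) ≤ ℓ * ((2 * ℓ)⁻¹ * S + 2 * ℓ * (n ^ 2 * L)) := by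
    apply mul_le_mul_of_nonneg_right (by linarith [hm.2]); positivity
  have k4 : ℓ * ((2 * ℓ)⁻¹ * S + 2 * ℓ * (n ^ 2 * L)) = S / 2 + 2 * ℓ ^ 2 * n ^ 2 * L := by field_simp
  linarith

theorem KMild.gap {L a b : ℝ} (hL : 0 < L) (hab : a < b) {z : ℝ → ℝ → ℝ}
    (h : KMild L a b z) {p' q' r' : ℝ → ℝ} (h' : KSp L (z a) p' q' r') {n : ℝ}
    (hn : ∀ x ∈ Icc 0 L, |p' x + r' x| ≤ n) :
    ∫ x in (0:ℝ)..L, (z b x - z a x) ^ 2 ≤ 4 * (b - a) ^ 2 * n ^ 2 * L := by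
  have cz := h.cz
  have := kdv_lim (F := fun h => ∫ x in (0:ℝ)..L, (kavg h z (b - h) x - z a x) ^ 2)
    (G := fun h => 2 * (∫ x in (0:ℝ)..L, (kavg h z a x - z a x) ^ 2) + 4 * (b - a) ^ 2 * n ^ 2 * L)
    (δ := b - a)
    (Continuous.continuousAt (by unfold kavg; fun_prop))
    (Continuous.continuousAt (by unfold kavg; fun_prop)) (by linarith) (by
      intro η hη
      obtain ⟨p, q, r, N⟩ := h.nice hL hη.1
      exact N.gap hL (by linarith [hη.2]) h' (by linarith) (by linarith [hη.1]) hn)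
  simpa [kavg_zero] using this

theorem KNice.diff {L a b h : ℝ} (hh : 0 < h) {u p q r g : ℝ → ℝ → ℝ} (H : KNice L a b u p q r g) :
    KNice L a (b - h) (fun t x => h⁻¹ * (u (t + h) x - u t x)) (fun t x => h⁻¹ * (p (t + h) x - p t x))
      (fun t x => h⁻¹ * (q (t + h) x - q t x)) (fun t x => h⁻¹ * (r (t + h) x - r t x))
      (fun t x => h⁻¹ * (g (t + h) x - g t x)) := by
  have cu := H.cu; have cp := H.cp; have cq := H.cq; have cr := H.cr; have cg := H.cg
  refine ⟨by fun_prop, by fun_prop, by fun_prop, by fun_prop, by fun_prop, ?_, ?_, ?_⟩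
  · intro t ht
    exact ((H.sp (t + h) ⟨by linarith [ht.1], by linarith [ht.2]⟩).sub
      (H.sp t ⟨ht.1, by linarith [ht.2]⟩)).smul _
  · intro t x
    exact (((H.dt (t + h) x).comp_add_const t h).sub (H.dt t x)).const_mul _
  · intro t ht x hx
    rw [H.eq (t + h) ⟨by linarith [ht.1], by linarith [ht.2]⟩ x hx,
      H.eq t ⟨ht.1, by linarith [ht.2]⟩ x hx]
    ring

theorem KMild.final {L T : ℝ} (hL : 0 < L) (hT : 0 < T) : ∃ C : ℝ, 0 < C ∧
    ∀ z, KMild L 0 T z → ∀ t ∈ Ioc 0 T, ∀ p q r, KSp L (z t) p q r →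
      (∫ x in (0:ℝ)..L, p x ^ 2 ≤ C / t * ∫ x in (0:ℝ)..L, z 0 x ^ 2) ∧
      (∫ x in (0:ℝ)..L, z t x ^ 2 ≤ ∫ x in (0:ℝ)..L, z 0 x ^ 2) := by
  obtain ⟨C, hC, HC⟩ := KNice.smoothing hL hT
  refine ⟨C, hC, ?_⟩
  intro z hz t ht p q r sp
  have cz := hz.cz
  have cp := sp.cp
  have cq := sp.cq
  obtain ⟨ht0, htT⟩ := ht
  constructor
  · have key := kdv_lim
      (F := fun h => ∫ x in (0:ℝ)..L, -(kavg h (kavg h z) (t - h - h) x * q x))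
      (G := fun h => (1/2) * (C / (t - h - h) * ∫ x in (0:ℝ)..L, kavg h (kavg h z) 0 x ^ 2)
        + (1/2) * ∫ x in (0:ℝ)..L, p x ^ 2) (δ := t / 2)
      (Continuous.continuousAt (by unfold kavg; fun_prop))
      (by
        have c1 : ContinuousAt (fun h : ℝ => C / (t - h - h)) 0 := by
          refine ContinuousAt.div (by fun_prop) (by fun_prop) (by simpa using ht0.ne')
        have c2 : ContinuousAt (fun h => ∫ x in (0:ℝ)..L, kavg h (kavg h z) 0 x ^ 2) 0 :=
          (Continuous.continuousAt (by unfold kavg; fun_prop))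
        fun_prop) (by linarith) (by
        intro h hh
        have hA := hz.avg hL hh.1
        obtain ⟨p1, q1, r1, N1⟩ := hz.nice hL hh.1
        obtain ⟨p2, q2, r2, N2⟩ := hA.nice hL hh.1
        have N3 := N1.diff hh.1
        have B := HC (T - h - h) ⟨by linarith [hh.2], by linarith [hh.1]⟩ _ _ _ _ _ _ _ _ _ N2 N3
          (t - h - h) ⟨by linarith [hh.2], by linarith⟩
        have s2 := N2.sp (t - h - h) ⟨by linarith [hh.2], by linarith⟩
        have c2 := s2.cp
        have c3 := s2.cu
        have e := sp.e4 hL.le s2.cu s2.cp s2.du s2.u0 s2.uL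
        have e2 : ∫ x in (0:ℝ)..L, -(kavg h (kavg h z) (t - h - h) x * q x) =
          (-1) * (∫ x in (0:ℝ)..L, (p2 (t - h - h) x * p x + kavg h (kavg h z) (t - h - h) x * q x))
          + 1 * ∫ x in (0:ℝ)..L, p2 (t - h - h) x * p x := by
          rw [← kdv_lin (by fun_prop) (by fun_prop)]
          refine intervalIntegral.integral_congr fun x hx => ?_
          ring
        have e3 : ∫ x in (0:ℝ)..L, p2 (t - h - h) x * p x ≤
            (1/2) * (∫ x in (0:ℝ)..L, p2 (t - h - h) x ^ 2) + (1/2) * ∫ x in (0:ℝ)..L, p x ^ 2 := by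
          apply kdv_le2 hL.le (by fun_prop) (by fun_prop) (by fun_prop)
          intro x hx
          nlinarith [sq_nonneg (p2 (t - h - h) x - p x)]
        rw [e] at e2
        rw [e2]
        linarith)
    simp only [kavg_zero, sub_zero] at key
    have e := sp.e4 hL.le sp.cu sp.cp sp.du sp.u0 sp.uL
    have cu := sp.cu
    have e2 : ∫ x in (0:ℝ)..L, -(z t x * q x) =
      (-1) * (∫ x in (0:ℝ)..L, (p x * p x + z t x * q x)) + 1 * ∫ x in (0:ℝ)..L, p x ^ 2 := by
      rw [← kdv_lin (by fun_prop) (by fun_prop)]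
      refine intervalIntegral.integral_congr fun x hx => ?_
      ring
    rw [e] at e2
    linarith
  · have key := kdv_lim
      (F := fun h => ∫ x in (0:ℝ)..L, kavg h z (t - h) x ^ 2)
      (G := fun h => ∫ x in (0:ℝ)..L, kavg h z 0 x ^ 2) (δ := t / 2)
      (Continuous.continuousAt (by unfold kavg; fun_prop))
      (Continuous.continuousAt (by unfold kavg; fun_prop)) (by linarith) (by
        intro h hh
        obtain ⟨p1, q1, r1, N1⟩ := hz.nice hL hh.1
        exact N1.energy hL.le le_rfl (by linarith [hh.2]) (by linarith))
    simpa only [kavg_zero, sub_zero] using key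


def kgaps (K : Set ℝ) : Set (ℝ × ℝ) :=
  {i | i.1 ∈ K ∧ i.2 ∈ K ∧ i.1 < i.2 ∧ ∀ u ∈ Ioo i.1 i.2, u ∉ K}

theorem kgaps_disj {K : Set ℝ} {i j : ℝ × ℝ} (hi : i ∈ kgaps K) (hj : j ∈ kgaps K) {u : ℝ}
    (h1 : u ∈ Ioo i.1 i.2) (h2 : u ∈ Ioo j.1 j.2) : i = j := by
  obtain ⟨a1, a2, a3, a4⟩ := hi
  obtain ⟨b1, b2, b3, b4⟩ := hj
  have e1 : j.1 ≤ i.1 := by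
    by_contra h
    exact a4 j.1 ⟨by linarith, by linarith [h1.2, h2.1]⟩ b1
  have e2 : i.1 ≤ j.1 := by
    by_contra h
    exact b4 i.1 ⟨by linarith, by linarith [h2.2, h1.1]⟩ a1
  have e3 : j.2 ≤ i.2 := by
    by_contra h
    exact b4 i.2 ⟨by linarith [h1.2, h2.1], by linarith⟩ a2
  have e4 : i.2 ≤ j.2 := by
    by_contra h
    exact a4 j.2 ⟨by linarith [h2.2, h1.1], by linarith⟩ b2
  exact Prod.ext (le_antisymm e2 e1) (le_antisymm e4 e3)

theorem kgaps_countable (K : Set ℝ) : (kgaps K).Countable := by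
  refine Set.PairwiseDisjoint.countable_of_isOpen (s := fun i : ℝ × ℝ => Ioo i.1 i.2) ?_
    (fun i _ => isOpen_Ioo) (fun i hi => nonempty_Ioo.2 hi.2.2.1)
  intro i hi j hj hij
  refine Set.disjoint_left.2 fun u hu hu' => hij (kgaps_disj hi hj hu hu')

theorem kgaps_union {K : Set ℝ} (hK : IsClosed K) {s t : ℝ} (hs : s ∈ K) (ht : t ∈ K)
    (hKs : K ⊆ Icc s t) : (⋃ i : kgaps K, Ioo i.1.1 i.1.2) = Icc s t \ K := by
  ext u
  simp only [mem_iUnion, mem_sdiff]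
  constructor
  · rintro ⟨i, hi⟩
    have h1 := hKs i.2.1
    have h2 := hKs i.2.2.1
    exact ⟨⟨by linarith [hi.1, h1.1], by linarith [hi.2, h2.2]⟩, i.2.2.2.2 u hi⟩
  · rintro ⟨hu, huK⟩
    have A : sSup (K ∩ Iic u) ∈ K ∩ Iic u :=
      (hK.inter isClosed_Iic).csSup_mem ⟨s, hs, hu.1⟩ ⟨u, fun v hv => hv.2⟩
    have B : sInf (K ∩ Ici u) ∈ K ∩ Ici u :=
      (hK.inter isClosed_Ici).csInf_mem ⟨t, ht, hu.2⟩ ⟨u, fun v hv => hv.2⟩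
    have A' : sSup (K ∩ Iic u) < u := lt_of_le_of_ne A.2 fun h => huK (h ▸ A.1)
    have B' : u < sInf (K ∩ Ici u) := lt_of_le_of_ne B.2 fun h => huK (h ▸ B.1)
    refine ⟨⟨(sSup (K ∩ Iic u), sInf (K ∩ Ici u)), A.1, B.1, A'.trans B', ?_⟩, A', B'⟩
    intro v hv hvK
    rcases le_total v u with h | h
    · exact absurd (le_csSup (s := K ∩ Iic u) ⟨u, fun v hv => hv.2⟩ ⟨hvK, h⟩) (not_le.2 hv.1)
    · exact absurd (csInf_le (s := K ∩ Ici u) ⟨u, fun v hv => hv.2⟩ ⟨hvK, h⟩) (not_le.2 hv.2)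

theorem kgaps_hasSum {K : Set ℝ} (hK : IsClosed K) {s t : ℝ} (hs : s ∈ K) (ht : t ∈ K)
    (hKs : K ⊆ Icc s t) {f : ℝ → ℝ} (hf : IntegrableOn f (Icc s t)) :
    HasSum (fun i : kgaps K => ∫ x in i.1.1..i.1.2, f x)
      ((∫ x in s..t, f x) - ∫ x in K, f x) := by
  have : Countable (kgaps K) := (kgaps_countable K).to_subtype
  have hu := kgaps_union hK hs ht hKs
  have := hasSum_integral_iUnion (μ := volume) (f := f) (s := fun i : kgaps K => Ioo i.1.1 i.1.2)
    (fun i => measurableSet_Ioo)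
    (fun i j hij => Set.disjoint_left.2 fun u h h' => hij (Subtype.ext (kgaps_disj i.2 j.2 h h')))
    (by rw [hu]; exact hf.mono_set sdiff_subset)
  rw [hu, setIntegral_sdiff hK.measurableSet hf hKs] at this
  rw [intervalIntegral.integral_of_le (hKs hs).2, ← integral_Icc_eq_integral_Ioc]
  have e : (fun i : kgaps K => ∫ x in i.1.1..i.1.2, f x) =
      fun i : kgaps K => ∫ x in Ioo i.1.1 i.1.2, f x := by
    funext i
    rw [intervalIntegral.integral_of_le i.2.2.2.1.le, integral_Ioc_eq_integral_Ioo]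
  rw [e]
  exact this

structure KSol (L T : ℝ) (z p q r g : ℝ → ℝ → ℝ) : Prop where
  cz : Continuous (Function.uncurry z)
  sp : ∀ t ∈ Icc 0 T, KSp L (z t) (p t) (q t) (r t)
  dz : ∀ y ∈ Ioo 0 L, ∀ t ∈ Ioo 0 T, HasDerivAt (fun s => z s y) (g t y) t
  cg : ∀ y ∈ Ioo 0 L, ContinuousOn (fun t => g t y) (Ioo 0 T)
  eq : ∀ t ∈ Ioo 0 T, ∀ y ∈ Ioo 0 L, g t y = -(p t y + r t y)
  mg : Measurable (Function.uncurry g)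

theorem KSol.green {L T : ℝ} (hL : 0 < L) {z p q r g : ℝ → ℝ → ℝ} (S : KSol L T z p q r g)
    {t : ℝ} (ht : t ∈ Ioo 0 T) {x : ℝ} (hx : x ∈ Icc 0 L) :
    ∫ y in Ioo 0 L, kker L x y * g t y = z t x + ∫ y in (0:ℝ)..L, kker' L x y * z t y := by
  have h := (S.sp t (Ioo_subset_Icc_self ht)).green hL hx
  rw [intervalIntegral.integral_of_le hL.le, integral_Ioc_eq_integral_Ioo] at h
  have : ∫ y in Ioo 0 L, kker L x y * g t y = ∫ y in Ioo 0 L, -(kker L x y * (p t y + r t y)) := by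
    refine setIntegral_congr_fun measurableSet_Ioo fun y hy => ?_
    simp only [S.eq t ht y hy]; ring
  rw [this, integral_neg, h]; ring

theorem KSol.gap1 {L T : ℝ} (hL : 0 < L) {z p q r g : ℝ → ℝ → ℝ} (S : KSol L T z p q r g)
    {a b n : ℝ} (hab : a < b) (ha : a ∈ Icc 0 T) (hm : KMild L a b z)
    (hn : ∀ x ∈ Icc 0 L, |p a x + r a x| ≤ n) :
    ∫ y in Ioo 0 L, |z b y - z a y| ≤ (2 * n ^ 2 * L + L) * (b - a) := by
  have cz := S.cz
  have h := hm.gap hL hab (S.sp a ha) hn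
  have hd : 0 < b - a := by linarith
  have h2 : ∫ y in (0:ℝ)..L, |z b y - z a y| ≤
      ∫ y in (0:ℝ)..L, ((2 * (b - a))⁻¹ * (z b y - z a y) ^ 2 + ((b - a) / 2) * 1) := by
    refine kdv_mono hL.le (by fun_prop) (by fun_prop) fun y _ => ?_
    have e : (2 * (b - a))⁻¹ * (z b y - z a y) ^ 2 + ((b - a) / 2) * 1 - |z b y - z a y| =
      (2 * (b - a))⁻¹ * (|z b y - z a y| - (b - a)) ^ 2 := by
      rw [← sq_abs (z b y - z a y)]; field_simp; ring
    have : 0 ≤ (2 * (b - a))⁻¹ * (|z b y - z a y| - (b - a)) ^ 2 := by positivity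
    linarith
  rw [kdv_lin (by fun_prop) (by fun_prop)] at h2
  rw [intervalIntegral.integral_of_le hL.le, integral_Ioc_eq_integral_Ioo] at h2
  refine h2.trans ?_
  have h3 : (2 * (b - a))⁻¹ * (∫ x in (0:ℝ)..L, (z b x - z a x) ^ 2) ≤
      (2 * (b - a))⁻¹ * (4 * (b - a) ^ 2 * n ^ 2 * L) := by gcongr
  have h4 : (2 * (b - a))⁻¹ * (4 * (b - a) ^ 2 * n ^ 2 * L) = 2 * n ^ 2 * L * (b - a) := by
    field_simp; ring
  have h5 : ∫ x in (0:ℝ)..L, (1:ℝ) = L := by simp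
  rw [h5]
  nlinarith

theorem KSol.cross {L T : ℝ} (hL : 0 < L) {z p q r g : ℝ → ℝ → ℝ} (S : KSol L T z p q r g)
    {K : Set ℝ} (hK : IsClosed K) {s t : ℝ} (hs : s ∈ K) (ht : t ∈ K)
    (hKs : K ⊆ Icc s t) (hs0 : 0 < s) (htT : t < T) {n : ℝ}
    (hn : ∀ τ ∈ K, ∀ x ∈ Icc 0 L, |p τ x + r τ x| ≤ n)
    (hm : ∀ i ∈ kgaps K, KMild L i.1 i.2 z) {x : ℝ} (hx : x ∈ Icc 0 L) :
    ∫ y in (0:ℝ)..L, kker L x y * (z t y - z s y) =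
      ∫ τ in s..t, (z τ x + ∫ y in (0:ℝ)..L, kker' L x y * z τ y) := by
  have : Countable (kgaps K) := (kgaps_countable K).to_subtype
  have cz := S.cz
  have ck := kker_cont L x
  have ck' := kker'_cont L x
  have hst := (hKs hs).2
  have hI : Icc s t ⊆ Ioo 0 T := fun u hu => ⟨by linarith [hu.1], by linarith [hu.2]⟩
  obtain ⟨M, hM⟩ : ∃ M, ∀ y ∈ Icc 0 L, |kker L x y| ≤ M :=
    isCompact_Icc.exists_bound_of_continuousOn ck.continuousOn
  have hM0 : 0 ≤ M := (abs_nonneg _).trans (hM x hx)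
  have hn0 : 0 ≤ n := (abs_nonneg _).trans (hn s hs x hx)
  set H : ℝ → ℝ := fun τ => z τ x + ∫ y in (0:ℝ)..L, kker' L x y * z τ y with hH
  have cH : Continuous H := by rw [hH]; fun_prop
  have A : HasSum (fun i : kgaps K => ∫ τ in i.1.1..i.1.2, H τ)
      ((∫ τ in s..t, H τ) - ∫ τ in K, H τ) :=
    kgaps_hasSum hK hs ht hKs cH.continuousOn.integrableOn_Icc
  have B : ∀ y ∈ Ioo 0 L, HasSum (fun i : kgaps K => z i.1.2 y - z i.1.1 y)
      (z t y - z s y - ∫ τ in K, g τ y) := by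
    intro y hy
    have cg := (S.cg y hy).mono hI
    have := kgaps_hasSum hK hs ht hKs (f := fun τ => g τ y) cg.integrableOn_Icc
    have F : ∀ a b, a ≤ b → s ≤ a → b ≤ t → ∫ τ in a..b, g τ y = z b y - z a y := by
      intro a b hab ha hb
      have hsub : Icc a b ⊆ Icc s t := Icc_subset_Icc ha hb
      refine intervalIntegral.integral_eq_sub_of_hasDerivAt (f := fun τ => z τ y) ?_ ?_
      · intro τ hτ
        rw [uIcc_of_le hab] at hτ
        exact S.dz y hy τ (hI (hsub hτ))
      · refine ContinuousOn.intervalIntegrable ?_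
        rw [uIcc_of_le hab]
        exact cg.mono hsub
    rw [F s t hst le_rfl le_rfl] at this
    convert this using 2 with i
    rw [F _ _ i.2.2.2.1.le (hKs i.2.1).1 (hKs i.2.2.1).2]
  have C0 : Summable (fun i : kgaps K => i.1.2 - i.1.1) := by
    have := (kgaps_hasSum hK hs ht hKs (f := fun _ => (1:ℝ)) continuousOn_const.integrableOn_Icc).summable
    simpa using this
  have C : HasSum (fun i : kgaps K => ∫ y in Ioo 0 L, kker L x y * (z i.1.2 y - z i.1.1 y))
      (∫ y in Ioo 0 L, ∑' i : kgaps K, kker L x y * (z i.1.2 y - z i.1.1 y)) := by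
    refine hasSum_integral_of_summable_integral_norm (fun i => ?_) ?_
    · exact (Continuous.integrableOn_Icc (by fun_prop)).mono_set Ioo_subset_Icc_self
    · refine Summable.of_nonneg_of_le (fun i => by positivity) (fun i => ?_)
        (C0.mul_left (M * (2 * n ^ 2 * L + L)))
      have g1 := S.gap1 hL i.2.2.2.1 (Ioo_subset_Icc_self (hI (hKs i.2.1))) (hm _ i.2) (hn _ i.2.1)
      calc ∫ y in Ioo 0 L, ‖kker L x y * (z i.1.2 y - z i.1.1 y)‖
          ≤ ∫ y in Ioo 0 L, M * |z i.1.2 y - z i.1.1 y| := by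
            refine setIntegral_mono_on ?_ ?_ measurableSet_Ioo fun y hy => ?_
            · exact (Continuous.integrableOn_Icc (by fun_prop)).mono_set Ioo_subset_Icc_self
            · exact (Continuous.integrableOn_Icc (by fun_prop)).mono_set Ioo_subset_Icc_self
            · rw [norm_mul, norm_eq_abs, norm_eq_abs]
              gcongr
              exact hM y (Ioo_subset_Icc_self hy)
        _ ≤ _ := by
            rw [integral_const_mul, mul_assoc]
            gcongr
  have gI : IntegrableOn (fun P : ℝ × ℝ => kker L x P.1 * g P.2 P.1) (Ioo 0 L ×ˢ K) := by
    have fin : volume (Ioo 0 L ×ˢ K) ≠ ⊤ := by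
      rw [Measure.volume_eq_prod, Measure.prod_prod]
      refine ENNReal.mul_ne_top (by simp) ?_
      exact ((measure_mono hKs).trans_lt (by simp)).ne
    refine Measure.integrableOn_of_bounded (M := M * n) fin ?_ ?_
    · have : Measurable fun P : ℝ × ℝ => g P.2 P.1 := S.mg.comp measurable_swap
      have hk : Measurable fun P : ℝ × ℝ => kker L x P.1 := ck.measurable.comp measurable_fst
      have : Measurable fun P : ℝ × ℝ => kker L x P.1 * g P.2 P.1 := hk.mul this
      exact this.aestronglyMeasurable
    · refine (ae_restrict_mem (measurableSet_Ioo.prod hK.measurableSet)).mono ?_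
      rintro ⟨y, τ⟩ ⟨hy, hτ⟩
      simp only at hy hτ ⊢
      rw [norm_mul, norm_eq_abs, norm_eq_abs, S.eq τ (hI (hKs hτ)) y hy, abs_neg]
      exact mul_le_mul (hM y (Ioo_subset_Icc_self hy)) (hn τ hτ y (Ioo_subset_Icc_self hy))
        (abs_nonneg _) hM0
  have gI' : Integrable (fun P : ℝ × ℝ => kker L x P.1 * g P.2 P.1)
      ((volume.restrict (Ioo 0 L)).prod (volume.restrict K)) := by
    rw [Measure.prod_restrict]; exact gI
  have Fub : ∫ y in Ioo 0 L, kker L x y * ∫ τ in K, g τ y = ∫ τ in K, H τ := by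
    have := integral_integral_swap (f := fun y τ => kker L x y * g τ y) gI'
    simp only [integral_const_mul] at this
    rw [this]
    refine setIntegral_congr_fun hK.measurableSet fun τ hτ => ?_
    exact S.green hL (hI (hKs hτ)) hx
  have D : ∫ y in Ioo 0 L, ∑' i : kgaps K, kker L x y * (z i.1.2 y - z i.1.1 y) =
      (∫ y in Ioo 0 L, kker L x y * (z t y - z s y)) - ∫ τ in K, H τ := by
    rw [← Fub, ← integral_sub]
    · refine setIntegral_congr_fun measurableSet_Ioo fun y hy => ?_
      rw [((B y hy).mul_left (kker L x y)).tsum_eq]; ring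
    · exact (Continuous.integrableOn_Icc (by fun_prop)).mono_set Ioo_subset_Icc_self
    · have := gI'.integral_prod_left
      simpa only [integral_const_mul] using this
  have E : ∀ i : kgaps K, ∫ y in Ioo 0 L, kker L x y * (z i.1.2 y - z i.1.1 y) =
      ∫ τ in i.1.1..i.1.2, H τ := by
    intro i
    rw [← (hm _ i.2).mild _ _ le_rfl i.2.2.2.1.le le_rfl x hx,
      intervalIntegral.integral_of_le hL.le, integral_Ioc_eq_integral_Ioo]
  rw [D] at C
  simp only [E] at C
  have := C.unique A
  rw [intervalIntegral.integral_of_le hL.le, integral_Ioc_eq_integral_Ioo]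
  linarith


noncomputable def kG (L : ℝ) (z : ℝ → ℝ → ℝ) (x t : ℝ) : ℝ :=
  (∫ y in (0:ℝ)..L, kker L x y * z t y) -
    ∫ τ in (0:ℝ)..t, (z τ x + ∫ y in (0:ℝ)..L, kker' L x y * z τ y)

theorem kG_cont {L : ℝ} {z : ℝ → ℝ → ℝ} (cz : Continuous (Function.uncurry z)) (x : ℝ) :
    Continuous (kG L z x) := by
  have ck := kker_cont L x
  have ck' := kker'_cont L x
  have cH : Continuous fun τ => z τ x + ∫ y in (0:ℝ)..L, kker' L x y * z τ y := by fun_prop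
  have c2 := intervalIntegral.continuous_primitive (μ := volume)
    (fun a b => cH.intervalIntegrable a b) 0
  unfold kG
  have c1 : Continuous fun t => ∫ y in (0:ℝ)..L, kker L x y * z t y := by fun_prop
  exact c1.sub c2

theorem kG_sub {L : ℝ} {z : ℝ → ℝ → ℝ} (cz : Continuous (Function.uncurry z)) (x s t : ℝ) :
    kG L z x t - kG L z x s = (∫ y in (0:ℝ)..L, kker L x y * (z t y - z s y)) -
      ∫ τ in s..t, (z τ x + ∫ y in (0:ℝ)..L, kker' L x y * z τ y) := by
  have ck := kker_cont L x
  have ck' := kker'_cont L x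
  have cH : Continuous fun τ => z τ x + ∫ y in (0:ℝ)..L, kker' L x y * z τ y := by fun_prop
  unfold kG
  rw [← intervalIntegral.integral_interval_sub_left (cH.intervalIntegrable 0 t)
    (cH.intervalIntegrable 0 s)]
  simp only [mul_sub]
  rw [intervalIntegral.integral_sub (Continuous.intervalIntegrable (by fun_prop) _ _)
    (Continuous.intervalIntegrable (by fun_prop) _ _)]
  ring

def kU (L : ℝ) (z : ℝ → ℝ → ℝ) : Set ℝ :=
  {t | ∃ ε > 0, ∀ x ∈ Icc 0 L, ∀ s, |s - t| < ε → kG L z x s = kG L z x t}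

theorem kU_open (L : ℝ) (z : ℝ → ℝ → ℝ) : IsOpen (kU L z) := by
  rw [Metric.isOpen_iff]
  rintro t ⟨ε, hε, h⟩
  refine ⟨ε, hε, fun u hu => ?_⟩
  rw [Metric.mem_ball, dist_eq] at hu
  refine ⟨ε - |u - t|, by linarith, fun x hx s hs => ?_⟩
  rw [h x hx u hu]
  apply h x hx s
  have := abs_sub_le s u t
  linarith

theorem kU_const {L : ℝ} {z : ℝ → ℝ → ℝ} (cz : Continuous (Function.uncurry z)) {a b : ℝ}
    (hU : Ioo a b ⊆ kU L z) {s t : ℝ} (hs : a ≤ s) (hst : s ≤ t) (ht : t ≤ b) {x : ℝ}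
    (hx : x ∈ Icc 0 L) : kG L z x t = kG L z x s := by
  rcases hst.eq_or_lt with rfl | hst
  · rfl
  obtain ⟨c, -, hc⟩ := exists_hasDerivAt_eq_slope (kG L z x) (fun _ => 0) hst
    (kG_cont cz x).continuousOn (fun u hu => by
      obtain ⟨ε, hε, h⟩ := hU (show u ∈ Ioo a b from ⟨by linarith [hu.1], by linarith [hu.2]⟩)
      refine (hasDerivAt_const u (kG L z x u)).congr_of_eventuallyEq ?_
      filter_upwards [Metric.ball_mem_nhds u hε] with v hv
      rw [Metric.mem_ball, dist_eq] at hv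
      exact h x hx v hv)
  have : t - s ≠ 0 := by linarith
  rw [eq_comm, div_eq_zero_iff] at hc
  rcases hc with hc | hc
  · linarith
  · exact absurd hc this

theorem KSol.mild {L T : ℝ} {z p q r g : ℝ → ℝ → ℝ} (S : KSol L T z p q r g)
    {a b : ℝ} (ha : 0 ≤ a) (hb : b ≤ T) (hU : Ioo a b ⊆ kU L z) : KMild L a b z where
  cz := S.cz
  z0 := fun t ht => (S.sp t ⟨by linarith [ht.1], by linarith [ht.2]⟩).u0
  zL := fun t ht => (S.sp t ⟨by linarith [ht.1], by linarith [ht.2]⟩).uL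
  mild := by
    intro s t hs hst ht x hx
    have h1 := kG_sub (L := L) S.cz x s t
    rw [kU_const S.cz hU hs hst ht hx, sub_self] at h1
    linarith

theorem KSol.bdd {L T : ℝ} (hL : 0 < L) {z p q r g : ℝ → ℝ → ℝ} (S : KSol L T z p q r g)
    {t n : ℝ} (ht : t ∈ Ioo 0 T) (hn : ∀ y ∈ Ioo 0 L, |g t y| ≤ n) :
    ∀ y ∈ Icc 0 L, |p t y + r t y| ≤ n := by
  have sp := S.sp t (Ioo_subset_Icc_self ht)
  have cp := sp.cp
  have cr := sp.cr
  intro y hy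
  rw [← closure_Ioo hL.ne] at hy
  have hcl : IsClosed {y | |p t y + r t y| ≤ n} := isClosed_le (by fun_prop) (by fun_prop)
  have : Ioo 0 L ⊆ {y | |p t y + r t y| ≤ n} := by
    intro v hv
    have := hn v hv
    rw [S.eq t ht v hv, abs_neg] at this
    exact this
  exact closure_minimal this hcl hy

theorem KSol.loc {L T : ℝ} (hL : 0 < L) {z p q r g : ℝ → ℝ → ℝ} (S : KSol L T z p q r g)
    {A B n : ℝ} (hA : 0 ≤ A) (hB : B ≤ T)
    (hn : ∀ t ∈ Ioo A B, t ∉ kU L z → ∀ y ∈ Ioo 0 L, |g t y| ≤ n) {s t : ℝ} (hs : A < s)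
    (hst : s ≤ t) (ht : t < B) {x : ℝ} (hx : x ∈ Icc 0 L) : kG L z x t = kG L z x s := by
  set K := (kU L z)ᶜ ∩ Icc s t with hKdef
  have hK : IsClosed K := (kU_open L z).isClosed_compl.inter isClosed_Icc
  rcases K.eq_empty_or_nonempty with hE | hne
  · refine kU_const S.cz (a := s) (b := t) ?_ le_rfl hst le_rfl hx
    intro u hu
    by_contra h
    have : u ∈ K := ⟨h, Ioo_subset_Icc_self hu⟩
    rw [hE] at this
    exact this
  have bb : BddBelow K := ⟨s, fun v hv => hv.2.1⟩
  have ba : BddAbove K := ⟨t, fun v hv => hv.2.2⟩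
  have ha := hK.csInf_mem hne bb
  have hb := hK.csSup_mem hne ba
  set a := sInf K
  set b := sSup K
  have hsub : K ⊆ Icc a b := fun v hv => ⟨csInf_le bb hv, le_csSup ba hv⟩
  have e1 : kG L z x a = kG L z x s := by
    refine kU_const S.cz (a := s) (b := a) ?_ le_rfl ha.2.1 le_rfl hx
    intro u hu
    by_contra h
    have : u ∈ K := ⟨h, hu.1.le, by linarith [hu.2, ha.2.2]⟩
    linarith [hu.2, (hsub this).1]
  have e2 : kG L z x t = kG L z x b := by
    refine kU_const S.cz (a := b) (b := t) ?_ le_rfl hb.2.2 le_rfl hx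
    intro u hu
    by_contra h
    have : u ∈ K := ⟨h, by linarith [hu.1, hb.2.1], hu.2.le⟩
    linarith [hu.1, (hsub this).2]
  have e3 := S.cross hL hK ha hb hsub (by linarith [ha.2.1]) (by linarith [hb.2.2]) (n := n)
    (fun τ hτ => S.bdd hL ⟨by linarith [hτ.2.1], by linarith [hτ.2.2]⟩
      (hn τ ⟨by linarith [hτ.2.1], by linarith [hτ.2.2]⟩ hτ.1))
    (fun i hi => S.mild (by linarith [hi.1.2.1]) (by linarith [hi.2.1.2.2]) (by
      intro u hu
      by_contra h
      exact hi.2.2.2 u hu ⟨h, by linarith [hu.1, hi.1.2.1], by linarith [hu.2, hi.2.1.2.2]⟩)) hx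
  have e4 := kG_sub (L := L) S.cz x a b
  linarith

theorem KSol.kmild {L T : ℝ} (hL : 0 < L) {z p q r g : ℝ → ℝ → ℝ} (S : KSol L T z p q r g) :
    KMild L 0 T z := by
  refine S.mild le_rfl le_rfl ?_
  by_contra hne
  obtain ⟨u, hu, huU⟩ := Set.not_subset.1 hne
  set F := Ioo 0 T ∩ (kU L z)ᶜ with hF
  have hlc : IsLocallyClosed F := isOpen_Ioo.isLocallyClosed.inter
    (kU_open L z).isClosed_compl.isLocallyClosed
  have : LocallyCompactSpace F := hlc.locallyCompactSpace
  have : Nonempty F := ⟨⟨u, hu, huU⟩⟩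
  obtain ⟨n, ⟨t₀, ht₀⟩⟩ := nonempty_interior_of_iUnion_of_closed
    (f := fun n : ℕ => {t : F | ∀ y ∈ Ioo 0 L, |g t.1 y| ≤ n}) (by
      intro n
      have : {t : F | ∀ y ∈ Ioo 0 L, |g t.1 y| ≤ n} =
          ⋂ y, ⋂ (_ : y ∈ Ioo 0 L), {t : F | |g t.1 y| ≤ n} := by ext; simp
      rw [this]
      refine isClosed_iInter fun y => isClosed_iInter fun hy => ?_
      have c : Continuous fun t : F => g t.1 y :=
        (S.cg y hy).comp_continuous continuous_subtype_val fun t => t.2.1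
      exact isClosed_le c.abs continuous_const) (by
      refine eq_univ_of_forall fun t => ?_
      have sp := S.sp t.1 (Ioo_subset_Icc_self t.2.1)
      obtain ⟨M, hM⟩ := isCompact_Icc.exists_bound_of_continuousOn (s := Icc 0 L)
        (sp.cp.add sp.cr).continuousOn
      obtain ⟨n, hn⟩ := exists_nat_ge M
      refine mem_iUnion.2 ⟨n, fun y hy => ?_⟩
      rw [S.eq t.1 t.2.1 y hy, abs_neg]
      exact (hM y (Ioo_subset_Icc_self hy)).trans hn)
  rw [mem_interior] at ht₀
  obtain ⟨W, hW, hWo, htW⟩ := ht₀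
  obtain ⟨V, hV, rfl⟩ := isOpen_induced_iff.1 hWo
  obtain ⟨δ, hδ, hball⟩ := Metric.isOpen_iff.1 (hV.inter isOpen_Ioo) t₀.1 ⟨htW, t₀.2.1⟩
  rw [ball_eq_Ioo] at hball
  have hlt : t₀.1 - δ < t₀.1 + δ := by linarith
  have hcl : Icc (t₀.1 - δ) (t₀.1 + δ) ⊆ Icc 0 T := by
    rw [← closure_Ioo hlt.ne]
    exact closure_minimal (fun v hv => Ioo_subset_Icc_self (hball hv).2) isClosed_Icc
  have h0 := (hcl (left_mem_Icc.2 hlt.le)).1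
  have h1 := (hcl (right_mem_Icc.2 hlt.le)).2
  refine t₀.2.2 ⟨δ, hδ, fun x hx s hs => ?_⟩
  have hs' := abs_lt.1 hs
  have key : ∀ t ∈ Ioo (t₀.1 - δ) (t₀.1 + δ), t ∉ kU L z → ∀ y ∈ Ioo 0 L, |g t y| ≤ n := by
    intro t ht htU
    exact hW (show (⟨t, (hball ht).2, htU⟩ : F) ∈ _ from (hball ht).1)
  rcases le_total s t₀.1 with h | h
  · exact (S.loc hL h0 h1 key (by linarith) h (by linarith) hx).symm
  · exact S.loc hL h0 h1 key (by linarith) h (by linarith) hx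


noncomputable def kcl (L x : ℝ) : ℝ := max 0 (min L x)

theorem kcl_cont (L : ℝ) : Continuous (kcl L) := by unfold kcl; fun_prop

theorem kcl_mem {L : ℝ} (hL : 0 ≤ L) (x : ℝ) : kcl L x ∈ Icc 0 L :=
  ⟨le_max_left _ _, max_le hL (min_le_left _ _)⟩

theorem kcl_eq {L x : ℝ} (hx : x ∈ Icc 0 L) : kcl L x = x := by
  unfold kcl
  rw [min_eq_right hx.2, max_eq_right hx.1]

theorem kcl_ev {L x : ℝ} (hx : x ∈ Ioo 0 L) (f : ℝ → ℝ) :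
    (fun y => f (kcl L y)) =ᶠ[nhds x] f := by
  filter_upwards [Icc_mem_nhds hx.1 hx.2] with y hy
  rw [kcl_eq hy]

theorem kD_cont {L : ℝ} (hL : 0 < L) {f : ℝ → ℝ} (hf : ContDiffOn ℝ 3 f (Icc 0 L)) {k : ℕ}
    (hk : k ≤ 3) : Continuous fun x => iteratedDerivWithin k f (Icc 0 L) (kcl L x) :=
  (hf.continuousOn_iteratedDerivWithin (by exact_mod_cast hk)
    (uniqueDiffOn_Icc hL)).comp_continuous (kcl_cont L) (kcl_mem hL.le)

theorem kD_deriv {L : ℝ} (hL : 0 < L) {f : ℝ → ℝ} (hf : ContDiffOn ℝ 3 f (Icc 0 L)) {k : ℕ}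
    (hk : k < 3) {x : ℝ} (hx : x ∈ Ioo 0 L) :
    HasDerivAt (fun x => iteratedDerivWithin k f (Icc 0 L) (kcl L x))
      (iteratedDerivWithin (k + 1) f (Icc 0 L) (kcl L x)) x := by
  refine HasDerivAt.congr_of_eventuallyEq ?_ (kcl_ev hx _)
  rw [kcl_eq (Ioo_subset_Icc_self hx), iteratedDerivWithin_succ]
  have := hf.differentiableOn_iteratedDerivWithin (m := k) (by exact_mod_cast hk)
    (uniqueDiffOn_Icc hL) x (Ioo_subset_Icc_self hx)
  exact this.hasDerivWithinAt.hasDerivAt (Icc_mem_nhds hx.1 hx.2)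

theorem kD_one (L : ℝ) (f : ℝ → ℝ) (x : ℝ) :
    iteratedDerivWithin 1 f (Icc 0 L) x = derivWithin f (Icc 0 L) x := by
  rw [iteratedDerivWithin_one]

theorem kdv_sol {L T : ℝ} (hL : 0 < L) (hT : 0 < T) {z : ℝ → ℝ → ℝ} (hz : IsLinearKdVSol L T z) :
    KSol L T (fun t x => z (kcl T t) (kcl L x))
      (fun t x => iteratedDerivWithin 1 (z (kcl T t)) (Icc 0 L) (kcl L x))
      (fun t x => iteratedDerivWithin 2 (z (kcl T t)) (Icc 0 L) (kcl L x))
      (fun t x => iteratedDerivWithin 3 (z (kcl T t)) (Icc 0 L) (kcl L x))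
      (fun t x => deriv (fun s => z (kcl T s) (kcl L x)) t) := by
  obtain ⟨h1, h2, h3, h4, h5⟩ := hz
  have cz : Continuous (Function.uncurry fun t x => z (kcl T t) (kcl L x)) := by
    have := h3.comp_continuous (f := fun P : ℝ × ℝ => (kcl T P.1, kcl L P.2))
      (((kcl_cont T).comp continuous_fst).prodMk ((kcl_cont L).comp continuous_snd))
      (fun P => ⟨kcl_mem hT.le _, kcl_mem hL.le _⟩)
    exact this
  have hd : ∀ y ∈ Ioo 0 L, ∀ t ∈ Ioo 0 T, HasDerivAt (fun s => z (kcl T s) (kcl L y))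
      (derivWithin (fun s => z s y) (Icc 0 T) t) t := by
    intro y hy t ht
    rw [kcl_eq (Ioo_subset_Icc_self hy)]
    refine HasDerivAt.congr_of_eventuallyEq ?_ (kcl_ev ht (fun s => z s y))
    have := (h2 y (Ioo_subset_Icc_self hy)).differentiableOn (by norm_num) t (Ioo_subset_Icc_self ht)
    exact this.hasDerivWithinAt.hasDerivAt (Icc_mem_nhds ht.1 ht.2)
  refine ⟨cz, ?_, ?_, ?_, ?_, ?_⟩
  · intro t ht
    have hf := h1 _ (kcl_mem hT.le t)
    obtain ⟨b1, b2, b3⟩ := h5 _ (kcl_mem hT.le t)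
    have c0 : kcl L 0 = 0 := kcl_eq ⟨le_rfl, hL.le⟩
    have cL : kcl L L = L := kcl_eq ⟨hL.le, le_rfl⟩
    refine ⟨cz.comp (Continuous.prodMk continuous_const continuous_id), kD_cont hL hf (by norm_num), kD_cont hL hf (by norm_num),
      kD_cont hL hf (by norm_num), ?_, fun x hx => kD_deriv hL hf (by norm_num) hx,
      fun x hx => kD_deriv hL hf (by norm_num) hx, ?_, ?_, ?_⟩
    · intro x hx
      have := kD_deriv hL hf (k := 0) (by norm_num) hx
      simpa only [iteratedDerivWithin_zero] using this
    · rw [c0, b1]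
    · rw [cL, b2]
    · rw [cL, kD_one, b3]
  · intro y hy t ht
    rw [(hd y hy t ht).deriv]
    exact hd y hy t ht
  · intro y hy
    have := ((h2 y (Ioo_subset_Icc_self hy)).continuousOn_derivWithin (uniqueDiffOn_Icc hT)
      le_rfl).mono Ioo_subset_Icc_self
    exact this.congr fun t ht => (hd y hy t ht).deriv
  · intro t ht y hy
    rw [(hd y hy t ht).deriv, kcl_eq (Ioo_subset_Icc_self hy), kcl_eq (Ioo_subset_Icc_self ht),
      kD_one]
    linarith [h4 t ht y hy]
  · have c' : Continuous (Function.uncurry fun x t => z (kcl T t) (kcl L x)) :=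
      cz.comp continuous_swap
    exact (measurable_deriv_with_param c').comp measurable_swap

theorem linearKdV_smoothing_rate (L T : ℝ) (hL : 0 < L) (hT : 0 < T) :
    ∃ C > 0, ∀ z₀ : ℝ → ℝ, ContDiffOn ℝ 3 z₀ (Icc (0:ℝ) L) →
      z₀ 0 = 0 → z₀ L = 0 → derivWithin z₀ (Icc (0:ℝ) L) L = 0 →
      ∀ z : ℝ → ℝ → ℝ, IsLinearKdVSol L T z →
      (∀ x ∈ Icc (0:ℝ) L, z 0 x = z₀ x) →
      ∀ t ∈ Ioc (0:ℝ) T, H1norm L (z t) ≤ C / Real.sqrt t * L2norm L z₀ := by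
  obtain ⟨C, hC, HC⟩ := KMild.final hL hT
  refine ⟨Real.sqrt (T + C), by positivity, ?_⟩
  intro z₀ _ _ _ _ z hz hz0 t ht
  have S := kdv_sol hL hT hz
  have ht' : t ∈ Icc 0 T := ⟨ht.1.le, ht.2⟩
  have sp := S.sp t ht'
  obtain ⟨e1, e2⟩ := HC _ (S.kmild hL) t ht _ _ _ sp
  have cu : Continuous fun x => z (kcl T t) (kcl L x) := sp.cu
  have cp : Continuous fun x => iteratedDerivWithin 1 (z (kcl T t)) (Icc 0 L) (kcl L x) := sp.cp
  have i0 : ∫ x in (0:ℝ)..L, z (kcl T 0) (kcl L x) ^ 2 = ∫ x in (0:ℝ)..L, z₀ x ^ 2 := by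
    refine intervalIntegral.integral_congr fun x hx => ?_
    rw [uIcc_of_le hL.le] at hx
    simp only [kcl_eq hx, kcl_eq (left_mem_Icc.2 hT.le), hz0 x hx]
  have i1 : ∫ x in (0:ℝ)..L, ((z t x) ^ 2 + (derivWithin (z t) (Icc (0:ℝ) L) x) ^ 2) =
      (∫ x in (0:ℝ)..L, z (kcl T t) (kcl L x) ^ 2) +
      ∫ x in (0:ℝ)..L, (iteratedDerivWithin 1 (z (kcl T t)) (Icc 0 L) (kcl L x)) ^ 2 := by
    have cu2 : Continuous fun x => z (kcl T t) (kcl L x) ^ 2 := cu.pow 2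
    have cp2 : Continuous fun x =>
      (iteratedDerivWithin 1 (z (kcl T t)) (Icc 0 L) (kcl L x)) ^ 2 := cp.pow 2
    rw [← intervalIntegral.integral_add (cu2.intervalIntegrable _ _)
      (cp2.intervalIntegrable _ _)]
    refine intervalIntegral.integral_congr fun x hx => ?_
    rw [uIcc_of_le hL.le] at hx
    simp only [kcl_eq hx, kcl_eq ht', kD_one]
  unfold H1norm L2norm
  rw [i1, ← Real.sqrt_div (by positivity), ← Real.sqrt_mul (by have := ht.1; positivity)]
  apply Real.sqrt_le_sqrt
  rw [i0] at e1 e2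
  have n0 : 0 ≤ ∫ x in (0:ℝ)..L, z₀ x ^ 2 := kdv_nonneg hL.le fun x => by positivity
  have t1 : 1 ≤ T / t := (one_le_div ht.1).2 ht.2
  rw [add_div, add_mul]
  nlinarith
end
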